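/- Let n ≥ 4, let L be a Cartan type Lie superalgebra over ℂ (one of W(n), S(n), S̃(n) for n even, or H(n) for n > 4), and let f ∈ BDer(L) be a homogeneous super-biderivation. Then there exist linear maps φ_f and ψ_f from L into L' such that f(x,y) = [φ_f(x), y] = [x, ψ_f(y)] for all x, y ∈ L. Moreover: (1) if f ∈ BDer(L)_ε for a weight ε ∈ H_L^*, then φ_f and ψ_f have weight ε (i.e. φ_f(L_η) ⊆ L'_{ε+η} and ψ_f(L_η) ⊆ L'_{ε+η} for all weights η); (2) if f ∈ BDer(L)_i for i ∈ ℤ, then φ_f and ψ_f have ℤ-degree i (i.e. φ_f(L_j) ⊆ L'_{i+j} and ψ_f(L_j) ⊆ L'_{i+j} for all j). -/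

import Mathlib

open scoped BigOperators

noncomputable section

namespace CartanSuper

/-- Coordinates of the exterior algebra `Λ(n)` with respect to the monomial basis
`{x_S : S ⊆ {1,…,n}}`. -/
abbrev Lambda (n : ℕ) := Finset (Fin n) → ℂ

/-- Endomorphism algebra of `Λ(n)`. -/
abbrev E (n : ℕ) := Module.End ℂ (Lambda n)

variable (n : ℕ)

/-- `(−1)^k`. -/
def msign (k : ℕ) : ℂ := (-1 : ℂ) ^ k

/-- The basis monomial `x_S = x_{i₁}⋯x_{i_k}` (indices in increasing order). -/
def mono (S : Finset (Fin n)) : Lambda n := fun T => if T = S then 1 else 0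

/-- Number of inversions between `S` and `T`. -/
def inversions (S T : Finset (Fin n)) : ℕ := ((S ×ˢ T).filter fun p => p.2 < p.1).card

/-- The multiplication of `Λ(n)` in coordinates:
`x_S · x_T = (−1)^{inversions} x_{S ∪ T}` for disjoint `S, T` and `0` otherwise. -/
def lmulFun (f g : Lambda n) : Lambda n :=
  fun U => ∑ S ∈ U.powerset, msign (inversions n S (U \ S)) * f S * g (U \ S)

/-- Left multiplication by an element of `Λ(n)`, as a linear map `Λ(n) →ₗ End Λ(n)`. -/
def mulOp : Lambda n →ₗ[ℂ] E n where
  toFun f :=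
    { toFun := lmulFun n f
      map_add' := by
        intro g h; funext U
        simp [lmulFun, mul_add, Finset.sum_add_distrib]
      map_smul' := by
        intro c g; funext U
        simp only [lmulFun, Pi.smul_apply, smul_eq_mul, RingHom.id_apply, Finset.mul_sum]
        exact Finset.sum_congr rfl (by intros; ring) }
  map_add' := by
    intro f g; apply LinearMap.ext; intro h; funext U
    show lmulFun n (f + g) h U = lmulFun n f h U + lmulFun n g h U
    simp only [lmulFun]
    rw [← Finset.sum_add_distrib]
    exact Finset.sum_congr rfl (by intros; simp [Pi.add_apply]; ring)
  map_smul' := by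
    intro c f; apply LinearMap.ext; intro h; funext U
    show lmulFun n (c • f) h U = (c • lmulFun n f h) U
    simp only [lmulFun, Pi.smul_apply, smul_eq_mul, Finset.mul_sum]
    exact Finset.sum_congr rfl (by intros; ring)

/-- The superderivation `∂_i` of `Λ(n)`, in coordinates. -/
def pd (i : Fin n) : E n where
  toFun f := fun S =>
    if i ∈ S then 0 else msign (S.filter (· < i)).card * f (insert i S)
  map_add' := by
    intro f g; funext S; by_cases h : i ∈ S <;> simp [h, mul_add]
  map_smul' := by
    intro c f; funext S; by_cases h : i ∈ S <;> simp [h] <;> ring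

/-- The parity operator `σ` of `Λ(n)`: `σ(x_S) = (−1)^{|S|} x_S`. -/
def par : E n where
  toFun f := fun S => msign S.card * f S
  map_add' := by intro f g; funext S; simp [mul_add]
  map_smul' := by intro c f; funext S; simp; ring

/-- The super-commutator `[D,F] = D∘F − (−1)^{|D||F|} F∘D`, extended bilinearly to all of
`End Λ(n)` using the parity operator `σ`
(for homogeneous `D`, `σ∘D∘σ = (−1)^{|D|} D`). -/
def sbFun (D F : E n) : E n :=
  D * F - (2:ℂ)⁻¹ • ((F + par n * F * par n) * D + (F - par n * F * par n) * (par n * D * par n))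

/-- The super-commutator as a bilinear map. -/
def sbL : E n →ₗ[ℂ] E n →ₗ[ℂ] E n :=
  LinearMap.mk₂ ℂ (sbFun n)
    (fun D D' F => by
      simp only [sbFun, add_mul, sub_mul, mul_add, mul_sub, smul_mul_assoc, mul_smul_comm,
        smul_add, smul_sub]
      module)
    (fun c D F => by
      simp only [sbFun, add_mul, sub_mul, mul_add, mul_sub, smul_mul_assoc, mul_smul_comm,
        smul_add, smul_sub]
      module)
    (fun D F F' => by
      simp only [sbFun, add_mul, sub_mul, mul_add, mul_sub, smul_mul_assoc, mul_smul_comm,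
        smul_add, smul_sub]
      module)
    (fun c D F => by
      simp only [sbFun, add_mul, sub_mul, mul_add, mul_sub, smul_mul_assoc, mul_smul_comm,
        smul_add, smul_sub]
      module)

/-- Shorthand for the super-commutator. -/
def sb (D F : E n) : E n := sbL n D F

/-- The ℤ₂-homogeneous component of `Λ(n)` of parity `p`. -/
def lpar (p : ZMod 2) : Submodule ℂ (Lambda n) where
  carrier := {f | ∀ S : Finset (Fin n), (S.card : ZMod 2) ≠ p → f S = 0}
  add_mem' := by intro f g hf hg S hS; simp [Pi.add_apply, hf S hS, hg S hS]
  zero_mem' := by intro S hS; rfl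
  smul_mem' := by intro c f hf S hS; simp [Pi.smul_apply, hf S hS]

/-- The ℤ-homogeneous component of `Λ(n)` of degree `m` (zero unless `0 ≤ m ≤ n`). -/
def ldeg (m : ℤ) : Submodule ℂ (Lambda n) where
  carrier := {f | ∀ S : Finset (Fin n), (S.card : ℤ) ≠ m → f S = 0}
  add_mem' := by intro f g hf hg S hS; simp [Pi.add_apply, hf S hS, hg S hS]
  zero_mem' := by intro S hS; rfl
  smul_mem' := by intro c f hf S hS; simp [Pi.smul_apply, hf S hS]

/-- Endomorphisms of `Λ(n)` that are ℤ₂-homogeneous of parity `p`. -/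
def epar (p : ZMod 2) : Submodule ℂ (E n) where
  carrier := {D | ∀ (q : ZMod 2), ∀ f ∈ lpar n q, D f ∈ lpar n (q + p)}
  add_mem' := by
    intro D F hD hF q f hf
    simpa [LinearMap.add_apply] using (lpar n (q + p)).add_mem (hD q f hf) (hF q f hf)
  zero_mem' := by intro q f hf; simpa using (lpar n (q + p)).zero_mem
  smul_mem' := by
    intro c D hD q f hf
    simpa [LinearMap.smul_apply] using (lpar n (q + p)).smul_mem c (hD q f hf)

/-- Endomorphisms of `Λ(n)` that are ℤ-homogeneous of degree `d`. -/
def edeg (d : ℤ) : Submodule ℂ (E n) where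
  carrier := {D | ∀ (m : ℤ), ∀ f ∈ ldeg n m, D f ∈ ldeg n (m + d)}
  add_mem' := by
    intro D F hD hF m f hf
    simpa [LinearMap.add_apply] using (ldeg n (m + d)).add_mem (hD m f hf) (hF m f hf)
  zero_mem' := by intro m f hf; simpa using (ldeg n (m + d)).zero_mem
  smul_mem' := by
    intro c D hD m f hf
    simpa [LinearMap.smul_apply] using (ldeg n (m + d)).smul_mem c (hD m f hf)

/-- The linear map `(f₁,…,f_n) ↦ ∑ᵢ fᵢ ∂ᵢ`. -/
def Wmap : (Fin n → Lambda n) →ₗ[ℂ] E n where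
  toFun F := ∑ i, mulOp n (F i) * pd n i
  map_add' := by
    intro F G
    simp only [Pi.add_apply, map_add, add_mul, Finset.sum_add_distrib]
  map_smul' := by
    intro c F
    simp only [RingHom.id_apply, Pi.smul_apply, map_smul, smul_mul_assoc, Finset.smul_sum]

/-- The divergence `(f₁,…,f_n) ↦ ∑ᵢ ∂ᵢ(fᵢ)`. -/
def divMap : (Fin n → Lambda n) →ₗ[ℂ] Lambda n where
  toFun F := ∑ i, pd n i (F i)
  map_add' := by
    intro F G
    simp only [Pi.add_apply, map_add, Finset.sum_add_distrib]
  map_smul' := by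
    intro c F
    simp only [RingHom.id_apply, Pi.smul_apply, map_smul, Finset.smul_sum]

/-- The Witt type Lie superalgebra `W(n) = {∑ fᵢ∂ᵢ : fᵢ ∈ Λ(n)}`. -/
def Wn : Submodule ℂ (E n) := LinearMap.range (Wmap n)

/-- Divergence-free coefficient tuples. -/
def divFree : Submodule ℂ (Fin n → Lambda n) := LinearMap.ker (divMap n)

/-- The special type Lie superalgebra `S(n) = {∑ fᵢ∂ᵢ : ∑ ∂ᵢ(fᵢ) = 0}`. -/
def Sn : Submodule ℂ (E n) := (divFree n).map (Wmap n)

/-- The top monomial `ω = x₁x₂⋯x_n`. -/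
def omegaTop : Lambda n := mono n Finset.univ

/-- `1 − x₁x₂⋯x_n`. -/
def oneM : Lambda n := mono n ∅ - omegaTop n

/-- Multiplication of every coefficient by `1 − x₁⋯x_n`. -/
def oneMScale : (Fin n → Lambda n) →ₗ[ℂ] (Fin n → Lambda n) :=
  LinearMap.pi fun i => (mulOp n (oneM n)) ∘ₗ LinearMap.proj i

/-- The Lie superalgebra `S̃(n) = {(1−x₁⋯x_n)∑ fᵢ∂ᵢ : ∑ ∂ᵢ(fᵢ) = 0}` (`n` even). -/
def Stn : Submodule ℂ (E n) := (divFree n).map (Wmap n ∘ₗ oneMScale n)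

/-- The conjugate index `i'`. -/
def cidx (i : Fin n) : Fin n :=
  ⟨if i.val < n / 2 then i.val + n / 2 else if i.val < 2 * (n / 2) then i.val - n / 2 else i.val,
   by have := i.isLt; split_ifs <;> omega⟩

/-- The linear map `f ↦ D_H(f) = (−1)^{|f|} ∑ᵢ ∂ᵢ(f)∂_{i'}` (the sign is implemented by the
parity operator `σ`, so that this is a single linear map agreeing with `D_H` on homogeneous
elements). -/
def DHmap : Lambda n →ₗ[ℂ] E n where
  toFun f := ∑ i, mulOp n (pd n i (par n f)) * pd n (cidx n i)
  map_add' := by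
    intro f g
    simp only [map_add, add_mul, Finset.sum_add_distrib]
  map_smul' := by
    intro c f
    simp only [RingHom.id_apply, map_smul, smul_mul_assoc, Finset.smul_sum]

/-- Evaluation of the top coefficient. -/
def evalTop : Lambda n →ₗ[ℂ] ℂ := LinearMap.proj Finset.univ

/-- The Hamiltonian Lie superalgebra `H(n) = {D_H(f) : f ∈ ⊕_{i=0}^{n−1} Λ(n)_i}`. -/
def Hn : Submodule ℂ (E n) := (LinearMap.ker (evalTop n)).map (DHmap n)

/-- `H̃(n) = {D_H(f) : f ∈ Λ(n)}`. -/
def HtN : Submodule ℂ (E n) := LinearMap.range (DHmap n)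

/-- The degree derivation `𝒞 = ∑ᵢ xᵢ∂ᵢ`. -/
def CC : E n := ∑ i, mulOp n (mono n {i}) * pd n i

/-- The span of the diagonal elements `xᵢ∂ᵢ`. -/
def diagSpan : Submodule ℂ (E n) :=
  Submodule.span ℂ (Set.range fun i : Fin n => mulOp n (mono n {i}) * pd n i)

/-- The four families of Cartan type Lie superalgebras. -/
inductive CT | W | S | St | H
deriving DecidableEq

/-- Validity of the parameter `n` for each family. -/
def CT.valid : CT → ℕ → Prop
  | .W, n => 4 ≤ n
  | .S, n => 4 ≤ n
  | .St, n => 4 ≤ n ∧ Even n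
  | .H, n => 4 < n

/-- The Cartan type Lie superalgebra `L` itself. -/
def CT.algebra : CT → (n : ℕ) → Submodule ℂ (E n)
  | .W, n => Wn n
  | .S, n => Sn n
  | .St, n => Stn n
  | .H, n => Hn n

/-- The extended algebra `L'`: `L' = L` for `W(n)` and `S̃(n)`, `L' = S(n) ⊕ ℂ𝒞` for `S(n)`,
and `L' = H̃(n) ⊕ ℂ𝒞` for `H(n)`. -/
def CT.prime : CT → (n : ℕ) → Submodule ℂ (E n)
  | .W, n => Wn n
  | .S, n => Sn n ⊔ Submodule.span ℂ {CC n}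
  | .St, n => Stn n
  | .H, n => HtN n ⊔ Submodule.span ℂ {CC n}

/-- The top degree `ξ_L` of the ℤ-grading. -/
def CT.xi : CT → (n : ℕ) → ℤ
  | .W, n => (n : ℤ) - 1
  | .S, n => (n : ℤ) - 2
  | .St, n => (n : ℤ) - 2
  | .H, n => (n : ℤ) - 3

/-- The ℤ-grading component `L_j = L ∩ W(n)_j`; for `S̃(n)` the component of degree `−1`
is `span{(1−x₁⋯x_n)∂ᵢ}` instead. -/
def CT.grade (t : CT) (n : ℕ) (j : ℤ) : Submodule ℂ (E n) :=
  match t with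
  | .St =>
      if j = -1 then
        Submodule.span ℂ (Set.range fun i : Fin n => mulOp n (oneM n) * pd n i)
      else Stn n ⊓ edeg n j
  | t => t.algebra n ⊓ edeg n j

/-- The ℤ-grading component `L'_j` of the extended algebra `L'`. -/
def CT.grade' (t : CT) (n : ℕ) (j : ℤ) : Submodule ℂ (E n) :=
  match t with
  | .St => CT.grade .St n j
  | t => t.prime n ⊓ edeg n j

/-- The standard Cartan subalgebra `H_L` of `L`: the part of the diagonal
`span{xᵢ∂ᵢ}` lying in `L`. -/
def CT.cartan (t : CT) (n : ℕ) : Submodule ℂ (E n) := t.algebra n ⊓ diagSpan n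

/-- The weight space of `M ⊆ End Λ(n)` of weight `μ ∈ H_L^*` under the adjoint action
of the standard Cartan subalgebra of `L`. -/
def wtsp (t : CT) (n : ℕ) (M : Submodule ℂ (E n)) (μ : Module.Dual ℂ (t.cartan n)) :
    Submodule ℂ (E n) where
  carrier := {x | x ∈ M ∧ ∀ h : t.cartan n, sbL n h x = μ h • x}
  add_mem' := by
    rintro x y ⟨hx, hx'⟩ ⟨hy, hy'⟩
    exact ⟨M.add_mem hx hy, fun h => by simp [map_add, hx' h, hy' h, smul_add]⟩
  zero_mem' := ⟨M.zero_mem, fun h => by simp⟩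
  smul_mem' := by
    rintro c x ⟨hx, hx'⟩
    exact ⟨M.smul_mem c hx, fun h => by simp [map_smul, hx' h, smul_comm c]⟩

/-- The set of roots of `M` with respect to the standard Cartan subalgebra of `L`:
the nonzero weights with nonzero weight space. -/
def CT.roots (t : CT) (n : ℕ) (M : Submodule ℂ (E n)) : Set (Module.Dual ℂ (t.cartan n)) :=
  {ε | ε ≠ 0 ∧ wtsp t n M ε ≠ ⊥}

/-- The sign `(−1)^p` for `p ∈ ℤ₂`. -/
def sgn (p : ZMod 2) : ℂ := (-1 : ℂ) ^ p.val

/-- `f` is a super-biderivation of `L` of ℤ₂-degree `pf`: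
a bilinear map with `f(L_α, L_β) ⊆ L_{α+β+pf}` satisfying
`f([x,y],z) = (−1)^{|x||f|}[x,f(y,z)] + (−1)^{|y||z|}[f(x,z),y]` and
`f(x,[y,z]) = [f(x,y),z] + (−1)^{(|f|+|x|)|y|}[y,f(x,z)]` for homogeneous `x,y,z ∈ L`.
(The bilinear map is given as a bilinear map on the ambient space `End Λ(n)`;
only its restriction to `L` is relevant.) -/
structure IsSuperBider (L : Submodule ℂ (E n)) (pf : ZMod 2)
    (f : E n →ₗ[ℂ] E n →ₗ[ℂ] E n) : Prop where
  maps : ∀ (α β : ZMod 2), ∀ x ∈ L ⊓ epar n α, ∀ y ∈ L ⊓ epar n β,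
    f x y ∈ L ⊓ epar n (α + β + pf)
  eq1 : ∀ (α β γ : ZMod 2), ∀ x ∈ L ⊓ epar n α, ∀ y ∈ L ⊓ epar n β, ∀ z ∈ L ⊓ epar n γ,
    f (sbL n x y) z = sgn (α * pf) • sbL n x (f y z) + sgn (β * γ) • sbL n (f x z) y
  eq2 : ∀ (α β γ : ZMod 2), ∀ x ∈ L ⊓ epar n α, ∀ y ∈ L ⊓ epar n β, ∀ z ∈ L ⊓ epar n γ,
    f x (sbL n y z) = sbL n (f x y) z + sgn ((pf + α) * β) • sbL n y (f x z)

/-- `D` is a superderivation of `L` of ℤ₂-degree `p`: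
`D(L_α) ⊆ L_{α+p}` and `D([x,y]) = [D(x),y] + (−1)^{|D||x|}[x,D(y)]` for homogeneous
`x, y ∈ L`. (Given as a linear map on the ambient space `End Λ(n)`.) -/
structure IsSuperDer (L : Submodule ℂ (E n)) (p : ZMod 2)
    (D : E n →ₗ[ℂ] E n) : Prop where
  maps : ∀ (α : ZMod 2), ∀ x ∈ L ⊓ epar n α, D x ∈ L ⊓ epar n (α + p)
  leib : ∀ (α β : ZMod 2), ∀ x ∈ L ⊓ epar n α, ∀ y ∈ L ⊓ epar n β,
    D (sbL n x y) = sbL n (D x) y + sgn (p * α) • sbL n x (D y)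

/-- `f ∈ BDer(L)_ε`: the super-biderivation `f` has weight `ε ∈ H_L^*`, i.e.
`f(L_η, L_ζ) ⊆ L_{ε+η+ζ}` for all weights `η, ζ`. -/
def CT.HasWeight (t : CT) (n : ℕ) (f : E n →ₗ[ℂ] E n →ₗ[ℂ] E n)
    (ε : Module.Dual ℂ (t.cartan n)) : Prop :=
  ∀ (η ζ : Module.Dual ℂ (t.cartan n)),
    ∀ x ∈ wtsp t n (t.algebra n) η, ∀ y ∈ wtsp t n (t.algebra n) ζ,
      f x y ∈ wtsp t n (t.algebra n) (ε + η + ζ)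

/-- `f ∈ BDer(L)_i`: the super-biderivation `f` has ℤ-degree `i`, i.e.
`f(L_j, L_k) ⊆ L_{i+j+k}` for all `j, k ∈ ℤ`. -/
def CT.HasDeg (t : CT) (n : ℕ) (f : E n →ₗ[ℂ] E n →ₗ[ℂ] E n) (i : ℤ) : Prop :=
  ∀ (j k : ℤ), ∀ x ∈ t.grade n j, ∀ y ∈ t.grade n k, f x y ∈ t.grade n (i + j + k)

/-!
Every super-biderivation of `L` is inner: `f = κ[·,·]` for a scalar `κ`, so that
`φ_f = ψ_f = κ · id`.

Under the torus of `L`, `f` splits into components `f_ν` of weight `ν`. The biderivation identities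
express `f_ν(x, y)` through the values `f_ν(h, ·)` on the torus, and for `ν ≠ 0` these vanish on
vectors whose weight lies off the line `ℂν`; as no nonzero element of `L` commutes with all such
vectors, `f` has weight zero. Then `f` is inner at one root vector `e`, because the weight space of
`e`, or the part of it singled out by brackets with other root vectors, is one-dimensional, and
innerness propagates along brackets to a frame of root vectors. The same holds for the super-flip
of `f`, so subtracting `κ[·,·]` leaves a biderivation `g` vanishing on the frame on both sides. Then
`[[e, e'], g(x, y)] = 0` for all frame vectors `e, e'`, which forces `g = 0`.

If `κ ≠ 0`, a nonzero bracket of homogeneous vectors shows that a weight or degree of `f` is zero.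
-/

section Signs

lemma parity_eq_zero_or_one (p : ZMod 2) : p = 0 ∨ p = 1 := by decide +revert

@[simp] lemma sgn_zero : sgn 0 = 1 := by simp [sgn]

@[simp] lemma sgn_one : sgn 1 = -1 := by
  simp [sgn, show (1 : ZMod 2).val = 1 from rfl]

lemma sgn_add (p q : ZMod 2) : sgn (p + q) = sgn p * sgn q := by
  rcases parity_eq_zero_or_one p with rfl | rfl <;>
    rcases parity_eq_zero_or_one q with rfl | rfl <;> simp [CharTwo.add_self_eq_zero]

lemma sgn_mul_self (p : ZMod 2) : sgn p * sgn p = 1 := by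
  rw [← sgn_add, CharTwo.add_self_eq_zero, sgn_zero]

lemma sgn_ne_zero (p : ZMod 2) : sgn p ≠ 0 :=
  left_ne_zero_of_mul_eq_one (sgn_mul_self p)

@[simp] lemma msign_zero : msign 0 = 1 := pow_zero _

@[simp] lemma msign_one : msign 1 = -1 := pow_one _

lemma msign_add (k l : ℕ) : msign (k + l) = msign k * msign l := pow_add _ k l

lemma msign_eq_sgn (k : ℕ) : msign k = sgn (k : ZMod 2) := by
  induction k with
  | zero => simp
  | succ k ih => rw [msign_add, ih, Nat.cast_succ, sgn_add, msign_one, sgn_one]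

lemma msign_mul_self (k : ℕ) : msign k * msign k = 1 := by
  rw [msign_eq_sgn, sgn_mul_self]

lemma msign_ne_zero (k : ℕ) : msign k ≠ 0 := left_ne_zero_of_mul_eq_one (msign_mul_self k)

end Signs

section Monomials
variable {n : ℕ}

@[simp] lemma mono_self (S : Finset (Fin n)) : mono n S S = 1 := by simp [mono]

lemma mono_of_ne {S T : Finset (Fin n)} (h : T ≠ S) : mono n S T = 0 := by simp [mono, h]

lemma eq_sum_smul_mono (f : Lambda n) : f = ∑ S, f S • mono n S := by
  funext T
  simp [Finset.sum_apply, mono]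

lemma lambda_hom_ext {M : Type*} [AddCommGroup M] [Module ℂ M] {D D' : Lambda n →ₗ[ℂ] M}
    (h : ∀ S, D (mono n S) = D' (mono n S)) : D = D' := by
  refine LinearMap.ext fun f => ?_
  rw [eq_sum_smul_mono f]
  simp [h]

lemma endo_ext {D D' : E n} (h : ∀ S T, D (mono n S) T = D' (mono n S) T) : D = D' :=
  lambda_hom_ext fun S => funext (h S)

lemma apply_eq_sum_mul (D : E n) (f : Lambda n) (T : Finset (Fin n)) :
    D f T = ∑ S, f S * D (mono n S) T := by
  conv_lhs => rw [eq_sum_smul_mono f, map_sum]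
  simp [Finset.sum_apply]

end Monomials

section Parity
variable {n : ℕ}

@[simp] lemma par_apply (f : Lambda n) (S : Finset (Fin n)) : par n f S = msign S.card * f S := rfl

lemma par_mono (S : Finset (Fin n)) : par n (mono n S) = msign S.card • mono n S := by
  funext T
  by_cases h : T = S
  · subst h; simp
  · simp [mono_of_ne h]

@[simp] lemma par_par (f : Lambda n) : par n (par n f) = f := by
  funext S
  simp [← mul_assoc, msign_mul_self]

lemma mem_lpar_iff {f : Lambda n} {p : ZMod 2} : f ∈ lpar n p ↔ par n f = sgn p • f := by
  constructor
  · intro h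
    funext S
    by_cases hS : (S.card : ZMod 2) = p
    · simp [msign_eq_sgn, hS]
    · simp [h S hS]
  · intro h S hS
    have hsgn : sgn S.card ≠ sgn p := by
      rcases parity_eq_zero_or_one p with rfl | rfl <;>
        rcases parity_eq_zero_or_one S.card with h' | h' <;> rw [h'] at hS ⊢ <;>
        first | exact absurd rfl hS | norm_num
    have hS' := congrFun h S
    rw [par_apply, msign_eq_sgn, Pi.smul_apply, smul_eq_mul] at hS'
    exact (mul_eq_mul_right_iff.1 hS').resolve_left hsgn

lemma mono_mem_lpar (S : Finset (Fin n)) : mono n S ∈ lpar n (S.card : ZMod 2) := by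
  rw [mem_lpar_iff, par_mono, msign_eq_sgn]

/-- Conjugation `D ↦ σDσ` by the parity operator, whose eigenspaces are the even and the odd
endomorphisms of `Λ(n)`. -/
def parConj : E n →ₗ[ℂ] E n where
  toFun D := par n * D * par n
  map_add' D F := by noncomm_ring
  map_smul' c D := by simp

lemma parConj_apply_apply (D : E n) (f : Lambda n) : parConj D f = par n (D (par n f)) := rfl

lemma parConj_apply_par (D : E n) (f : Lambda n) : parConj D (par n f) = par n (D f) := by
  simp [parConj_apply_apply]

@[simp] lemma parConj_parConj (D : E n) : parConj (parConj D) = D :=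
  LinearMap.ext fun f => by simp [parConj_apply_apply]

lemma parConj_mul (D F : E n) : parConj (D * F) = parConj D * parConj F :=
  LinearMap.ext fun f => by simp [parConj_apply_apply]

lemma mem_epar_iff {D : E n} {p : ZMod 2} : D ∈ epar n p ↔ parConj D = sgn p • D := by
  constructor
  · intro h
    refine lambda_hom_ext fun S => ?_
    have hS := mem_lpar_iff.1 (h _ _ (mono_mem_lpar S))
    rw [parConj_apply_apply, par_mono, map_smul, map_smul, hS, smul_smul, msign_eq_sgn, sgn_add,
      ← mul_assoc, sgn_mul_self, one_mul, LinearMap.smul_apply]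
  · intro h q f hf
    rw [mem_lpar_iff] at hf ⊢
    rw [← parConj_apply_par D f, h, hf, sgn_add]
    simp [smul_smul, mul_comm]

/-- The projection of `End Λ(n)` onto its even part. -/
def evenPart : E n →ₗ[ℂ] E n := (2 : ℂ)⁻¹ • (LinearMap.id + parConj)

/-- The projection of `End Λ(n)` onto its odd part. -/
def oddPart : E n →ₗ[ℂ] E n := (2 : ℂ)⁻¹ • (LinearMap.id - parConj)

lemma evenPart_apply (D : E n) : evenPart D = (2 : ℂ)⁻¹ • (D + parConj D) := rfl

lemma oddPart_apply (D : E n) : oddPart D = (2 : ℂ)⁻¹ • (D - parConj D) := rfl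

lemma evenPart_add_oddPart (D : E n) : evenPart D + oddPart D = D := by
  rw [evenPart_apply, oddPart_apply]
  module

lemma evenPart_mem_epar (D : E n) : evenPart D ∈ epar n 0 := by
  rw [mem_epar_iff, evenPart_apply]
  simp [add_comm]

lemma oddPart_mem_epar (D : E n) : oddPart D ∈ epar n 1 := by
  rw [mem_epar_iff, oddPart_apply]
  simp only [map_smul, map_sub, parConj_parConj, sgn_one]
  module

lemma mul_mem_epar {p q : ZMod 2} {x y : E n} (hx : x ∈ epar n p) (hy : y ∈ epar n q) :
    x * y ∈ epar n (p + q) := by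
  rw [mem_epar_iff] at *
  rw [parConj_mul, hx, hy, sgn_add, smul_mul_smul_comm]

end Parity

section Supercommutator
variable {n : ℕ} {p q r : ZMod 2} {x y z : E n}

lemma sbL_eq (x y : E n) : sbL n x y =
    x * y - (2 : ℂ)⁻¹ • ((y + parConj y) * x + (y - parConj y) * parConj x) := rfl

lemma sbL_of_mem_epar (hx : x ∈ epar n p) (hy : y ∈ epar n q) :
    sbL n x y = x * y - sgn (p * q) • (y * x) := by
  rw [mem_epar_iff] at hx hy
  rw [sbL_eq, hx, hy]
  rcases parity_eq_zero_or_one p with rfl | rfl <;>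
    rcases parity_eq_zero_or_one q with rfl | rfl <;>
    simp only [sgn_zero, sgn_one, mul_zero, zero_mul, one_mul, add_mul, sub_mul, smul_mul_assoc,
      mul_smul_comm] <;> module

lemma sbL_of_even_left (hx : x ∈ epar n 0) (y : E n) : sbL n x y = x * y - y * x := by
  rw [mem_epar_iff] at hx
  rw [sbL_eq, hx]
  simp only [sgn_zero, add_mul, sub_mul, mul_smul_comm]
  module

lemma sbL_of_even_right (x : E n) (hy : y ∈ epar n 0) : sbL n x y = x * y - y * x := by
  rw [mem_epar_iff] at hy
  rw [sbL_eq, hy]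
  simp only [sgn_zero, add_mul, sub_mul, smul_mul_assoc]
  module

lemma sbL_mem_epar (hx : x ∈ epar n p) (hy : y ∈ epar n q) : sbL n x y ∈ epar n (p + q) := by
  rw [sbL_of_mem_epar hx hy]
  refine Submodule.sub_mem _ (mul_mem_epar hx hy) (Submodule.smul_mem _ _ ?_)
  rw [add_comm]
  exact mul_mem_epar hy hx

lemma sbL_skew (hx : x ∈ epar n p) (hy : y ∈ epar n q) :
    sbL n x y = -(sgn (p * q) • sbL n y x) := by
  rw [sbL_of_mem_epar hx hy, sbL_of_mem_epar hy hx, mul_comm q p, smul_sub, smul_smul,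
    sgn_mul_self]
  module

lemma jacobi_of_mem_epar (hx : x ∈ epar n p) (hy : y ∈ epar n q) (hz : z ∈ epar n r) :
    sbL n (sbL n x y) z = sbL n x (sbL n y z) - sgn (p * q) • sbL n y (sbL n x z) := by
  rw [sbL_of_mem_epar (sbL_mem_epar hx hy) hz, sbL_of_mem_epar hx (sbL_mem_epar hy hz),
    sbL_of_mem_epar hy (sbL_mem_epar hx hz), sbL_of_mem_epar hx hy, sbL_of_mem_epar hy hz,
    sbL_of_mem_epar hx hz]
  have hqp : sgn (p * q) * sgn (q * (p + r)) = sgn (q * r) := by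
    rw [← sgn_add]
    congr 1
    linear_combination (p * q) * CharTwo.two_eq_zero (R := ZMod 2)
  have hrp : sgn ((p + q) * r) = sgn (p * r) * sgn (q * r) := by rw [add_mul, sgn_add]
  have hpq : sgn (p * (q + r)) = sgn (p * q) * sgn (p * r) := by rw [mul_add, sgn_add]
  simp only [sub_mul, mul_sub, smul_mul_assoc, mul_smul_comm, smul_sub, smul_smul, ← mul_assoc,
    hrp, hpq]
  rw [hqp]
  module

lemma jacobi (hx : x ∈ epar n p) (hy : y ∈ epar n q) (z : E n) :
    sbL n (sbL n x y) z = sbL n x (sbL n y z) - sgn (p * q) • sbL n y (sbL n x z) := by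
  rw [← evenPart_add_oddPart z]
  simp only [map_add]
  rw [jacobi_of_mem_epar hx hy (evenPart_mem_epar z), jacobi_of_mem_epar hx hy (oddPart_mem_epar z)]
  module

lemma jacobi_right (hx : x ∈ epar n p) (hy : y ∈ epar n q) (z : E n) :
    sbL n x (sbL n y z) = sbL n (sbL n x y) z + sgn (p * q) • sbL n y (sbL n x z) := by
  rw [jacobi hx hy, sub_add_cancel]

lemma jacobi_left (hx : x ∈ epar n p) (hy : y ∈ epar n q)
    (hz : z ∈ epar n r) :
    sbL n (sbL n x y) z = sbL n x (sbL n y z) + sgn (q * r) • sbL n (sbL n x z) y := by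
  have hsgn : sgn (p * q) = sgn (q * r) * sgn ((p + r) * q) := by
    rw [← sgn_add]
    congr 1
    linear_combination (-(q * r)) * CharTwo.two_eq_zero (R := ZMod 2)
  rw [jacobi hx hy, sbL_skew (sbL_mem_epar hx hz) hy, hsgn]
  module

end Supercommutator

section Torus
variable {n : ℕ}

/-- The diagonal operator `∑ᵢ aᵢ xᵢ∂ᵢ`, acting on `x_S` by the scalar `∑_{i ∈ S} aᵢ`. -/
def diagOp : (Fin n → ℂ) →ₗ[ℂ] E n :=
  LinearMap.mk₂ ℂ (fun a f S => (∑ i ∈ S, a i) * f S)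
    (fun a b f => by funext S; simp [Finset.sum_add_distrib, add_mul])
    (fun c a f => by funext S; simp [← Finset.mul_sum, mul_assoc])
    (fun a f g => by funext S; simp [mul_add])
    (fun c a f => by funext S; simp [mul_left_comm])

@[simp] lemma diagOp_apply (a : Fin n → ℂ) (f : Lambda n) (S : Finset (Fin n)) :
    diagOp a f S = (∑ i ∈ S, a i) * f S := rfl

lemma diagOp_mono (a : Fin n → ℂ) (S : Finset (Fin n)) :
    diagOp a (mono n S) = (∑ i ∈ S, a i) • mono n S := by
  funext T
  by_cases h : T = S
  · subst h; simp
  · simp [mono_of_ne h]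

lemma diagOp_mem_epar (a : Fin n → ℂ) : diagOp a ∈ epar n 0 := by
  intro q f hf S hS
  simp [hf S (by simpa using hS)]

lemma sbL_diagOp_apply_mono (a : Fin n → ℂ) (D : E n) (S T : Finset (Fin n)) :
    sbL n (diagOp a) D (mono n S) T = (∑ i ∈ T, a i - ∑ i ∈ S, a i) * D (mono n S) T := by
  rw [sbL_of_even_left (diagOp_mem_epar a)]
  simp [diagOp_mono, sub_mul]

end Torus

section Weights
variable {n : ℕ}

/-- The weight `a ↦ aᵢ` of `xᵢ` under the torus of diagonal operators with coefficient vectors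
in `A`. -/
def coordWeight (A : Submodule ℂ (Fin n → ℂ)) (i : Fin n) : Module.Dual ℂ A :=
  LinearMap.proj i ∘ₗ A.subtype

/-- The weight of the monomial `x_S` under the torus with coefficient vectors in `A`. -/
def monoWeight (A : Submodule ℂ (Fin n → ℂ)) (S : Finset (Fin n)) : Module.Dual ℂ A :=
  ∑ i ∈ S, coordWeight A i

/-- The endomorphisms of `Λ(n)` of weight `μ` under the torus with coefficient vectors in `A`. -/
def weightSpace (A : Submodule ℂ (Fin n → ℂ)) (μ : Module.Dual ℂ A) : Submodule ℂ (E n) where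
  carrier := {D | ∀ a : A, sbL n (diagOp a) D = μ a • D}
  add_mem' hx hy a := by rw [map_add, hx a, hy a, smul_add]
  zero_mem' a := by simp
  smul_mem' c x hx a := by rw [map_smul, hx a, smul_comm]

variable {A : Submodule ℂ (Fin n → ℂ)} {p q : ZMod 2} {μ ν α β : Module.Dual ℂ A} {D x y : E n}

@[simp] lemma coordWeight_apply (i : Fin n) (a : A) :
    coordWeight A i a = (a : Fin n → ℂ) i := rfl

@[simp] lemma monoWeight_apply (S : Finset (Fin n)) (a : A) :
    monoWeight A S a = ∑ i ∈ S, (a : Fin n → ℂ) i := by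
  simp [monoWeight]

lemma mem_weightSpace_iff : D ∈ weightSpace A μ ↔
    ∀ S T, D (mono n S) T ≠ 0 → monoWeight A T = monoWeight A S + μ := by
  constructor
  · intro h S T hne
    ext a
    have hST := congrArg (fun F : E n => F (mono n S) T) (h a)
    simp only [sbL_diagOp_apply_mono, LinearMap.smul_apply, Pi.smul_apply, smul_eq_mul] at hST
    simpa [sub_eq_iff_eq_add'] using mul_right_cancel₀ hne hST
  · intro h a
    refine endo_ext fun S T => ?_
    rw [sbL_diagOp_apply_mono]
    by_cases hne : D (mono n S) T = 0
    · simp [hne]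
    · have hST := LinearMap.congr_fun (h S T hne) a
      rw [LinearMap.add_apply, monoWeight_apply, monoWeight_apply] at hST
      simp [hST]

lemma diagOp_mem_weightSpace (a : Fin n → ℂ) : diagOp a ∈ weightSpace A 0 := by
  rw [mem_weightSpace_iff]
  intro S T h
  have hTS : T = S := by
    by_contra hc
    simp [mono_of_ne hc] at h
  rw [hTS, add_zero]

lemma sbL_mem_weightSpace (hp : x ∈ epar n p) (hx : x ∈ weightSpace A α)
    (hy : y ∈ weightSpace A β) : sbL n x y ∈ weightSpace A (α + β) := by
  intro a
  have hjac := jacobi (diagOp_mem_epar (a : Fin n → ℂ)) hp y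
  rw [hx a, hy a] at hjac
  simp only [zero_mul, sgn_zero, one_smul, map_smul, LinearMap.smul_apply] at hjac
  rw [LinearMap.add_apply, add_smul, hjac]
  abel

open Classical in
/-- The projection of `End Λ(n)` onto the weight space of weight `μ`, keeping the matrix entries
`x_S ↦ x_T` with `x_T` of weight `μ` above `x_S`. -/
def weightProj (μ : Module.Dual ℂ A) : E n →ₗ[ℂ] E n :=
  ((Pi.basisFun ℂ (Finset (Fin n))).constr ℂ).toLinearMap ∘ₗ LinearMap.pi fun S =>
    LinearMap.pi fun T => if monoWeight A T = monoWeight A S + μ then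
      LinearMap.proj T ∘ₗ LinearMap.applyₗ (mono n S) else 0

open Classical in
lemma weightProj_apply_mono (μ : Module.Dual ℂ A) (D : E n) (S T : Finset (Fin n)) :
    weightProj μ D (mono n S) T =
      if monoWeight A T = monoWeight A S + μ then D (mono n S) T else 0 := by
  have hS : mono n S = Pi.basisFun ℂ _ S := by
    funext T
    simp [mono, Pi.single_apply]
  conv_lhs => rw [hS]
  simp only [weightProj, LinearMap.comp_apply, LinearEquiv.coe_coe, Module.Basis.constr_basis,
    LinearMap.pi_apply]
  split_ifs <;> rfl

lemma weightProj_mem (μ : Module.Dual ℂ A) (D : E n) : weightProj μ D ∈ weightSpace A μ := by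
  classical
  rw [mem_weightSpace_iff]
  intro S T h
  rw [weightProj_apply_mono] at h
  exact of_not_not fun hc => h (if_neg hc)

lemma weightProj_of_mem (h : D ∈ weightSpace A μ) : weightProj μ D = D := by
  classical
  rw [mem_weightSpace_iff] at h
  refine endo_ext fun S T => ?_
  rw [weightProj_apply_mono, ite_eq_left_iff]
  exact fun hST => (not_imp_comm.1 (h S T) hST).symm

lemma weightProj_of_mem_of_ne (h : D ∈ weightSpace A μ) (hne : ν ≠ μ) : weightProj ν D = 0 := by
  classical
  rw [mem_weightSpace_iff] at h
  refine endo_ext fun S T => ?_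
  rw [weightProj_apply_mono, LinearMap.zero_apply, Pi.zero_apply, ite_eq_right_iff]
  intro hν
  by_contra hST
  exact hne (add_left_cancel (hν.symm.trans (h S T hST)))

lemma parConj_apply_mono (D : E n) (S T : Finset (Fin n)) :
    parConj D (mono n S) T = msign S.card * msign T.card * D (mono n S) T := by
  rw [parConj_apply_apply, par_apply, par_mono, map_smul, Pi.smul_apply, smul_eq_mul]
  ring

lemma weightProj_parConj (μ : Module.Dual ℂ A) (D : E n) :
    weightProj μ (parConj D) = parConj (weightProj μ D) := by
  classical
  refine endo_ext fun S T => ?_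
  rw [weightProj_apply_mono, parConj_apply_mono, parConj_apply_mono, weightProj_apply_mono,
    mul_ite, mul_zero]

lemma weightProj_mem_epar (hx : x ∈ epar n p) (μ : Module.Dual ℂ A) :
    weightProj μ x ∈ epar n p := by
  rw [mem_epar_iff] at *
  rw [← weightProj_parConj, hx, map_smul]

open Classical in
variable (A) in
/-- The finite set of differences of weights of monomials, containing every weight of
`End Λ(n)`. -/
def weightFinset : Finset (Module.Dual ℂ A) :=
  Finset.univ.image fun ST : Finset (Fin n) × Finset (Fin n) =>
    monoWeight A ST.2 - monoWeight A ST.1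

lemma monoWeight_sub_mem_weightFinset (S T : Finset (Fin n)) :
    monoWeight A T - monoWeight A S ∈ weightFinset A := by
  classical
  exact Finset.mem_image.2 ⟨(S, T), Finset.mem_univ _, rfl⟩

lemma weightProj_eq_zero (h : μ ∉ weightFinset A) (D : E n) : weightProj μ D = 0 := by
  classical
  refine endo_ext fun S T => ?_
  rw [weightProj_apply_mono, LinearMap.zero_apply, Pi.zero_apply, ite_eq_right_iff]
  intro hT
  exact absurd (by simpa [hT] using monoWeight_sub_mem_weightFinset (A := A) S T) h

variable (A) in
lemma sum_weightProj (D : E n) : ∑ μ ∈ weightFinset A, weightProj μ D = D := by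
  classical
  refine endo_ext fun S T => ?_
  rw [LinearMap.sum_apply, Finset.sum_apply,
    Finset.sum_eq_single_of_mem _ (monoWeight_sub_mem_weightFinset S T), weightProj_apply_mono,
    if_pos (by abel)]
  intro μ _ hμ
  rw [weightProj_apply_mono, if_neg]
  rintro h
  exact hμ (by rw [h]; abel)

lemma weightProj_sbL (hp : x ∈ epar n p) (hx : x ∈ weightSpace A α) (μ : Module.Dual ℂ A)
    (y : E n) : weightProj (α + μ) (sbL n x y) = sbL n x (weightProj μ y) := by
  have hsum : weightProj (α + μ) (sbL n x y) =
      ∑ β ∈ weightFinset A, weightProj (α + μ) (sbL n x (weightProj β y)) := by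
    rw [← map_sum, ← map_sum, sum_weightProj]
  have hother : ∀ β ≠ μ, weightProj (α + μ) (sbL n x (weightProj β y)) = 0 := fun β hβ =>
    weightProj_of_mem_of_ne (sbL_mem_weightSpace hp hx (weightProj_mem _ _))
      (by simpa using hβ.symm)
  rw [hsum, Finset.sum_eq_single μ (fun β _ => hother β),
    weightProj_of_mem (sbL_mem_weightSpace hp hx (weightProj_mem _ _))]
  intro h
  rw [weightProj_eq_zero h, map_zero, map_zero]

lemma weightProj_sbL_right (hp : x ∈ epar n p) (hx : x ∈ weightSpace A α)
    (μ : Module.Dual ℂ A) (hy : y ∈ epar n q) :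
    weightProj (α + μ) (sbL n y x) = sbL n (weightProj μ y) x := by
  rw [sbL_skew hy hp, map_neg, map_smul, weightProj_sbL hp hx,
    sbL_skew (weightProj_mem_epar hy μ) hp]

end Weights

section Homogeneous
variable {n : ℕ}

/-- The elements of `L` of parity `p` and of weight `α` under the torus with coefficient vectors
in `A`. -/
def homComp (L : Submodule ℂ (E n)) (A : Submodule ℂ (Fin n → ℂ)) (α : Module.Dual ℂ A)
    (p : ZMod 2) : Submodule ℂ (E n) := L ⊓ epar n p ⊓ weightSpace A α

/-- `L` is a graded Lie subsuperalgebra of `End Λ(n)` that contains the torus with coefficient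
vectors in `A` and is the sum of its weight spaces. -/
structure IsToral (L : Submodule ℂ (E n)) (A : Submodule ℂ (Fin n → ℂ)) : Prop where
  sbL_mem : ∀ x ∈ L, ∀ y ∈ L, sbL n x y ∈ L
  weightProj_mem : ∀ (μ : Module.Dual ℂ A), ∀ x ∈ L, weightProj μ x ∈ L
  parConj_mem : ∀ x ∈ L, parConj x ∈ L
  diagOp_mem : ∀ a ∈ A, diagOp a ∈ L

variable {L : Submodule ℂ (E n)} {A : Submodule ℂ (Fin n → ℂ)} {α β : Module.Dual ℂ A}
  {p q : ZMod 2} {x y : E n}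

namespace IsToral

lemma sbL_mem_homComp (hL : IsToral L A) (hx : x ∈ homComp L A α p) (hy : y ∈ homComp L A β q) :
    sbL n x y ∈ homComp L A (α + β) (p + q) :=
  ⟨⟨hL.sbL_mem _ hx.1.1 _ hy.1.1, sbL_mem_epar hx.1.2 hy.1.2⟩,
    sbL_mem_weightSpace hx.1.2 hx.2 hy.2⟩

lemma diagOp_mem_homComp (hL : IsToral L A) (a : A) :
    diagOp (a : Fin n → ℂ) ∈ homComp L A 0 0 :=
  ⟨⟨hL.diagOp_mem _ a.2, diagOp_mem_epar _⟩, diagOp_mem_weightSpace _⟩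

lemma mem_of_forall_homComp (hL : IsToral L A) (hx : x ∈ L) (V : Submodule ℂ (E n))
    (h : ∀ α p, homComp L A α p ≤ V) : x ∈ V := by
  have key : ∀ p, L ⊓ epar n p ≤ V := fun p z hz => by
    rw [← sum_weightProj A z]
    exact V.sum_mem fun μ _ => h μ p ⟨⟨hL.weightProj_mem _ _ hz.1, weightProj_mem_epar hz.2 _⟩,
      CartanSuper.weightProj_mem _ _⟩
  rw [← evenPart_add_oddPart x]
  exact V.add_mem
    (key 0 ⟨L.smul_mem _ (L.add_mem hx (hL.parConj_mem _ hx)), evenPart_mem_epar x⟩)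
    (key 1 ⟨L.smul_mem _ (L.sub_mem hx (hL.parConj_mem _ hx)), oddPart_mem_epar x⟩)

end IsToral

lemma sbL_diagOp_right (hy : y ∈ homComp L A β q) (a : A) :
    sbL n y (diagOp (a : Fin n → ℂ)) = -(β a • y) := by
  rw [sbL_skew hy.1.2 (diagOp_mem_epar _), mul_zero, sgn_zero, one_smul, hy.2 a]

end Homogeneous

section WeightBiderivations
variable {n : ℕ}

/-- `f` behaves on homogeneous elements of `L` as a super-biderivation of ℤ₂-degree `pf` and of
weight `ν`. -/
structure IsWeightBider (L : Submodule ℂ (E n)) (A : Submodule ℂ (Fin n → ℂ)) (pf : ZMod 2)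
    (ν : Module.Dual ℂ A) (f : E n →ₗ[ℂ] E n →ₗ[ℂ] E n) : Prop where
  maps : ∀ {α β p q x y}, x ∈ homComp L A α p → y ∈ homComp L A β q →
    f x y ∈ homComp L A (α + β + ν) (p + q + pf)
  eq1 : ∀ {α β γ p q r x y z}, x ∈ homComp L A α p → y ∈ homComp L A β q → z ∈ homComp L A γ r →
    f (sbL n x y) z = sgn (p * pf) • sbL n x (f y z) + sgn (q * r) • sbL n (f x z) y
  eq2 : ∀ {α β γ p q r x y z}, x ∈ homComp L A α p → y ∈ homComp L A β q → z ∈ homComp L A γ r →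
    f x (sbL n y z) = sbL n (f x y) z + sgn ((pf + p) * q) • sbL n y (f x z)

/-- The component of weight `ν` of a bilinear map on `End Λ(n)`. -/
def biderComp {A : Submodule ℂ (Fin n → ℂ)} (ν : Module.Dual ℂ A)
    (f : E n →ₗ[ℂ] E n →ₗ[ℂ] E n) : E n →ₗ[ℂ] E n →ₗ[ℂ] E n :=
  ∑ α ∈ weightFinset A, ∑ β ∈ weightFinset A,
    (f.compl₁₂ (weightProj α) (weightProj β)).compr₂ (weightProj (α + β + ν))

variable {L : Submodule ℂ (E n)} {A : Submodule ℂ (Fin n → ℂ)} {α β ν : Module.Dual ℂ A}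
  {p q pf : ZMod 2} {x y : E n} {f : E n →ₗ[ℂ] E n →ₗ[ℂ] E n}

lemma biderComp_apply (f : E n →ₗ[ℂ] E n →ₗ[ℂ] E n) (hx : x ∈ weightSpace A α)
    (hy : y ∈ weightSpace A β) : biderComp ν f x y = weightProj (α + β + ν) (f x y) := by
  simp only [biderComp, LinearMap.sum_apply, LinearMap.compr₂_apply, LinearMap.compl₁₂_apply]
  have hx' : ∀ α' ≠ α, weightProj α' x = 0 := fun _ => weightProj_of_mem_of_ne hx
  have hy' : ∀ β' ≠ β, weightProj β' y = 0 := fun _ => weightProj_of_mem_of_ne hy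
  rw [Finset.sum_eq_single α, Finset.sum_eq_single β, weightProj_of_mem hx, weightProj_of_mem hy]
  · intro β' _ hβ'
    rw [hy' β' hβ', map_zero, map_zero]
  · intro hβ
    rw [weightProj_eq_zero hβ, map_zero, map_zero]
  · intro α' _ hα'
    simp only [hx' α' hα', map_zero, LinearMap.zero_apply, Finset.sum_const_zero]
  · intro hα
    simp only [weightProj_eq_zero hα, map_zero, LinearMap.zero_apply, Finset.sum_const_zero]

lemma IsSuperBider.isWeightBider_biderComp (hL : IsToral L A) (hf : IsSuperBider n L pf f)
    (ν : Module.Dual ℂ A) : IsWeightBider L A pf ν (biderComp ν f) where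
  maps {α β p q x y} hx hy := by
    have hxy := hf.maps _ _ _ hx.1 _ hy.1
    rw [biderComp_apply f hx.2 hy.2]
    exact ⟨⟨hL.weightProj_mem _ _ hxy.1, weightProj_mem_epar hxy.2 _⟩, weightProj_mem _ _⟩
  eq1 {α β γ p q r x y z} hx hy hz := by
    rw [biderComp_apply f (hL.sbL_mem_homComp hx hy).2 hz.2, biderComp_apply f hy.2 hz.2,
      biderComp_apply f hx.2 hz.2, hf.eq1 _ _ _ _ hx.1 _ hy.1 _ hz.1, map_add, map_smul, map_smul,
      ← weightProj_sbL hx.1.2 hx.2,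
      ← weightProj_sbL_right hy.1.2 hy.2 _ (hf.maps _ _ _ hx.1 _ hz.1).2,
      show α + (β + γ + ν) = α + β + γ + ν by abel,
      show β + (α + γ + ν) = α + β + γ + ν by abel]
  eq2 {α β γ p q r x y z} hx hy hz := by
    rw [biderComp_apply f hx.2 (hL.sbL_mem_homComp hy hz).2, biderComp_apply f hx.2 hy.2,
      biderComp_apply f hx.2 hz.2, hf.eq2 _ _ _ _ hx.1 _ hy.1 _ hz.1, map_add, map_smul,
      ← weightProj_sbL hy.1.2 hy.2,
      ← weightProj_sbL_right hz.1.2 hz.2 _ (hf.maps _ _ _ hx.1 _ hy.1).2,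
      show γ + (α + β + ν) = α + (β + γ) + ν by abel,
      show β + (α + γ + ν) = α + (β + γ) + ν by abel]

namespace IsWeightBider

lemma diagOp_apply_mem (hL : IsToral L A) (hf : IsWeightBider L A pf ν f) (a : A)
    (hy : y ∈ homComp L A β q) : f (diagOp (a : Fin n → ℂ)) y ∈ homComp L A (β + ν) (q + pf) := by
  simpa only [zero_add] using hf.maps (hL.diagOp_mem_homComp a) hy

lemma smul_diagOp_comm (hL : IsToral L A) (hf : IsWeightBider L A pf ν f) (a a' : A)
    (hy : y ∈ homComp L A β q) :
    (β + ν) a • f (diagOp (a' : Fin n → ℂ)) y = (β + ν) a' • f (diagOp (a : Fin n → ℂ)) y := by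
  have h := hf.eq1 (hL.diagOp_mem_homComp a) (hL.diagOp_mem_homComp a') hy
  have hcomm : sbL n (diagOp (a : Fin n → ℂ)) (diagOp (a' : Fin n → ℂ)) = 0 := by
    rw [diagOp_mem_weightSpace (A := A) (a' : Fin n → ℂ) a, LinearMap.zero_apply, zero_smul]
  rw [hcomm, map_zero, LinearMap.zero_apply, zero_mul, zero_mul, sgn_zero, one_smul, one_smul,
    (hf.diagOp_apply_mem hL a' hy).2 a, sbL_diagOp_right (hf.diagOp_apply_mem hL a hy),
    ← sub_eq_add_neg] at h
  exact sub_eq_zero.1 h.symm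

lemma neg_smul_diagOp_apply (hL : IsToral L A) (hf : IsWeightBider L A pf ν f) (a a' : A)
    (hy : y ∈ homComp L A β q) :
    -(ν a' • f (diagOp (a : Fin n → ℂ)) y) =
      sbL n (f (diagOp (a : Fin n → ℂ)) (diagOp (a' : Fin n → ℂ))) y := by
  have h := hf.eq2 (hL.diagOp_mem_homComp a) (hL.diagOp_mem_homComp a') hy
  rw [hy.2 a', map_smul, mul_zero, sgn_zero, one_smul, (hf.diagOp_apply_mem hL a hy).2 a',
    ← sub_eq_iff_eq_add] at h
  rw [← h, LinearMap.add_apply]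
  module

lemma neg_smul_apply (hL : IsToral L A) (hf : IsWeightBider L A pf ν f) (a : A)
    (hx : x ∈ homComp L A α p) (hy : y ∈ homComp L A β q) :
    -((β + ν) a • f x y) = sgn (p * q) • sbL n (f (diagOp (a : Fin n → ℂ)) y) x := by
  have h := hf.eq1 (hL.diagOp_mem_homComp a) hx hy
  rw [hx.2 a, map_smul, LinearMap.smul_apply, zero_mul, sgn_zero, one_smul, (hf.maps hx hy).2 a,
    ← sub_eq_iff_eq_add'] at h
  rw [← h, add_assoc, LinearMap.add_apply α]
  module

end IsWeightBider

/-- Some torus element is annihilated by `ν` but not by `α`. -/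
def IsOff (ν α : Module.Dual ℂ A) : Prop := ∃ a, ν a = 0 ∧ α a ≠ 0

lemma isOff_or_isOff (ν : Module.Dual ℂ A) {a b : A} (hαa : α a ≠ 0) (hβa : β a = 0)
    (hβb : β b ≠ 0) : IsOff ν α ∨ IsOff ν β := by
  by_cases hν : ν a = 0
  · exact Or.inl ⟨a, hν, hαa⟩
  · refine Or.inr ⟨ν a • b - ν b • a, ?_, ?_⟩
    · simp [mul_comm]
    · simp [hβa, hν, hβb]

/-- For every weight `ν`, the only element of `L` commuting with all homogeneous elements of `L`
whose weight is off `ν` is zero. -/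
def OffSeparated (L : Submodule ℂ (E n)) (A : Submodule ℂ (Fin n → ℂ)) : Prop :=
  ∀ ν : Module.Dual ℂ A, ∀ z ∈ L,
    (∀ α p, IsOff ν α → ∀ u ∈ homComp L A α p, sbL n u z = 0) → z = 0

namespace IsWeightBider

lemma apply_eq_zero_of_isOff (hL : IsToral L A) (hν : ν ≠ 0) (hf : IsWeightBider L A pf ν f)
    (hoff : IsOff ν β) (hx : x ∈ homComp L A α p) (hy : y ∈ homComp L A β q) : f x y = 0 := by
  obtain ⟨a, hνa, hβa⟩ := hoff
  obtain ⟨b, hνb⟩ : ∃ b, ν b ≠ 0 := by simpa using DFunLike.ne_iff.1 hν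
  have hab : f (diagOp (a : Fin n → ℂ)) (diagOp (b : Fin n → ℂ)) = 0 := by
    have h := hf.smul_diagOp_comm hL b a (hL.diagOp_mem_homComp b)
    rw [zero_add, hνa, zero_smul] at h
    exact (smul_eq_zero.1 h).resolve_left hνb
  have hay : f (diagOp (a : Fin n → ℂ)) y = 0 := by
    have h := hf.neg_smul_diagOp_apply hL a b hy
    rw [hab, map_zero, LinearMap.zero_apply, neg_eq_zero] at h
    exact (smul_eq_zero.1 h).resolve_left hνb
  have h := hf.neg_smul_apply hL a hx hy
  rw [hay, map_zero, LinearMap.zero_apply, smul_zero, neg_eq_zero, LinearMap.add_apply, hνa,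
    add_zero] at h
  exact (smul_eq_zero.1 h).resolve_left hβa

lemma apply_eq_zero (hL : IsToral L A) (hsep : OffSeparated L A) (hν : ν ≠ 0)
    (hf : IsWeightBider L A pf ν f) (hx : x ∈ homComp L A α p) (hy : y ∈ homComp L A β q) :
    f x y = 0 := by
  by_cases hoff : IsOff ν β
  · exact hf.apply_eq_zero_of_isOff hL hν hoff hx hy
  refine hsep ν _ (hf.maps hx hy).1.1 fun γ r hγ u hu => ?_
  have hγβ : IsOff ν (γ + β) := by
    obtain ⟨a, hνa, hγa⟩ := hγ
    have hβa : β a = 0 := of_not_not fun hβa => hoff ⟨a, hνa, hβa⟩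
    exact ⟨a, hνa, by rwa [LinearMap.add_apply, hβa, add_zero]⟩
  have h := hf.eq2 hx hu hy
  rw [hf.apply_eq_zero_of_isOff hL hν hγβ hx (hL.sbL_mem_homComp hu hy),
    hf.apply_eq_zero_of_isOff hL hν hγ hx hu, map_zero, LinearMap.zero_apply, zero_add] at h
  exact (smul_eq_zero.1 h.symm).resolve_left (sgn_ne_zero _)

end IsWeightBider

lemma IsSuperBider.isWeightBider_zero (hL : IsToral L A) (hsep : OffSeparated L A)
    (hf : IsSuperBider n L pf f) : IsWeightBider L A pf 0 f where
  maps {α β p q x y} hx hy := by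
    refine ⟨hf.maps _ _ _ hx.1 _ hy.1, ?_⟩
    rw [← sum_weightProj A (f x y), add_zero]
    refine Submodule.sum_mem _ fun μ _ => ?_
    by_cases hμ : μ = α + β
    · exact hμ ▸ weightProj_mem _ _
    · have h := (hf.isWeightBider_biderComp hL (μ - (α + β))).apply_eq_zero hL hsep
        (sub_ne_zero.2 hμ) hx hy
      rw [biderComp_apply f hx.2 hy.2, add_sub_cancel] at h
      exact h ▸ Submodule.zero_mem _
  eq1 hx hy hz := hf.eq1 _ _ _ _ hx.1 _ hy.1 _ hz.1
  eq2 hx hy hz := hf.eq2 _ _ _ _ hx.1 _ hy.1 _ hz.1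

end WeightBiderivations

section InnerAt
variable {n : ℕ}

/-- The bilinear map `f` agrees with `κ[·, ·]` whenever its second argument is `y`. -/
def InnerAt (L : Submodule ℂ (E n)) (f : E n →ₗ[ℂ] E n →ₗ[ℂ] E n) (κ : ℂ) (y : E n) : Prop :=
  ∀ x ∈ L, f x y = κ • sbL n x y

variable {L : Submodule ℂ (E n)} {A : Submodule ℂ (Fin n → ℂ)} {β β' : Module.Dual ℂ A}
  {q q' pf : ZMod 2} {y y' : E n} {f : E n →ₗ[ℂ] E n →ₗ[ℂ] E n} {κ : ℂ}

lemma smul_eq_zero_of_mem_epar_add_one {c : ℂ} (hy : y ∈ epar n q)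
    (hcy : c • y ∈ epar n (q + 1)) : c • y = 0 := by
  have hq := mem_epar_iff.1 ((epar n q).smul_mem c hy)
  rw [mem_epar_iff.1 hcy, sgn_add, sgn_one] at hq
  have htwice : (2 * sgn q) • c • y = 0 := by linear_combination (norm := module) -hq
  exact (smul_eq_zero.1 htwice).resolve_left (mul_ne_zero two_ne_zero (sgn_ne_zero q))

namespace IsWeightBider

lemma diagOp_apply_eq_zero (hL : IsToral L A) (hf : IsWeightBider L A pf 0 f) {a : A}
    (hy : y ∈ homComp L A β q) (ha : β a = 0) (hβ : β ≠ 0) :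
    f (diagOp (a : Fin n → ℂ)) y = 0 := by
  obtain ⟨b, hb⟩ : ∃ b, β b ≠ 0 := by simpa using DFunLike.ne_iff.1 hβ
  have h := hf.smul_diagOp_comm hL a b hy
  rw [add_zero, ha, zero_smul] at h
  exact (smul_eq_zero.1 h.symm).resolve_left hb

lemma sbL_diagOp_apply_eq_zero (hL : IsToral L A) (hf : IsWeightBider L A pf 0 f) {a : A}
    (hy : y ∈ homComp L A β q) (hy' : y' ∈ homComp L A β' q') (ha : β a = 0) (hβ : β ≠ 0)
    (h : sbL n y y' = 0) : sbL n y (f (diagOp (a : Fin n → ℂ)) y') = 0 := by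
  have hder := hf.eq2 (hL.diagOp_mem_homComp a) hy hy'
  rw [h, map_zero, hf.diagOp_apply_eq_zero hL hy ha hβ, map_zero, LinearMap.zero_apply,
    zero_add] at hder
  exact (smul_eq_zero.1 hder.symm).resolve_left (sgn_ne_zero _)

lemma innerAt_of_diagOp (hL : IsToral L A) (hf : IsWeightBider L A pf 0 f) {a : A}
    (hy : y ∈ homComp L A β q) (ha : β a ≠ 0)
    (h : f (diagOp (a : Fin n → ℂ)) y = (κ * β a) • y) : InnerAt L f κ y := by
  intro x hx
  suffices x ∈ LinearMap.ker (f.flip y - κ • (sbL n).flip y) by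
    simpa [sub_eq_zero] using this
  refine hL.mem_of_forall_homComp hx _ fun α p x hx => ?_
  have hxy := hf.neg_smul_apply hL a hx hy
  rw [h, add_zero] at hxy
  have hβ : β a • f x y = β a • κ • sbL n x y := by
    rw [← neg_inj, hxy, sbL_skew hx.1.2 hy.1.2, map_smul, LinearMap.smul_apply]
    module
  simpa [sub_eq_zero] using smul_right_injective _ ha hβ

lemma innerAt_sbL (hL : IsToral L A) (hf : IsWeightBider L A pf 0 f) (hκ : pf = 0 ∨ κ = 0)
    (hy : y ∈ homComp L A β q) (hy' : y' ∈ homComp L A β' q') {a : A} (ha : β a = 0) (hβ : β ≠ 0)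
    (ha' : β' a ≠ 0) (h : InnerAt L f κ y') : InnerAt L f κ (sbL n y y') := by
  refine hf.innerAt_of_diagOp hL (hL.sbL_mem_homComp hy hy')
    (by rwa [LinearMap.add_apply, ha, zero_add]) ?_
  rw [hf.eq2 (hL.diagOp_mem_homComp a) hy hy', hf.diagOp_apply_eq_zero hL hy ha hβ,
    h _ (hL.diagOp_mem _ a.2), hy'.2 a]
  rcases hκ with rfl | rfl
  · simp [ha, smul_smul]
  · simp

lemma exists_innerAt (hL : IsToral L A) (hf : IsWeightBider L A pf 0 f) {a : A}
    (hy : y ∈ homComp L A β q) (ha : β a ≠ 0)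
    (h : ∃ c : ℂ, f (diagOp (a : Fin n → ℂ)) y = c • y) :
    ∃ κ, (pf = 0 ∨ κ = 0) ∧ InnerAt L f κ y := by
  obtain ⟨c, hc⟩ := h
  rcases parity_eq_zero_or_one pf with rfl | rfl
  · exact ⟨c / β a, Or.inl rfl,
      hf.innerAt_of_diagOp hL hy ha (by rw [hc, div_mul_cancel₀ _ ha])⟩
  · have hodd := (hf.diagOp_apply_mem hL a hy).1.2
    rw [hc] at hodd
    refine ⟨0, Or.inr rfl, hf.innerAt_of_diagOp hL hy ha ?_⟩
    rw [hc, smul_eq_zero_of_mem_epar_add_one hy.1.2 hodd, zero_mul, zero_smul]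

end IsWeightBider

end InnerAt

section Flip
variable {n : ℕ}

/-- The super-flip `(x, y) ↦ (−1)^{|x||y|} f(y, x)` of a bilinear map on `End Λ(n)`. -/
def superFlip (f : E n →ₗ[ℂ] E n →ₗ[ℂ] E n) : E n →ₗ[ℂ] E n →ₗ[ℂ] E n :=
  (f ∘ₗ evenPart).flip + (f ∘ₗ oddPart).flip ∘ₗ parConj

variable {L : Submodule ℂ (E n)} {p q pf : ZMod 2} {x y : E n} {f : E n →ₗ[ℂ] E n →ₗ[ℂ] E n}
  {κ : ℂ}

lemma superFlip_apply (f : E n →ₗ[ℂ] E n →ₗ[ℂ] E n) (hx : x ∈ epar n p) (hy : y ∈ epar n q) :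
    superFlip f x y = sgn (p * q) • f y x := by
  rw [mem_epar_iff] at hx hy
  simp only [superFlip, LinearMap.add_apply, LinearMap.flip_apply, LinearMap.comp_apply,
    evenPart_apply, oddPart_apply, hx, hy]
  rcases parity_eq_zero_or_one q with rfl | rfl
  · simp only [sgn_zero, mul_zero, map_add, map_sub, map_smul, LinearMap.smul_apply,
      LinearMap.add_apply, LinearMap.sub_apply]
    module
  · simp only [sgn_one, mul_one, map_add, map_sub, map_smul, LinearMap.smul_apply,
      LinearMap.add_apply, LinearMap.sub_apply]
    module

lemma IsSuperBider.superFlip (hf : IsSuperBider n L pf f) :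
    IsSuperBider n L pf (superFlip f) where
  maps p q x hx y hy := by
    rw [superFlip_apply f hx.2 hy.2, add_comm p q]
    exact Submodule.smul_mem _ _ (hf.maps _ _ _ hy _ hx)
  eq1 p q r x hx y hy z hz := by
    rw [superFlip_apply f (sbL_mem_epar hx.2 hy.2) hz.2, superFlip_apply f hy.2 hz.2,
      superFlip_apply f hx.2 hz.2, hf.eq2 _ _ _ z hz x hx y hy, add_comm (sbL n (f z x) y)]
    simp only [map_smul, LinearMap.smul_apply, smul_add, smul_smul, ← sgn_add]
    congr 3
    · linear_combination (p * r) * CharTwo.two_eq_zero (R := ZMod 2)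
    · ring
  eq2 p q r x hx y hy z hz := by
    rw [superFlip_apply f hx.2 (sbL_mem_epar hy.2 hz.2), superFlip_apply f hx.2 hy.2,
      superFlip_apply f hx.2 hz.2, hf.eq1 _ _ _ y hy z hz x hx, add_comm (sgn _ • sbL n y _)]
    simp only [map_smul, LinearMap.smul_apply, smul_add, smul_smul, ← sgn_add]
    congr 3
    · linear_combination (p * r) * CharTwo.two_eq_zero (R := ZMod 2)
    · ring

lemma IsSuperBider.add_smul_sbL (hL : ∀ x ∈ L, ∀ y ∈ L, sbL n x y ∈ L)
    (hf : IsSuperBider n L pf f) (hκ : pf = 0 ∨ κ = 0) :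
    IsSuperBider n L pf (f + κ • sbL n) := by
  rcases hκ with rfl | rfl
  swap
  · rwa [zero_smul, add_zero]
  refine ⟨fun p q x hx y hy => ?_, fun p q r x hx y hy z hz => ?_, fun p q r x hx y hy z hz => ?_⟩
  · refine Submodule.add_mem _ (hf.maps _ _ _ hx _ hy) (Submodule.smul_mem _ _
      ⟨hL _ hx.1 _ hy.1, ?_⟩)
    rw [add_zero]
    exact sbL_mem_epar hx.2 hy.2
  · simp only [LinearMap.add_apply, LinearMap.smul_apply, hf.eq1 _ _ _ x hx y hy z hz,
      map_add, map_smul, mul_zero, sgn_zero, one_smul, jacobi_left hx.2 hy.2 hz.2]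
    module
  · simp only [LinearMap.add_apply, LinearMap.smul_apply, hf.eq2 _ _ _ x hx y hy z hz,
      jacobi_right hx.2 hy.2, map_add, map_smul, zero_add]
    module

end Flip

section Frames
variable {n : ℕ}

/-- A set `F` of homogeneous elements of `L` that detects innerness of super-biderivations: every
weight-zero biderivation is `κ[·, e]` at all `e ∈ F` for one scalar `κ`, while the brackets of
elements of `F` are not all zero and have trivial common centralizer in `L`. -/
structure IsRigidFrame (L : Submodule ℂ (E n)) (A : Submodule ℂ (Fin n → ℂ)) (F : Set (E n)) :
    Prop where
  exists_mem_homComp : ∀ e ∈ F, ∃ α p, e ∈ homComp L A α p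
  exists_innerAt : ∀ pf f, IsWeightBider L A pf 0 f →
    ∃ κ : ℂ, (pf = 0 ∨ κ = 0) ∧ ∀ e ∈ F, InnerAt L f κ e
  exists_sbL_ne_zero : ∃ e ∈ F, ∃ e' ∈ F, sbL n e e' ≠ 0
  eq_zero_of_centralizes : ∀ z ∈ L, (∀ e ∈ F, ∀ e' ∈ F, sbL n (sbL n e e') z = 0) → z = 0

variable {L : Submodule ℂ (E n)} {A : Submodule ℂ (Fin n → ℂ)} {F : Set (E n)}
  {p q r s pf : ZMod 2} {x y e e' : E n} {f g : E n →ₗ[ℂ] E n →ₗ[ℂ] E n} {κ : ℂ}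

lemma apply_eq_of_innerAt_superFlip (hL : IsToral L A) (he : e ∈ L ⊓ epar n p)
    (h : InnerAt L (superFlip f) κ e) (hx : x ∈ L) : f e x = -κ • sbL n e x := by
  suffices x ∈ LinearMap.ker (f e + κ • sbL n e) by
    rwa [LinearMap.mem_ker, LinearMap.add_apply, LinearMap.smul_apply, add_eq_zero_iff_eq_neg,
      ← neg_smul] at this
  refine hL.mem_of_forall_homComp hx _ fun α q x hx => ?_
  have hxe := h x hx.1.1
  rw [superFlip_apply f hx.1.2 he.2, sbL_skew hx.1.2 he.2] at hxe
  refine smul_right_injective _ (sgn_ne_zero (q * p)) ?_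
  linear_combination (norm := (simp only [LinearMap.add_apply, LinearMap.smul_apply]; module)) hxe

/- Expanding `g([e, x], [e', y])` with the Leibniz rule in the first or in the second variable first
gives `[e, [e', g(x, y)]]` and `[e', [e, g(x, y)]]` up to sign. -/
lemma IsSuperBider.sbL_sbL_apply_eq_zero (hL : ∀ x ∈ L, ∀ y ∈ L, sbL n x y ∈ L)
    (hg : IsSuperBider n L pf g) (he : e ∈ L ⊓ epar n r) (he' : e' ∈ L ⊓ epar n s)
    (hge : ∀ z ∈ L, g e z = 0) (hge' : ∀ z ∈ L, g z e' = 0) (hx : x ∈ L ⊓ epar n p)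
    (hy : y ∈ L ⊓ epar n q) : sbL n (sbL n e e') (g x y) = 0 := by
  have hex : sbL n e x ∈ L ⊓ epar n (r + p) := ⟨hL _ he.1 _ hx.1, sbL_mem_epar he.2 hx.2⟩
  have hey : sbL n e' y ∈ L ⊓ epar n (s + q) := ⟨hL _ he'.1 _ hy.1, sbL_mem_epar he'.2 hy.2⟩
  have h₁ := hg.eq1 _ _ _ e he x hx _ hey
  have h₂ := hg.eq2 _ _ _ _ hex e' he' y hy
  rw [hg.eq2 _ _ _ x hx e' he' y hy, hge' x hx.1, hge _ hey.1] at h₁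
  rw [hg.eq1 _ _ _ e he x hx y hy, hge' _ hex.1, hge y hy.1] at h₂
  simp only [map_zero, LinearMap.zero_apply, zero_add, add_zero, smul_zero, map_smul,
    smul_smul] at h₁ h₂
  have hsgn : sgn ((pf + (r + p)) * s) * sgn (r * pf) =
      sgn (r * pf) * sgn ((pf + p) * s) * sgn (r * s) := by
    simp only [← sgn_add]
    congr 1
    ring
  rw [h₁, hsgn, mul_smul _ (sgn (r * s))] at h₂
  rw [jacobi he.2 he'.2, sub_eq_zero]
  exact smul_right_injective _ (mul_ne_zero (sgn_ne_zero _) (sgn_ne_zero _)) h₂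

lemma IsRigidFrame.eq_zero_of_forall_mem (hF : IsRigidFrame L A F) (hL : IsToral L A)
    (hg : IsSuperBider n L pf g) (hleft : ∀ e ∈ F, ∀ z ∈ L, g e z = 0)
    (hright : ∀ e ∈ F, ∀ z ∈ L, g z e = 0) (hx : x ∈ L) (hy : y ∈ L) : g x y = 0 := by
  refine hL.mem_of_forall_homComp hx (LinearMap.ker (g.flip y)) fun α p x hx => ?_
  refine hL.mem_of_forall_homComp hy (LinearMap.ker (g x)) fun β q y hy => ?_
  refine hF.eq_zero_of_centralizes _ (hg.maps _ _ _ hx.1 _ hy.1).1 fun e he e' he' => ?_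
  obtain ⟨γ, r, her⟩ := hF.exists_mem_homComp e he
  obtain ⟨δ, s, hes⟩ := hF.exists_mem_homComp e' he'
  exact hg.sbL_sbL_apply_eq_zero hL.sbL_mem her.1 hes.1 (hleft e he) (hright e' he') hx.1 hy.1

theorem IsRigidFrame.exists_eq_smul_sbL (hF : IsRigidFrame L A F) (hL : IsToral L A)
    (hsep : OffSeparated L A) (hf : IsSuperBider n L pf f) :
    ∃ κ : ℂ, ∀ x ∈ L, ∀ y ∈ L, f x y = κ • sbL n x y := by
  obtain ⟨κ, hκ, hinner⟩ := hF.exists_innerAt pf f (hf.isWeightBider_zero hL hsep)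
  obtain ⟨κ', -, hflip⟩ := hF.exists_innerAt pf _ (hf.superFlip.isWeightBider_zero hL hsep)
  have hleft : ∀ e ∈ F, ∀ x ∈ L, f e x = -κ' • sbL n e x := fun e he x hx => by
    obtain ⟨α, p, hep⟩ := hF.exists_mem_homComp e he
    exact apply_eq_of_innerAt_superFlip hL hep.1 (hflip e he) hx
  have hmem : ∀ e ∈ F, e ∈ L := fun e he => by
    obtain ⟨α, p, hep⟩ := hF.exists_mem_homComp e he
    exact hep.1.1
  obtain ⟨e, he, e', he', hne⟩ := hF.exists_sbL_ne_zero
  have hκκ' : -κ' = κ := smul_left_injective _ hne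
    ((hleft e he e' (hmem e' he')).symm.trans (hinner e' he' e (hmem e he)))
  have hg := hf.add_smul_sbL (κ := -κ) hL.sbL_mem (hκ.imp_right neg_eq_zero.2)
  have hzero : ∀ x ∈ L, ∀ y ∈ L, f x y + -κ • sbL n x y = 0 := fun x hx y hy =>
    hF.eq_zero_of_forall_mem hL hg (fun e he z hz => by simp [hleft e he z hz, hκκ'])
      (fun e he z hz => by simp [hinner e he z hz]) hx hy
  exact ⟨κ, fun x hx y hy => by linear_combination (norm := module) hzero x hx y hy⟩

end Frames

section ExteriorProduct
variable {n : ℕ}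

/-- The number of elements of `S` below `i`, whose parity is the sign of `x_i · x_S`. -/
def numBelow (i : Fin n) (S : Finset (Fin n)) : ℕ := (S.filter (· < i)).card

lemma inversions_singleton_left (i : Fin n) (S : Finset (Fin n)) :
    inversions n {i} S = numBelow i S := by
  rw [inversions, Finset.singleton_product, Finset.filter_map, Finset.card_map]
  rfl

lemma msign_numBelow_insert (i : Fin n) {j : Fin n} {S : Finset (Fin n)} (h : j ∉ S) :
    msign (numBelow i (insert j S)) = (if j < i then -1 else 1) * msign (numBelow i S) := by
  rw [numBelow, Finset.filter_insert]
  split_ifs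
  · rw [Finset.card_insert_of_notMem (by simp [h]), msign_add, msign_one, mul_comm, numBelow]
  · rw [one_mul, numBelow]

lemma numBelow_insert_self (i : Fin n) (S : Finset (Fin n)) :
    numBelow i (insert i S) = numBelow i S := by
  simp [numBelow, Finset.filter_insert]

lemma numBelow_erase_self (i : Fin n) (S : Finset (Fin n)) :
    numBelow i (S.erase i) = numBelow i S := by
  rw [numBelow, numBelow, Finset.filter_erase, Finset.erase_eq_of_notMem (by simp)]

lemma inversions_union_left {S T : Finset (Fin n)} (U : Finset (Fin n)) (h : Disjoint S T) :
    inversions n (S ∪ T) U = inversions n S U + inversions n T U := by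
  rw [inversions, Finset.union_product, Finset.filter_union, Finset.card_union_of_disjoint,
    inversions, inversions]
  exact Finset.disjoint_filter_filter (Finset.disjoint_product.2 (Or.inl h))

lemma inversions_union_right (S : Finset (Fin n)) {T U : Finset (Fin n)} (h : Disjoint T U) :
    inversions n S (T ∪ U) = inversions n S T + inversions n S U := by
  rw [inversions, Finset.product_union, Finset.filter_union, Finset.card_union_of_disjoint,
    inversions, inversions]
  exact Finset.disjoint_filter_filter (Finset.disjoint_product.2 (Or.inr h))

lemma inversions_add_inversions {S T : Finset (Fin n)} (h : Disjoint S T) :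
    inversions n S T + inversions n T S = S.card * T.card := by
  have hswap : inversions n T S = ((S ×ˢ T).filter fun p => ¬p.2 < p.1).card := by
    refine Finset.card_equiv (Equiv.prodComm _ _) fun p => ?_
    simp only [Finset.mem_filter, Finset.mem_product, Equiv.prodComm_apply, Prod.fst_swap,
      Prod.snd_swap, not_lt]
    refine ⟨fun hp => ⟨hp.1.symm, hp.2.le⟩, fun hp => ⟨hp.1.symm, hp.2.lt_of_ne fun heq => ?_⟩⟩
    exact Finset.disjoint_left.1 h hp.1.1 (heq ▸ hp.1.2)
  rw [hswap, inversions, Finset.card_filter_add_card_filter_not, Finset.card_product]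

lemma mulOp_apply (f g : Lambda n) (U : Finset (Fin n)) : mulOp n f g U =
    ∑ S ∈ U.powerset, msign (inversions n S (U \ S)) * f S * g (U \ S) := rfl

lemma mulOp_mono_mono (S T : Finset (Fin n)) : mulOp n (mono n S) (mono n T) =
    if Disjoint S T then msign (inversions n S T) • mono n (S ∪ T) else 0 := by
  funext U
  rw [mulOp_apply]
  by_cases hU : S ⊆ U ∧ U \ S = T
  · obtain ⟨hSU, rfl⟩ := hU
    rw [Finset.sum_eq_single_of_mem S (Finset.mem_powerset.2 hSU)
      fun R _ hR => by rw [mono_of_ne hR, mul_zero, zero_mul], if_pos Finset.disjoint_sdiff]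
    simp [Finset.union_eq_right.2 hSU]
  · rw [Finset.sum_eq_zero]
    · split_ifs with hST
      · rw [Pi.smul_apply, mono_of_ne, smul_zero]
        rintro rfl
        exact hU ⟨Finset.subset_union_left, by
          rw [Finset.union_sdiff_left, Finset.sdiff_eq_self_of_disjoint hST.symm]⟩
      · rfl
    · intro R hR
      rw [Finset.mem_powerset] at hR
      by_cases hRS : R = S
      · rw [mono_of_ne (S := T) fun h => hU (hRS ▸ ⟨hR, h⟩), mul_zero]
      · rw [mono_of_ne hRS, mul_zero, zero_mul]

/-- Multiplication by the generator `x_i`. -/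
def mulX (i : Fin n) : E n := mulOp n (mono n {i})

lemma mulX_mono (i : Fin n) (S : Finset (Fin n)) : mulX i (mono n S) =
    if i ∈ S then 0 else msign (numBelow i S) • mono n (insert i S) := by
  simp only [mulX, mulOp_mono_mono, inversions_singleton_left, Finset.disjoint_singleton_left,
    ite_not, Finset.singleton_union]

lemma pd_apply (i : Fin n) (f : Lambda n) (S : Finset (Fin n)) :
    pd n i f S = if i ∈ S then 0 else msign (numBelow i S) * f (insert i S) := rfl

lemma pd_mono (i : Fin n) (S : Finset (Fin n)) : pd n i (mono n S) =
    if i ∈ S then msign (numBelow i S) • mono n (S.erase i) else 0 := by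
  funext U
  rw [pd_apply]
  by_cases hU : i ∉ U ∧ insert i U = S
  · obtain ⟨hi, rfl⟩ := hU
    simp [hi, numBelow_insert_self]
  · have hzero : (if i ∈ U then 0 else msign (numBelow i U) * mono n S (insert i U)) = 0 := by
      split_ifs with hi
      · rfl
      · rw [mono_of_ne fun h => hU ⟨hi, h⟩, mul_zero]
    rw [hzero]
    split_ifs with hS
    · rw [Pi.smul_apply, mono_of_ne, smul_zero]
      rintro rfl
      exact hU ⟨Finset.notMem_erase i S, Finset.insert_erase hS⟩
    · rfl

lemma mulOp_mono_empty : mulOp n (mono n ∅) = 1 :=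
  lambda_hom_ext fun S => by simp [mulOp_mono_mono, inversions]

lemma mulOp_apply_mono_empty (f : Lambda n) : mulOp n f (mono n ∅) = f :=
  LinearMap.congr_fun (f := (mulOp n).flip (mono n ∅)) (g := LinearMap.id)
    (lambda_hom_ext fun S => by simp [mulOp_mono_mono, inversions]) f

lemma mulOp_mulOp_mono (S T U : Finset (Fin n)) :
    mulOp n (mulOp n (mono n S) (mono n T)) (mono n U) =
      mulOp n (mono n S) (mulOp n (mono n T) (mono n U)) := by
  simp only [mulOp_mono_mono]
  by_cases hST : Disjoint S T <;> by_cases hTU : Disjoint T U <;> by_cases hSU : Disjoint S U <;>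
    simp only [hST, hTU, hSU, if_true, if_false, map_smul, map_zero, LinearMap.smul_apply,
      LinearMap.zero_apply, mulOp_mono_mono, Finset.disjoint_union_left,
      Finset.disjoint_union_right, and_true, and_false, smul_zero]
  rw [smul_smul, smul_smul, inversions_union_left _ hST, inversions_union_right _ hTU, msign_add,
    msign_add, Finset.union_assoc]
  congr 1
  ring

lemma mulOp_mulOp (f g : Lambda n) : mulOp n (mulOp n f g) = mulOp n f * mulOp n g := by
  let assocLeft : Lambda n →ₗ[ℂ] Lambda n →ₗ[ℂ] E n := (mulOp n).compr₂ (mulOp n)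
  let assocRight : Lambda n →ₗ[ℂ] Lambda n →ₗ[ℂ] E n :=
    (LinearMap.mul ℂ (E n)).compl₁₂ (mulOp n) (mulOp n)
  have h : assocLeft = assocRight := lambda_hom_ext fun S => lambda_hom_ext fun T =>
    lambda_hom_ext fun U => mulOp_mulOp_mono S T U
  exact LinearMap.congr_fun₂ h f g

lemma mulOp_mulX (i : Fin n) (f : Lambda n) : mulOp n (mulX i f) = mulX i * mulOp n f :=
  mulOp_mulOp _ _

lemma mem_of_forall_mono_mem (V : Submodule ℂ (Lambda n)) (h : ∀ S, mono n S ∈ V) (f : Lambda n) :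
    f ∈ V := by
  rw [eq_sum_smul_mono f]
  exact V.sum_mem fun S _ => V.smul_mem _ (h S)

lemma mem_of_mulX_mem (V : Submodule ℂ (Lambda n)) (hone : mono n ∅ ∈ V)
    (hmul : ∀ j, ∀ f ∈ V, mulX j f ∈ V) (f : Lambda n) : f ∈ V := by
  refine mem_of_forall_mono_mem V (fun S => ?_) f
  induction S using Finset.induction_on with
  | empty => exact hone
  | insert a S ha ih =>
    have h := hmul a _ ih
    rw [mulX_mono, if_neg ha] at h
    exact (V.smul_mem_iff (msign_ne_zero _)).1 h

end ExteriorProduct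

section CanonicalAnticommutation
variable {n : ℕ} {i j : Fin n}

lemma pd_mono_empty (i : Fin n) : pd n i (mono n ∅) = 0 := by simp [pd_mono]

lemma pd_mono_singleton (i k : Fin n) :
    pd n i (mono n {k}) = if i = k then mono n ∅ else 0 := by
  rw [pd_mono]
  by_cases h : i = k
  · subst h
    simp [numBelow, Finset.filter_singleton]
  · simp [h]

lemma pd_mulX_self (i : Fin n) (f : Lambda n) : pd n i (mulX i f) = f - mulX i (pd n i f) := by
  suffices h : pd n i * mulX i = 1 - mulX i * pd n i from LinearMap.congr_fun h f
  rw [eq_sub_iff_add_eq]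
  refine lambda_hom_ext fun S => ?_
  simp only [LinearMap.add_apply, Module.End.mul_apply, mulX_mono, pd_mono, Module.End.one_apply]
  by_cases h : i ∈ S
  · simp [h, mulX_mono, numBelow_erase_self, smul_smul, msign_mul_self]
  · simp [h, pd_mono, numBelow_insert_self, smul_smul, msign_mul_self]

lemma msign_numBelow_mul_comm {S : Finset (Fin n)} (hij : i ≠ j) (hi : i ∉ S) (hj : j ∉ S) :
    msign (numBelow i S) * msign (numBelow j (insert i S)) =
      -(msign (numBelow j S) * msign (numBelow i (insert j S))) := by
  rw [msign_numBelow_insert _ hi, msign_numBelow_insert _ hj]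
  rcases lt_or_gt_of_ne hij with h | h <;> simp only [h, h.not_gt, if_true, if_false] <;> ring

lemma pd_mulX_of_ne (hij : i ≠ j) (f : Lambda n) : pd n i (mulX j f) = -mulX j (pd n i f) := by
  suffices h : pd n i * mulX j = -(mulX j * pd n i) from LinearMap.congr_fun h f
  rw [eq_neg_iff_add_eq_zero]
  refine lambda_hom_ext fun S => ?_
  simp only [LinearMap.add_apply, Module.End.mul_apply, mulX_mono, pd_mono, LinearMap.zero_apply]
  by_cases hj : j ∈ S
  · by_cases hi : i ∈ S <;> simp [hi, hj, mulX_mono, hij.symm]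
  by_cases hi : i ∈ S
  · obtain ⟨T, hiT, rfl⟩ : ∃ T, i ∉ T ∧ insert i T = S :=
      ⟨S.erase i, Finset.notMem_erase i S, Finset.insert_erase hi⟩
    have hjT : j ∉ T := fun h => hj (Finset.mem_insert_of_mem h)
    simp only [hj, hi, if_true, if_false, map_smul, mulX_mono, pd_mono, Finset.erase_insert hiT,
      hjT, Finset.mem_insert_of_mem hi, Finset.erase_insert_of_ne hij.symm, smul_smul,
      numBelow_insert_self]
    rw [← add_smul, Finset.insert_comm, numBelow_insert_self, msign_numBelow_insert i hjT,
      msign_numBelow_insert j hiT]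
    convert zero_smul ℂ _
    rcases lt_or_gt_of_ne hij with h | h <;> simp only [h, h.not_gt, if_true, if_false] <;> ring
  · simp [hi, hj, pd_mono, hij]

lemma pd_pd_self (i : Fin n) (f : Lambda n) : pd n i (pd n i f) = 0 := by
  funext S
  simp [pd_apply]

lemma pd_pd (i j : Fin n) (f : Lambda n) : pd n i (pd n j f) = -pd n j (pd n i f) := by
  by_cases hij : i = j
  · subst hij
    rw [pd_pd_self, neg_zero]
  funext S
  by_cases hi : i ∈ S
  · simp [pd_apply, hi]
  by_cases hj : j ∈ S
  · simp [pd_apply, hj]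
  simp only [Pi.neg_apply, pd_apply, hi, hj, if_false, Finset.mem_insert, hij, Ne.symm hij,
    or_self, ← mul_assoc, Finset.insert_comm i j, msign_numBelow_mul_comm hij hi hj, neg_mul]

end CanonicalAnticommutation

section Witt
variable {n : ℕ} {p q r : ZMod 2} {D D' : E n}

lemma parConj_mulOp (f : Lambda n) : parConj (mulOp n f) = mulOp n (par n f) := by
  suffices h : parConj ∘ₗ mulOp n = mulOp n ∘ₗ par n from LinearMap.congr_fun h f
  refine lambda_hom_ext fun S => lambda_hom_ext fun T => ?_
  simp only [LinearMap.comp_apply, parConj_apply_apply, par_mono, map_smul,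
    LinearMap.smul_apply, mulOp_mono_mono]
  split_ifs with h
  · rw [map_smul, par_mono, Finset.card_union_of_disjoint h, msign_add]
    simp only [smul_smul]
    congr 1
    linear_combination (msign (inversions n S T) * msign S.card) * msign_mul_self T.card
  · simp

lemma mulOp_mem_epar {f : Lambda n} (h : f ∈ lpar n p) : mulOp n f ∈ epar n p := by
  rw [mem_epar_iff, parConj_mulOp, mem_lpar_iff.1 h, map_smul]

lemma mulX_mem_epar (i : Fin n) : mulX i ∈ epar n 1 := by
  have h := mulOp_mem_epar (mono_mem_lpar {i})
  rwa [Finset.card_singleton, Nat.cast_one] at h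

lemma pd_mem_epar (i : Fin n) : pd n i ∈ epar n 1 := by
  rw [mem_epar_iff]
  refine endo_ext fun S T => ?_
  simp only [parConj_apply_apply, par_apply, pd_apply, LinearMap.smul_apply, Pi.smul_apply,
    sgn_one, smul_eq_mul]
  split_ifs with h
  · simp
  · rw [Finset.card_insert_of_notMem h, msign_add, msign_one]
    linear_combination (-msign (numBelow i T) * mono n S (insert i T)) * msign_mul_self T.card

lemma par_pd (i : Fin n) (f : Lambda n) : par n (pd n i f) = -pd n i (par n f) := by
  rw [← parConj_apply_par, mem_epar_iff.1 (pd_mem_epar i), sgn_one]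
  simp

lemma par_mulX (i : Fin n) (f : Lambda n) : par n (mulX i f) = -mulX i (par n f) := by
  rw [← parConj_apply_par, mem_epar_iff.1 (mulX_mem_epar i), sgn_one]
  simp

lemma pd_mulOp (i : Fin n) (f g : Lambda n) :
    pd n i (mulOp n f g) = mulOp n (pd n i f) g + mulOp n (par n f) (pd n i g) := by
  suffices h : f ∈ LinearMap.eqLocus (pd n i ∘ₗ (mulOp n).flip g)
      ((mulOp n).flip g ∘ₗ pd n i + (mulOp n).flip (pd n i g) ∘ₗ par n) by
    simpa using h
  refine mem_of_mulX_mem _ ?_ (fun j f hf => ?_) f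
  · simp [mulOp_mono_empty, pd_mono_empty, par_mono]
  · have hf' : pd n i (mulOp n f g) = mulOp n (pd n i f) g + mulOp n (par n f) (pd n i g) := by
      simpa using hf
    suffices h : pd n i (mulOp n (mulX j f) g) =
        mulOp n (pd n i (mulX j f)) g + mulOp n (par n (mulX j f)) (pd n i g) by simpa using h
    rw [par_mulX, mulOp_mulX, Module.End.mul_apply, map_neg, mulOp_mulX]
    by_cases hij : i = j
    · subst hij
      rw [pd_mulX_self, pd_mulX_self, hf', map_sub, mulOp_mulX]
      simp only [map_add, LinearMap.sub_apply, LinearMap.neg_apply, Module.End.mul_apply]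
      abel
    · rw [pd_mulX_of_ne hij, pd_mulX_of_ne hij, hf', map_neg, mulOp_mulX]
      simp only [map_add, LinearMap.neg_apply, Module.End.mul_apply]
      abel

lemma sbL_of_odd_left (hx : D ∈ epar n 1) (y : E n) : sbL n D y = D * y - parConj y * D := by
  rw [mem_epar_iff] at hx
  rw [sbL_eq, hx, sgn_one]
  simp only [add_mul, sub_mul, mul_smul_comm]
  module

lemma sbL_of_odd_right (hy : D ∈ epar n 1) (x : E n) : sbL n x D = x * D - D * parConj x := by
  rw [mem_epar_iff] at hy
  rw [sbL_eq, hy, sgn_one]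
  simp only [add_mul, sub_mul, smul_mul_assoc]
  module

lemma sbL_pd_mulOp (i : Fin n) (f : Lambda n) :
    sbL n (pd n i) (mulOp n f) = mulOp n (pd n i f) := by
  rw [sbL_of_odd_left (pd_mem_epar i), parConj_mulOp, sub_eq_iff_eq_add]
  exact LinearMap.ext fun g => pd_mulOp i f g

lemma mulOp_mono_comm (S T : Finset (Fin n)) : mulOp n (mono n S) (mono n T) =
    msign (S.card * T.card) • mulOp n (mono n T) (mono n S) := by
  rw [mulOp_mono_mono, mulOp_mono_mono]
  by_cases h : Disjoint S T
  · rw [if_pos h, if_pos h.symm, Finset.union_comm T S, smul_smul,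
      ← inversions_add_inversions h, msign_add, mul_assoc, msign_mul_self, mul_one]
  · rw [if_neg h, if_neg fun h' => h h'.symm, smul_zero]

lemma sbL_mulOp_mulOp (f g : Lambda n) : sbL n (mulOp n f) (mulOp n g) = 0 := by
  suffices h : (sbL n).compl₁₂ (mulOp n) (mulOp n) = 0 from LinearMap.congr_fun₂ h f g
  refine lambda_hom_ext fun S => lambda_hom_ext fun T => ?_
  rw [LinearMap.compl₁₂_apply, sbL_of_mem_epar (mulOp_mem_epar (mono_mem_lpar S))
    (mulOp_mem_epar (mono_mem_lpar T)), ← mulOp_mulOp, ← mulOp_mulOp, mulOp_mono_comm S T,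
    map_smul, msign_eq_sgn, Nat.cast_mul, sub_self]
  rfl

lemma sbL_mul_left {x y z : E n} (hx : x ∈ epar n p) (hy : y ∈ epar n q) (hz : z ∈ epar n r) :
    sbL n (x * y) z = x * sbL n y z + sgn (q * r) • (sbL n x z * y) := by
  rw [sbL_of_mem_epar (mul_mem_epar hx hy) hz, sbL_of_mem_epar hy hz, sbL_of_mem_epar hx hz,
    add_mul, sgn_add]
  simp only [mul_sub, sub_mul, smul_sub, smul_mul_assoc, mul_smul_comm, smul_smul, mul_assoc]
  rw [mul_comm (sgn (p * r))]
  module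

lemma Wmap_apply (F : Fin n → Lambda n) : Wmap n F = ∑ i, mulOp n (F i) * pd n i := rfl

lemma Wn_le (V : Submodule ℂ (E n)) (h : ∀ S i, mulOp n (mono n S) * pd n i ∈ V) : Wn n ≤ V := by
  rintro _ ⟨F, rfl⟩
  rw [Wmap_apply]
  exact Submodule.sum_mem _ fun i _ => mem_of_forall_mono_mem
    (V.comap (LinearMap.mulRight ℂ (pd n i) ∘ₗ mulOp n)) (fun S => h S i) (F i)

lemma Wmap_single (i : Fin n) (f : Lambda n) : Wmap n (Pi.single i f) = mulOp n f * pd n i := by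
  rw [Wmap_apply, Finset.sum_eq_single_of_mem i (Finset.mem_univ i), Pi.single_eq_same]
  intro j _ hj
  rw [Pi.single_eq_of_ne hj, map_zero, zero_mul]

lemma mulOp_mul_pd_mem_Wn (f : Lambda n) (i : Fin n) : mulOp n f * pd n i ∈ Wn n :=
  ⟨Pi.single i f, Wmap_single i f⟩

lemma mulOp_mono_mul_pd_mem_epar (S : Finset (Fin n)) (i : Fin n) :
    mulOp n (mono n S) * pd n i ∈ epar n (S.card + 1) :=
  mul_mem_epar (mulOp_mem_epar (mono_mem_lpar S)) (pd_mem_epar i)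

lemma sbL_mulOp_of_mem_Wn (hD : D ∈ Wn n) (f : Lambda n) : sbL n D (mulOp n f) = mulOp n (D f) := by
  suffices h : sbL n D ∘ₗ mulOp n = mulOp n ∘ₗ D from LinearMap.congr_fun h f
  refine lambda_hom_ext fun T => ?_
  refine Wn_le (LinearMap.eqLocus ((sbL n).flip (mulOp n (mono n T)))
    (mulOp n ∘ₗ LinearMap.applyₗ (mono n T))) (fun S i => ?_) hD
  rw [LinearMap.mem_eqLocus, LinearMap.flip_apply, LinearMap.comp_apply,
    LinearMap.applyₗ_apply_apply, Module.End.mul_apply, mulOp_mulOp,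
    sbL_mul_left (mulOp_mem_epar (mono_mem_lpar S)) (pd_mem_epar i)
      (mulOp_mem_epar (mono_mem_lpar T)), sbL_mulOp_mulOp, sbL_pd_mulOp, zero_mul]
  simp

lemma Wmap_mono_singleton (F : Fin n → Lambda n) (k : Fin n) : Wmap n F (mono n {k}) = F k := by
  rw [Wmap_apply, LinearMap.sum_apply, Finset.sum_eq_single_of_mem k (Finset.mem_univ k)]
  · simp [pd_mono_singleton, mulOp_apply_mono_empty]
  · intro i _ hi
    simp [pd_mono_singleton, hi]

lemma eq_of_mem_Wn (h : D ∈ Wn n) (h' : D' ∈ Wn n)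
    (heq : ∀ k, D (mono n {k}) = D' (mono n {k})) : D = D' := by
  obtain ⟨F, rfl⟩ := h
  obtain ⟨F', rfl⟩ := h'
  congr 1
  funext k
  simpa only [Wmap_mono_singleton] using heq k

lemma eq_zero_of_sbL_mulOp (hx : ∀ k, D (mono n {k}) = 0)
    (h : ∀ f, sbL n D (mulOp n f) = mulOp n (D f)) : D = 0 := by
  have hone : D (mono n ∅) = 0 := by
    have h1 := congrArg (fun F : E n => F (mono n ∅)) (h (mono n ∅))
    have heven : mulOp n (mono n ∅) ∈ epar n 0 := by simpa using mulOp_mem_epar (mono_mem_lpar ∅)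
    rw [sbL_of_even_right D heven, mulOp_mono_empty, mul_one, one_mul, sub_self] at h1
    simpa [mulOp_apply_mono_empty] using h1.symm
  have hX (j : Fin n) : D * mulX j = mulX j * parConj D := by
    have hj := h (mono n {j})
    rwa [hx, map_zero, ← mulX, sbL_of_odd_right (mulX_mem_epar j), sub_eq_zero] at hj
  have hX' (j : Fin n) : parConj D * mulX j = mulX j * D := by
    have hj := congrArg parConj (hX j)
    rw [parConj_mul, parConj_mul, parConj_parConj, mem_epar_iff.1 (mulX_mem_epar j)] at hj
    simpa using hj
  refine LinearMap.ext fun f => ?_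
  refine (mem_of_mulX_mem (LinearMap.ker D ⊓ LinearMap.ker (parConj D)) ⟨hone, ?_⟩
    (fun j f hf => ⟨?_, ?_⟩) f).1
  · simp [parConj_apply_apply, par_mono, hone]
  · have hj := LinearMap.congr_fun (hX j) f
    simpa [LinearMap.mem_ker.1 hf.2] using hj
  · have hj := LinearMap.congr_fun (hX' j) f
    simpa [LinearMap.mem_ker.1 hf.1] using hj

/-- `D` is a superderivation of `Λ(n)` exactly when `[D, f·] = (D f)·` for all `f`. -/
lemma mem_Wn_iff : D ∈ Wn n ↔ ∀ f, sbL n D (mulOp n f) = mulOp n (D f) := by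
  refine ⟨sbL_mulOp_of_mem_Wn, fun h => ?_⟩
  have hW : Wmap n (fun k => D (mono n {k})) ∈ Wn n := ⟨_, rfl⟩
  have hD : D - Wmap n (fun k => D (mono n {k})) = 0 := by
    refine eq_zero_of_sbL_mulOp (fun k => ?_) fun f => ?_
    · rw [LinearMap.sub_apply, Wmap_mono_singleton, sub_self]
    · rw [map_sub, LinearMap.sub_apply, h, sbL_mulOp_of_mem_Wn hW, LinearMap.sub_apply, map_sub]
  rwa [sub_eq_zero.1 hD]

lemma parConj_mem_Wn (h : D ∈ Wn n) : parConj D ∈ Wn n := by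
  refine Wn_le ((Wn n).comap parConj) (fun S i => ?_) h
  rw [Submodule.mem_comap, mem_epar_iff.1 (mulOp_mono_mul_pd_mem_epar S i)]
  exact Submodule.smul_mem _ _ (mulOp_mul_pd_mem_Wn _ _)

lemma sbL_mem_of_parConj_mem {L : Submodule ℂ (E n)} (hL : ∀ x ∈ L, parConj x ∈ L)
    (h : ∀ p q, ∀ x ∈ L ⊓ epar n p, ∀ y ∈ L ⊓ epar n q, sbL n x y ∈ L)
    (hD : D ∈ L) (hD' : D' ∈ L) : sbL n D D' ∈ L := by
  have heven (x) (hx : x ∈ L) : evenPart x ∈ L ⊓ epar n 0 :=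
    ⟨L.smul_mem _ (L.add_mem hx (hL x hx)), evenPart_mem_epar x⟩
  have hodd (x) (hx : x ∈ L) : oddPart x ∈ L ⊓ epar n 1 :=
    ⟨L.smul_mem _ (L.sub_mem hx (hL x hx)), oddPart_mem_epar x⟩
  rw [← evenPart_add_oddPart D, ← evenPart_add_oddPart D']
  simp only [map_add, LinearMap.add_apply]
  exact L.add_mem
    (L.add_mem (h _ _ _ (heven D hD) _ (heven D' hD')) (h _ _ _ (hodd D hD) _ (heven D' hD')))
    (L.add_mem (h _ _ _ (heven D hD) _ (hodd D' hD')) (h _ _ _ (hodd D hD) _ (hodd D' hD')))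

lemma sbL_mem_Wn (hD : D ∈ Wn n) (hD' : D' ∈ Wn n) : sbL n D D' ∈ Wn n := by
  refine sbL_mem_of_parConj_mem (fun x => parConj_mem_Wn) ?_ hD hD'
  rintro p q x ⟨hx, hxp⟩ y ⟨hy, hyq⟩
  refine mem_Wn_iff.2 fun f => ?_
  rw [jacobi hxp hyq, sbL_mulOp_of_mem_Wn hy, sbL_mulOp_of_mem_Wn hx, sbL_mulOp_of_mem_Wn hx,
    sbL_mulOp_of_mem_Wn hy, sbL_of_mem_epar hxp hyq]
  simp

section WittTorus
variable {A : Submodule ℂ (Fin n → ℂ)}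

lemma mulOp_mono_mul_pd_mem_weightSpace (S : Finset (Fin n)) (i : Fin n) :
    mulOp n (mono n S) * pd n i ∈ weightSpace A (monoWeight A S - monoWeight A {i}) := by
  rw [mem_weightSpace_iff]
  intro T U h
  rw [Module.End.mul_apply, pd_mono] at h
  split_ifs at h with hi
  · rw [map_smul, mulOp_mono_mono] at h
    split_ifs at h with hd
    · obtain rfl : U = S ∪ T.erase i := by
        by_contra hU
        simp [mono_of_ne hU] at h
      ext a
      simp only [monoWeight_apply, LinearMap.add_apply, LinearMap.sub_apply,
        Finset.sum_union hd, Finset.sum_singleton]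
      rw [← Finset.add_sum_erase _ _ hi]
      ring
    · simp at h
  · simp at h

lemma weightProj_mem_Wn (μ : Module.Dual ℂ A) (h : D ∈ Wn n) : weightProj μ D ∈ Wn n := by
  refine Wn_le ((Wn n).comap (weightProj μ)) (fun S i => ?_) h
  have hwt := mulOp_mono_mul_pd_mem_weightSpace (A := A) S i
  rw [Submodule.mem_comap]
  by_cases hμ : μ = monoWeight A S - monoWeight A {i}
  · rw [hμ, weightProj_of_mem hwt]
    exact mulOp_mul_pd_mem_Wn _ _
  · rw [weightProj_of_mem_of_ne hwt hμ]
    exact Submodule.zero_mem _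

lemma mulX_mul_pd_mono (i : Fin n) (S : Finset (Fin n)) :
    (mulX i * pd n i) (mono n S) = if i ∈ S then mono n S else 0 := by
  rw [Module.End.mul_apply, pd_mono]
  split_ifs with h
  · rw [map_smul, mulX_mono, if_neg (Finset.notMem_erase i S), numBelow_erase_self, smul_smul,
      msign_mul_self, one_smul, Finset.insert_erase h]
  · rw [map_zero]

lemma diagOp_eq_sum (a : Fin n → ℂ) : diagOp a = ∑ i, a i • (mulX i * pd n i) := by
  refine lambda_hom_ext fun S => ?_
  simp only [diagOp_mono, LinearMap.sum_apply, LinearMap.smul_apply, mulX_mul_pd_mono, smul_ite,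
    smul_zero, ← Finset.sum_filter, Finset.sum_smul, Finset.filter_univ_mem]

lemma diagOp_mem_Wn (a : Fin n → ℂ) : diagOp a ∈ Wn n := by
  rw [diagOp_eq_sum]
  exact Submodule.sum_mem _ fun i _ => Submodule.smul_mem _ _ (mulOp_mul_pd_mem_Wn _ _)

end WittTorus

end Witt

section Divergence
variable {n : ℕ}

lemma pd_apply_univ (i : Fin n) (f : Lambda n) : pd n i f Finset.univ = 0 := by simp [pd_apply]

lemma mulOp_apply_empty (g f : Lambda n) : mulOp n g f ∅ = g ∅ * f ∅ := by
  simp [mulOp_apply, inversions]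

/-- Integration by parts, the top coefficient being the Berezin integral. -/
lemma mulOp_pd_apply_univ (i : Fin n) (g f : Lambda n) :
    mulOp n g (pd n i f) Finset.univ = mulOp n (par n (pd n i g)) f Finset.univ := by
  have h := congrFun (pd_mulOp i (par n g) f) Finset.univ
  rw [pd_apply_univ, Pi.add_apply, par_par] at h
  rw [par_pd, map_neg, LinearMap.neg_apply, Pi.neg_apply]
  linear_combination -h

lemma eq_zero_of_mulOp_apply_univ {g : Lambda n} (h : ∀ f, mulOp n g f Finset.univ = 0) :
    g = 0 := by
  funext S
  have hS := h (mono n Sᶜ)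
  rw [mulOp_apply, Finset.sum_eq_single_of_mem S (by simp)] at hS
  · simpa [← Finset.compl_eq_univ_sdiff, msign_ne_zero] using hS
  · intro R _ hR
    rw [← Finset.compl_eq_univ_sdiff, mono_of_ne (compl_injective.ne hR), mul_zero]

lemma Wmap_apply_apply (F : Fin n → Lambda n) (f : Lambda n) :
    Wmap n F f = ∑ i, mulOp n (F i) (pd n i f) := by
  simp [Wmap_apply]

lemma Wmap_apply_univ (F : Fin n → Lambda n) (f : Lambda n) :
    Wmap n F f Finset.univ = mulOp n (par n (divMap n F)) f Finset.univ := by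
  have hdiv : divMap n F = ∑ i, pd n i (F i) := rfl
  simp only [Wmap_apply_apply, Finset.sum_apply, mulOp_pd_apply_univ, hdiv, map_sum,
    LinearMap.sum_apply]

lemma mem_divFree_iff {F : Fin n → Lambda n} :
    F ∈ divFree n ↔ ∀ f, Wmap n F f Finset.univ = 0 := by
  constructor
  · intro h f
    rw [Wmap_apply_univ, LinearMap.mem_ker.1 h]
    simp
  · intro h
    have hpar := eq_zero_of_mulOp_apply_univ fun f => (Wmap_apply_univ F f).symm.trans (h f)
    rw [divFree, LinearMap.mem_ker, ← par_par (divMap n F), hpar, map_zero]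

lemma mulOp_omegaTop (f : Lambda n) : mulOp n (omegaTop n) f = f ∅ • omegaTop n := by
  suffices h : mulOp n (omegaTop n) =
      (LinearMap.proj ∅ : Lambda n →ₗ[ℂ] ℂ).smulRight (omegaTop n) from LinearMap.congr_fun h f
  refine lambda_hom_ext fun S => ?_
  rw [omegaTop, mulOp_mono_mono]
  rcases S.eq_empty_or_nonempty with rfl | hS
  · simp [inversions]
  · have hdisj : ¬ Disjoint Finset.univ S := fun h =>
      Finset.disjoint_left.1 h (Finset.mem_univ _) hS.choose_spec
    simp [hdisj, mono_of_ne hS.ne_empty.symm]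

lemma mulOp_oneM (g : Lambda n) : mulOp n (oneM n) g = g - g ∅ • omegaTop n := by
  rw [oneM, map_sub, mulOp_mono_empty, LinearMap.sub_apply, mulOp_omegaTop]
  rfl

lemma omegaTop_univ : omegaTop n Finset.univ = 1 := mono_self _

lemma omegaTop_empty (hn : 0 < n) : omegaTop n ∅ = 0 :=
  haveI := Fin.pos_iff_nonempty.1 hn
  mono_of_ne Finset.univ_nonempty.ne_empty.symm

lemma Wmap_add_smul_omegaTop (G : Fin n → Lambda n) (c : ℂ) (f : Lambda n) :
    Wmap n (fun i => G i + (c * G i ∅) • omegaTop n) f =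
      Wmap n G f + (c * Wmap n G f ∅) • omegaTop n := by
  simp only [Wmap_apply_apply, Finset.sum_apply, map_add, map_smul, LinearMap.add_apply,
    LinearMap.smul_apply, mulOp_omegaTop, mulOp_apply_empty, Finset.sum_add_distrib,
    Finset.mul_sum, Finset.sum_smul, smul_smul, mul_assoc]

lemma oneMScale_eq (G : Fin n → Lambda n) :
    oneMScale n G = fun i => G i + (-1 * G i ∅) • omegaTop n := by
  funext i
  rw [oneMScale, LinearMap.pi_apply, LinearMap.comp_apply, LinearMap.proj_apply, mulOp_oneM]
  module

lemma mem_Sn_iff {D : E n} : D ∈ Sn n ↔ D ∈ Wn n ∧ ∀ f, D f Finset.univ = 0 := by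
  constructor
  · rintro ⟨F, hF, rfl⟩
    exact ⟨⟨F, rfl⟩, mem_divFree_iff.1 hF⟩
  · rintro ⟨⟨F, rfl⟩, h⟩
    exact ⟨F, mem_divFree_iff.2 h, rfl⟩

lemma mem_Stn_iff (hn : 0 < n) {D : E n} :
    D ∈ Stn n ↔ D ∈ Wn n ∧ ∀ f, D f Finset.univ + D f ∅ = 0 := by
  constructor
  · rintro ⟨G, hG, rfl⟩
    refine ⟨⟨_, rfl⟩, fun f => ?_⟩
    rw [LinearMap.comp_apply, oneMScale_eq, Wmap_add_smul_omegaTop]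
    simp [mem_divFree_iff.1 hG f, omegaTop_univ, omegaTop_empty hn]
  · rintro ⟨⟨F, rfl⟩, h⟩
    refine ⟨fun i => F i + (1 * F i ∅) • omegaTop n, mem_divFree_iff.2 fun f => ?_, ?_⟩
    · rw [Wmap_add_smul_omegaTop]
      simpa [omegaTop_univ] using h f
    · rw [LinearMap.comp_apply, oneMScale_eq]
      congr 1
      funext i
      simp only [Pi.add_apply, Pi.smul_apply, omegaTop_empty hn, smul_eq_mul, mul_zero, add_zero]
      module

end Divergence

section SpecialWitt
variable {n : ℕ}

variable (n) in
/-- The elements `D` of `W(n)` for which `s` times the top coefficient plus `t` times the constant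
coefficient of `D f` vanishes for all `f`. The parameters `(s, t) = (0, 0), (1, 0), (1, 1)` give
`W(n)`, `S(n)`, `S̃(n)`. -/
def specialWitt (s t : ℂ) : Submodule ℂ (E n) where
  carrier := {D | D ∈ Wn n ∧ ∀ f, s * D f Finset.univ + t * D f ∅ = 0}
  add_mem' := by
    rintro D D' ⟨hD, h⟩ ⟨hD', h'⟩
    refine ⟨Submodule.add_mem _ hD hD', fun f => ?_⟩
    simp only [LinearMap.add_apply, Pi.add_apply]
    linear_combination h f + h' f
  zero_mem' := ⟨Submodule.zero_mem _, fun f => by simp⟩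
  smul_mem' := by
    rintro c D ⟨hD, h⟩
    refine ⟨Submodule.smul_mem _ _ hD, fun f => ?_⟩
    simp only [LinearMap.smul_apply, Pi.smul_apply, smul_eq_mul]
    linear_combination c * h f

lemma Wn_eq_specialWitt : Wn n = specialWitt n 0 0 := by
  ext D
  simp [specialWitt]

lemma Sn_eq_specialWitt : Sn n = specialWitt n 1 0 := by
  ext D
  simp [specialWitt, mem_Sn_iff]

lemma Stn_eq_specialWitt (hn : 0 < n) : Stn n = specialWitt n 1 1 := by
  ext D
  simp [specialWitt, mem_Stn_iff hn]

variable (n) in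
/-- The vectors with coordinate sum zero. -/
def sumZero : Submodule ℂ (Fin n → ℂ) := LinearMap.ker (∑ i, LinearMap.proj i)

lemma mem_sumZero_iff {a : Fin n → ℂ} : a ∈ sumZero n ↔ ∑ i, a i = 0 := by
  simp [sumZero]

variable {s t : ℂ} {D D' : E n}

lemma mem_specialWitt_iff_forall_mono : D ∈ specialWitt n s t ↔
    D ∈ Wn n ∧ ∀ S, s * D (mono n S) Finset.univ + t * D (mono n S) ∅ = 0 := by
  refine and_congr_right fun _ => ⟨fun h S => h _, fun h f => ?_⟩
  rw [apply_eq_sum_mul D f, apply_eq_sum_mul D f, Finset.mul_sum, Finset.mul_sum,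
    ← Finset.sum_add_distrib]
  exact Finset.sum_eq_zero fun S _ => by linear_combination f S * h S

lemma parConj_mem_specialWitt (ht : t = 0 ∨ Even n) (h : D ∈ specialWitt n s t) :
    parConj D ∈ specialWitt n s t := by
  refine ⟨parConj_mem_Wn h.1, fun f => ?_⟩
  have hf := h.2 (par n f)
  rw [parConj_apply_apply, par_apply, par_apply, Finset.card_empty, msign_zero, Finset.card_univ,
    Fintype.card_fin]
  rcases ht with rfl | hn
  · linear_combination msign n * hf
  · rw [msign, hn.neg_one_pow]
    linear_combination hf

lemma sbL_mem_specialWitt (ht : t = 0 ∨ Even n) (hD : D ∈ specialWitt n s t)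
    (hD' : D' ∈ specialWitt n s t) : sbL n D D' ∈ specialWitt n s t := by
  refine sbL_mem_of_parConj_mem (fun x => parConj_mem_specialWitt ht) ?_ hD hD'
  rintro p q x ⟨hx, hxp⟩ y ⟨hy, hyq⟩
  refine ⟨sbL_mem_Wn hx.1 hy.1, fun f => ?_⟩
  rw [sbL_of_mem_epar hxp hyq]
  simp only [LinearMap.sub_apply, LinearMap.smul_apply, Module.End.mul_apply, Pi.sub_apply,
    Pi.smul_apply, smul_eq_mul]
  linear_combination hx.2 (y f) - sgn (p * q) * hy.2 (x f)

lemma weightProj_mem_specialWitt (μ : Module.Dual ℂ (sumZero n)) (h : D ∈ specialWitt n s t) :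
    weightProj μ D ∈ specialWitt n s t := by
  have hwt : monoWeight (sumZero n) Finset.univ = monoWeight (sumZero n) ∅ := by
    ext a
    simp [mem_sumZero_iff.1 a.2]
  classical
  rw [mem_specialWitt_iff_forall_mono] at h ⊢
  refine ⟨weightProj_mem_Wn μ h.1, fun S => ?_⟩
  rw [weightProj_apply_mono, weightProj_apply_mono, hwt]
  split_ifs
  · exact h.2 S
  · simp

lemma diagOp_mem_specialWitt {a : Fin n → ℂ} (ha : a ∈ sumZero n) :
    diagOp a ∈ specialWitt n s t := by
  refine ⟨diagOp_mem_Wn a, fun f => ?_⟩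
  rw [diagOp_apply, diagOp_apply, mem_sumZero_iff.1 ha]
  simp

lemma isToral_specialWitt (ht : t = 0 ∨ Even n) : IsToral (specialWitt n s t) (sumZero n) where
  sbL_mem _ hx _ hy := sbL_mem_specialWitt ht hx hy
  weightProj_mem μ _ hx := weightProj_mem_specialWitt μ hx
  parConj_mem _ hx := parConj_mem_specialWitt ht hx
  diagOp_mem _ ha := diagOp_mem_specialWitt ha

lemma mulOp_mul_pd_mem_specialWitt {g : Lambda n} {j : Fin n} (h : pd n j g = 0) (h0 : g ∅ = 0) :
    mulOp n g * pd n j ∈ specialWitt n s t := by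
  refine ⟨mulOp_mul_pd_mem_Wn _ _, fun f => ?_⟩
  rw [Module.End.mul_apply, mulOp_pd_apply_univ, mulOp_apply_empty, h, h0]
  simp

end SpecialWitt

section RootVectors
variable {n : ℕ} {i j k l m : Fin n}

/-- The matrix unit `xᵢ∂ⱼ` of `W(n)₀ = 𝔤𝔩(n)`. -/
def matUnit (i j : Fin n) : E n := mulX i * pd n j

/-- The element `xᵢxⱼ∂ₖ` of `W(n)₁`. -/
def quadVec (i j k : Fin n) : E n := mulX i * mulX j * pd n k

lemma mulX_mono_empty (i : Fin n) : mulX i (mono n ∅) = mono n {i} :=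
  mulOp_apply_mono_empty _

lemma mulX_mono_singleton (h : i ≠ j) :
    mulX i (mono n {j}) = msign (numBelow i {j}) • mono n {i, j} := by
  rw [mulX_mono, if_neg (by simpa using h)]

lemma pd_mulX_mono_singleton (hi : l ≠ i) (hj : l ≠ j) : pd n l (mulX i (mono n {j})) = 0 := by
  rw [pd_mulX_of_ne hi, pd_mono_singleton, if_neg hj, map_zero, neg_zero]

lemma matUnit_mono_singleton (i j m : Fin n) :
    matUnit i j (mono n {m}) = if j = m then mono n {i} else 0 := by
  rw [matUnit, Module.End.mul_apply, pd_mono_singleton]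
  split_ifs
  · exact mulX_mono_empty i
  · exact map_zero _

lemma quadVec_mono_singleton (i j k m : Fin n) :
    quadVec i j k (mono n {m}) = if k = m then mulX i (mono n {j}) else 0 := by
  rw [quadVec, Module.End.mul_apply, pd_mono_singleton]
  split_ifs
  · rw [Module.End.mul_apply, mulX_mono_empty]
  · exact map_zero _

lemma quadVec_eq (i j k : Fin n) : quadVec i j k = mulOp n (mulX i (mono n {j})) * pd n k := by
  rw [quadVec, mulOp_mulX, ← mulX]

lemma matUnit_ne_zero (i j : Fin n) : matUnit i j ≠ 0 := fun h => by
  simpa [matUnit_mono_singleton] using congrFun (LinearMap.congr_fun h (mono n {j})) {i}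

lemma matUnit_mem_Wn (i j : Fin n) : matUnit i j ∈ Wn n := mulOp_mul_pd_mem_Wn _ _

lemma quadVec_mem_Wn (i j k : Fin n) : quadVec i j k ∈ Wn n := by
  rw [quadVec_eq]
  exact mulOp_mul_pd_mem_Wn _ _

lemma matUnit_mem_epar (i j : Fin n) : matUnit i j ∈ epar n 0 := by
  have h := mul_mem_epar (mulX_mem_epar i) (pd_mem_epar j)
  rwa [show (1 + 1 : ZMod 2) = 0 by decide] at h

lemma quadVec_mem_epar (i j k : Fin n) : quadVec i j k ∈ epar n 1 := by
  have h := mul_mem_epar (mul_mem_epar (mulX_mem_epar i) (mulX_mem_epar j)) (pd_mem_epar k)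
  rwa [show (1 + 1 + 1 : ZMod 2) = 1 by decide] at h

lemma sbL_matUnit_matUnit (hij : i ≠ j) (k : Fin n) :
    sbL n (matUnit i k) (matUnit k j) = matUnit i j := by
  refine eq_of_mem_Wn (sbL_mem_Wn (matUnit_mem_Wn _ _) (matUnit_mem_Wn _ _)) (matUnit_mem_Wn _ _)
    fun m => ?_
  rw [sbL_of_even_left (matUnit_mem_epar i k)]
  by_cases hk : k = m
  · subst hk
    rcases eq_or_ne j k with rfl | hj
    · simp [matUnit_mono_singleton, hij.symm]
    · simp [matUnit_mono_singleton, hj, hij.symm]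
  · by_cases hj : j = m <;> simp [matUnit_mono_singleton, hk, hj]

lemma sbL_quadVec_matUnit (hi : l ≠ i) (hj : l ≠ j) (k : Fin n) :
    sbL n (quadVec i j k) (matUnit k l) = quadVec i j l := by
  refine eq_of_mem_Wn (sbL_mem_Wn (quadVec_mem_Wn _ _ _) (matUnit_mem_Wn _ _))
    (quadVec_mem_Wn _ _ _) fun m => ?_
  have hzero : matUnit k l (mulX i (mono n {j})) = 0 := by
    rw [matUnit, Module.End.mul_apply, pd_mulX_mono_singleton hi hj, map_zero]
  rw [sbL_of_even_right _ (matUnit_mem_epar k l)]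
  by_cases hl : l = m <;> by_cases hk : k = m <;>
    simp_all [matUnit_mono_singleton, quadVec_mono_singleton]

section Weights
variable {A : Submodule ℂ (Fin n → ℂ)}

lemma matUnit_mem_weightSpace (i j : Fin n) :
    matUnit i j ∈ weightSpace A (coordWeight A i - coordWeight A j) := by
  have h := mulOp_mono_mul_pd_mem_weightSpace (A := A) {i} j
  rwa [monoWeight, monoWeight, Finset.sum_singleton, Finset.sum_singleton] at h

lemma quadVec_mem_weightSpace (hij : i ≠ j) (k : Fin n) :
    quadVec i j k ∈ weightSpace A (coordWeight A i + coordWeight A j - coordWeight A k) := by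
  rw [quadVec_eq, mulX_mono_singleton hij, map_smul, smul_mul_assoc]
  refine Submodule.smul_mem _ _ ?_
  simpa [monoWeight, Finset.sum_pair hij] using mulOp_mono_mul_pd_mem_weightSpace (A := A) {i, j} k

end Weights

variable {s t : ℂ}

lemma matUnit_mem_homComp (hij : i ≠ j) : matUnit i j ∈
    homComp (specialWitt n s t) (sumZero n) (coordWeight _ i - coordWeight _ j) 0 :=
  ⟨⟨mulOp_mul_pd_mem_specialWitt (by rw [pd_mono_singleton, if_neg hij.symm])
    (mono_of_ne (Finset.singleton_ne_empty i).symm), matUnit_mem_epar i j⟩,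
    matUnit_mem_weightSpace i j⟩

lemma quadVec_mem_homComp (hij : i ≠ j) (hki : k ≠ i) (hkj : k ≠ j) : quadVec i j k ∈
    homComp (specialWitt n s t) (sumZero n)
      (coordWeight _ i + coordWeight _ j - coordWeight _ k) 1 := by
  refine ⟨⟨?_, quadVec_mem_epar i j k⟩, quadVec_mem_weightSpace hij k⟩
  rw [quadVec_eq]
  refine mulOp_mul_pd_mem_specialWitt (pd_mulX_mono_singleton hki hkj) ?_
  rw [mulX, mulOp_apply_empty, mono_of_ne (Finset.singleton_ne_empty i).symm, zero_mul]

lemma pd_eq_zero_apply {g : Lambda n} (h : pd n j g = 0) {S : Finset (Fin n)} (hS : j ∈ S) :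
    g S = 0 := by
  have hj := congrFun h (S.erase j)
  rw [pd_apply] at hj
  simpa [Finset.insert_erase hS, msign_ne_zero] using hj

lemma eq_smul_mono_singleton {g : Lambda n} (h : ∀ j, j ≠ m → pd n j g = 0) (h0 : g ∅ = 0) :
    g = g {m} • mono n {m} := by
  funext S
  by_cases hS : S = {m}
  · subst hS
    simp
  rw [Pi.smul_apply, mono_of_ne hS, smul_zero]
  by_cases hj : ∃ j ∈ S, j ≠ m
  · obtain ⟨j, hjS, hjm⟩ := hj
    exact pd_eq_zero_apply (h j hjm) hjS
  · push Not at hj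
    rcases Finset.subset_singleton_iff.1 fun x hx => Finset.mem_singleton.2 (hj x hx) with rfl | hS'
    · exact h0
    · exact absurd hS' hS

section Centralizer
variable {z : E n}

lemma mulX_pd_apply_of_centralizes (h : sbL n (matUnit i j) z = 0) (f : Lambda n) :
    mulX i (pd n j (z f)) = z (matUnit i j f) := by
  rw [sbL_of_even_left (matUnit_mem_epar i j), sub_eq_zero] at h
  exact LinearMap.congr_fun h f

lemma exists_eq_diagOp_of_centralizes [Nontrivial (Fin n)] (hz : z ∈ Wn n)
    (h : ∀ i j, i ≠ j → sbL n (matUnit i j) z = 0) : ∃ b : ℂ, z = diagOp fun _ => b := by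
  have hmove : ∀ m j, m ≠ j → z (mono n {m}) = mulX m (pd n j (z (mono n {j}))) := fun m j hmj => by
    rw [mulX_pd_apply_of_centralizes (h m j hmj), matUnit_mono_singleton, if_pos rfl]
  have heigen : ∀ m, z (mono n {m}) = z (mono n {m}) {m} • mono n {m} := fun m => by
    refine eq_smul_mono_singleton (fun j hj => ?_) ?_
    · rw [hmove m j hj.symm, pd_mulX_of_ne hj, pd_pd_self, map_zero, neg_zero]
    · obtain ⟨j, hj⟩ := exists_ne m
      rw [hmove m j hj.symm, mulX, mulOp_apply_empty,
        mono_of_ne (Finset.singleton_ne_empty m).symm, zero_mul]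
  have hconst : ∀ m j, z (mono n {m}) {m} = z (mono n {j}) {j} := fun m j => by
    rcases eq_or_ne m j with rfl | hmj
    · rfl
    · rw [hmove m j hmj, heigen j, map_smul, pd_mono_singleton, if_pos rfl, map_smul,
        mulX_mono_empty]
      simp
  obtain ⟨k⟩ : Nonempty (Fin n) := inferInstance
  refine ⟨z (mono n {k}) {k}, eq_of_mem_Wn hz (diagOp_mem_Wn _) fun m => ?_⟩
  rw [heigen m, hconst m k, diagOp_mono, Finset.sum_singleton]

lemma eq_zero_of_centralizes_quadVec [Nontrivial (Fin n)] (hz : z ∈ Wn n)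
    (h : ∀ i j, i ≠ j → sbL n (matUnit i j) z = 0) (hij : i ≠ j)
    (hq : sbL n (quadVec i j k) z = 0) : z = 0 := by
  obtain ⟨b, rfl⟩ := exists_eq_diagOp_of_centralizes hz h
  rw [sbL_of_even_right _ (diagOp_mem_epar _)] at hq
  have hcoeff := congrFun (LinearMap.congr_fun hq (mono n {k})) {i, j}
  have hb : msign (numBelow i {j}) * b = 0 := by
    simp only [LinearMap.sub_apply, Module.End.mul_apply, diagOp_mono, map_smul,
      quadVec_mono_singleton, if_true, mulX_mono_singleton hij, Finset.sum_singleton,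
      Finset.sum_pair hij, Pi.sub_apply, Pi.smul_apply, mono_self, smul_eq_mul, mul_one,
      LinearMap.zero_apply, Pi.zero_apply] at hcoeff
    linear_combination -hcoeff
  rw [(mul_eq_zero.1 hb).resolve_left (msign_ne_zero _)]
  exact endo_ext fun S T => by simp

end Centralizer

end RootVectors

section CartanWeights
variable {n : ℕ} {i j m : Fin n}

/-- The coroot `εₚ* - ε_q*` in the diagonal torus of `𝔰𝔩(n)`. -/
def coroot (p q : Fin n) : sumZero n :=
  ⟨Pi.single p 1 - Pi.single q 1, mem_sumZero_iff.2 (by simp)⟩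

lemma coroot_apply (p q i : Fin n) : (coroot p q : Fin n → ℂ) i =
    (if i = p then 1 else 0) - (if i = q then 1 else 0) := by
  simp [coroot, Pi.single_apply]

lemma eq_singleton_of_monoWeight {S : Finset (Fin n)} (hij : i ≠ j)
    (h : monoWeight (sumZero n) S =
      monoWeight (sumZero n) {m} + (coordWeight _ i - coordWeight _ j)) : m = j ∧ S = {i} := by
  have hv : ∀ p q : Fin n, ((if p ∈ S then (1 : ℂ) else 0) - if q ∈ S then 1 else 0) =
      (if m = p then 1 else 0) - (if m = q then 1 else 0) +
        (((if i = p then 1 else 0) - (if i = q then 1 else 0)) -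
          ((if j = p then 1 else 0) - (if j = q then 1 else 0))) := fun p q => by
    simpa [coroot_apply, Finset.sum_sub_distrib, eq_comm (a := m)]
      using LinearMap.congr_fun h (coroot p q)
  have hvij := hv i j
  simp only [if_true, if_neg hij, if_neg hij.symm] at hvij
  have hmj : m = j := by
    by_contra hmj
    rw [if_neg hmj] at hvij
    split_ifs at hvij <;> norm_num at hvij
  subst hmj
  rw [if_neg hij.symm, if_pos rfl] at hvij
  have hmem : i ∈ S ∧ m ∉ S := by
    split_ifs at hvij with hi hm hm
    · norm_num at hvij
    · exact ⟨hi, hm⟩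
    · norm_num at hvij
    · norm_num at hvij
  refine ⟨rfl, Finset.eq_singleton_iff_unique_mem.2 ⟨hmem.1, fun q hq => ?_⟩⟩
  by_contra hqi
  have hmq : m ≠ q := fun hmq => hmem.2 (hmq ▸ hq)
  have hviq := hv i q
  simp [hmem.1, hq, hmq, hij.symm, Ne.symm hqi] at hviq

lemma exists_eq_smul_matUnit {z : E n} (hz : z ∈ Wn n) (hij : i ≠ j)
    (h : z ∈ weightSpace (sumZero n) (coordWeight _ i - coordWeight _ j)) :
    ∃ c : ℂ, z = c • matUnit i j := by
  refine ⟨z (mono n {j}) {i}, eq_of_mem_Wn hz (Submodule.smul_mem _ _ (matUnit_mem_Wn _ _))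
    fun m => ?_⟩
  funext S
  rw [LinearMap.smul_apply, matUnit_mono_singleton]
  by_cases hne : j = m ∧ S = {i}
  · obtain ⟨rfl, rfl⟩ := hne
    simp
  · have hzero : z (mono n {m}) S = 0 := by
      by_contra hzS
      obtain ⟨rfl, rfl⟩ := eq_singleton_of_monoWeight hij (mem_weightSpace_iff.1 h _ _ hzS)
      exact hne ⟨rfl, rfl⟩
    rw [hzero]
    split_ifs with hjm
    · simp [mono_of_ne fun hS => hne ⟨hjm, hS⟩]
    · simp

end CartanWeights

section SpecialFrame
variable {n : ℕ} {s t : ℂ} {i j k l : Fin n}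

lemma exists_notMem_of_card_lt (S : Finset (Fin n)) (h : S.card < n) : ∃ k, k ∉ S := by
  obtain ⟨k, -, hk⟩ := Finset.exists_mem_notMem_of_card_lt_card (s := S) (t := Finset.univ)
    (by rwa [Finset.card_univ, Fintype.card_fin])
  exact ⟨k, hk⟩

lemma exists_four_distinct (hn : 4 ≤ n) : ∃ i j k l : Fin n,
    i ≠ j ∧ i ≠ k ∧ i ≠ l ∧ j ≠ k ∧ j ≠ l ∧ k ≠ l :=
  ⟨⟨0, by omega⟩, ⟨1, by omega⟩, ⟨2, by omega⟩, ⟨3, by omega⟩, by simp, by simp, by simp, by simp,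
    by simp, by simp⟩

lemma sbL_sbL_eq_zero {p q : ZMod 2} {x y z : E n} (hx : x ∈ epar n p) (hy : y ∈ epar n q)
    (hxz : sbL n x z = 0) (hyz : sbL n y z = 0) : sbL n (sbL n x y) z = 0 := by
  rw [jacobi hx hy, hxz, hyz, map_zero, map_zero, smul_zero, sub_zero]

lemma isOff_matUnit_or (ν : Module.Dual ℂ (sumZero n)) (hij : i ≠ j) (hki : k ≠ i) (hkj : k ≠ j) :
    IsOff ν (coordWeight _ i - coordWeight _ j) ∨
      IsOff ν (coordWeight _ i - coordWeight _ k) ∧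
        IsOff ν (coordWeight _ k - coordWeight _ j) := by
  rw [or_and_left]
  constructor
  · refine isOff_or_isOff (a := coroot i j + coroot k j) (b := coroot i k + coroot j k) ν ?_ ?_ ?_
      <;> simp [coroot_apply, hij, hki, hkj, hij.symm, hki.symm, hkj.symm] <;> norm_num
  · refine isOff_or_isOff (a := coroot j i + coroot k i) (b := coroot i k + coroot j k) ν ?_ ?_ ?_
      <;> simp [coroot_apply, hij, hki, hkj, hij.symm, hki.symm, hkj.symm] <;> norm_num

lemma isOff_quadVec_or (ν : Module.Dual ℂ (sumZero n)) (hij : i ≠ j) (hik : i ≠ k) (hil : i ≠ l)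
    (hjk : j ≠ k) (hjl : j ≠ l) (hkl : k ≠ l) :
    IsOff ν (coordWeight _ i + coordWeight _ j - coordWeight _ k) ∨
      IsOff ν (coordWeight _ i + coordWeight _ j - coordWeight _ l) := by
  refine isOff_or_isOff (a := coroot i k + coroot l k) (b := coroot i l + coroot k l) ν ?_ ?_ ?_
    <;> simp [coroot_apply, hik, hil, hjk, hjl, hkl, hij.symm, hik.symm, hil.symm, hkl.symm]
    <;> norm_num

lemma offSeparated_specialWitt (hn : 4 ≤ n) : OffSeparated (specialWitt n s t) (sumZero n) := by
  intro ν z hz h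
  have := Fin.nontrivial_iff_two_le.2 (show 2 ≤ n by omega)
  have hmat : ∀ i j, i ≠ j → sbL n (matUnit i j) z = 0 := fun i j hij => by
    obtain ⟨k, hki, hkj⟩ := Fin.exists_ne_and_ne_of_two_lt i j (by omega)
    rcases isOff_matUnit_or ν hij hki hkj with hoff | ⟨hoff, hoff'⟩
    · exact h _ _ hoff _ (matUnit_mem_homComp hij)
    · rw [← sbL_matUnit_matUnit hij k]
      exact sbL_sbL_eq_zero (matUnit_mem_epar _ _) (matUnit_mem_epar _ _)
        (h _ _ hoff _ (matUnit_mem_homComp hki.symm)) (h _ _ hoff' _ (matUnit_mem_homComp hkj))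
  obtain ⟨i, j, k, l, hij, hik, hil, hjk, hjl, hkl⟩ := exists_four_distinct hn
  refine eq_zero_of_centralizes_quadVec (k := k) hz.1 hmat hij ?_
  rcases isOff_quadVec_or ν hij hik hil hjk hjl hkl with hoff | hoff
  · exact h _ _ hoff _ (quadVec_mem_homComp hij hik.symm hjk.symm)
  · rw [← sbL_quadVec_matUnit hik.symm hjk.symm l]
    exact sbL_sbL_eq_zero (quadVec_mem_epar _ _ _) (matUnit_mem_epar _ _)
      (h _ _ hoff _ (quadVec_mem_homComp hij hil.symm hjl.symm)) (hmat _ _ hkl.symm)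

lemma InnerAt.smul {L : Submodule ℂ (E n)} {f : E n →ₗ[ℂ] E n →ₗ[ℂ] E n} {κ : ℂ} {y : E n}
    (h : InnerAt L f κ y) (c : ℂ) : InnerAt L f κ (c • y) := fun x hx => by
  rw [map_smul, map_smul, h x hx, smul_comm]

section Propagation
variable {pf : ZMod 2} {κ : ℂ} {f : E n →ₗ[ℂ] E n →ₗ[ℂ] E n}

lemma innerAt_matUnit_left (ht : t = 0 ∨ Even n)
    (hf : IsWeightBider (specialWitt n s t) (sumZero n) pf 0 f) (hκ : pf = 0 ∨ κ = 0)
    (hij : i ≠ j) (hkj : k ≠ j) (h : InnerAt (specialWitt n s t) f κ (matUnit i j)) :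
    InnerAt (specialWitt n s t) f κ (matUnit k j) := by
  rcases eq_or_ne k i with rfl | hki
  · exact h
  rw [← sbL_matUnit_matUnit hkj i]
  refine hf.innerAt_sbL (isToral_specialWitt ht) hκ (matUnit_mem_homComp hki)
    (matUnit_mem_homComp hij) (a := coroot k j + coroot i j) ?_ (fun h0 => ?_) ?_ h
  · simp [coroot_apply, hij, hki, hkj, hki.symm]
  · have := LinearMap.congr_fun h0 (coroot k j)
    simp [coroot_apply, hij, hkj, hki.symm] at this
  · simp [coroot_apply, hij, hij.symm, hkj.symm, hki.symm]
    norm_num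

lemma innerAt_matUnit_right (ht : t = 0 ∨ Even n)
    (hf : IsWeightBider (specialWitt n s t) (sumZero n) pf 0 f) (hκ : pf = 0 ∨ κ = 0)
    (hij : i ≠ j) (hki : k ≠ i) (h : InnerAt (specialWitt n s t) f κ (matUnit i j)) :
    InnerAt (specialWitt n s t) f κ (matUnit i k) := by
  rcases eq_or_ne k j with rfl | hkj
  · exact h
  have hik : matUnit i k = (-1 : ℂ) • sbL n (matUnit j k) (matUnit i j) := by
    rw [← sbL_matUnit_matUnit hki.symm j, sbL_skew (matUnit_mem_epar _ _) (matUnit_mem_epar _ _),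
      mul_zero, sgn_zero]
    module
  rw [hik]
  refine (hf.innerAt_sbL (isToral_specialWitt ht) hκ (matUnit_mem_homComp hkj.symm)
    (matUnit_mem_homComp hij) (a := coroot k i + coroot j i) ?_ (fun h0 => ?_) ?_ h).smul _
  · simp [coroot_apply, hij.symm, hki, hkj, hkj.symm]
  · have := LinearMap.congr_fun h0 (coroot k i)
    simp [coroot_apply, hij.symm, hki, hkj.symm] at this
  · simp [coroot_apply, hij, hij.symm, hki.symm, hkj.symm]
    norm_num

lemma innerAt_matUnit_of_innerAt_matUnit (hn : 3 ≤ n) (ht : t = 0 ∨ Even n)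
    (hf : IsWeightBider (specialWitt n s t) (sumZero n) pf 0 f) (hκ : pf = 0 ∨ κ = 0)
    (hkl : k ≠ l) (h : InnerAt (specialWitt n s t) f κ (matUnit k l)) (hij : i ≠ j) :
    InnerAt (specialWitt n s t) f κ (matUnit i j) := by
  rcases eq_or_ne i l with rfl | hil
  · obtain ⟨m, hmk, hmi⟩ := Fin.exists_ne_and_ne_of_two_lt k i (by omega)
    have hkm := innerAt_matUnit_right ht hf hκ hkl hmk h
    have him := innerAt_matUnit_left ht hf hκ hmk.symm hmi.symm hkm
    exact innerAt_matUnit_right ht hf hκ hmi.symm hij.symm him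
  · exact innerAt_matUnit_right ht hf hκ hil hij.symm (innerAt_matUnit_left ht hf hκ hkl hil h)

lemma innerAt_quadVec (ht : t = 0 ∨ Even n)
    (hf : IsWeightBider (specialWitt n s t) (sumZero n) pf 0 f) (hκ : pf = 0 ∨ κ = 0)
    (hij : i ≠ j) (hik : i ≠ k) (hil : i ≠ l) (hjk : j ≠ k) (hjl : j ≠ l) (hkl : k ≠ l)
    (h : InnerAt (specialWitt n s t) f κ (matUnit k l)) :
    InnerAt (specialWitt n s t) f κ (quadVec i j l) := by
  rw [← sbL_quadVec_matUnit hil.symm hjl.symm k]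
  refine hf.innerAt_sbL (isToral_specialWitt ht) hκ (quadVec_mem_homComp hij hik.symm hjk.symm)
    (matUnit_mem_homComp hkl) (a := coroot i l + coroot k l) ?_ (fun h0 => ?_) ?_ h
  · simp [coroot_apply, hij.symm, hik, hil, hjk, hjl, hkl, hik.symm]
  · have := LinearMap.congr_fun h0 (coroot l k)
    simp [coroot_apply, hik, hil, hjk, hjl, hkl] at this
  · simp [coroot_apply, hil.symm, hkl, hkl.symm, hik.symm]
    norm_num

end Propagation

variable (n) in
/-- The elements `xᵢ∂ⱼ` and `xᵢxⱼ∂ₖ` with distinct indices. -/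
def specialFrame : Set (E n) :=
  {e | ∃ i j, i ≠ j ∧ e = matUnit i j} ∪ {e | ∃ i j k, i ≠ j ∧ k ≠ i ∧ k ≠ j ∧ e = quadVec i j k}

lemma exists_innerAt_specialFrame (hn : 4 ≤ n) (ht : t = 0 ∨ Even n) {pf : ZMod 2}
    {f : E n →ₗ[ℂ] E n →ₗ[ℂ] E n} (hf : IsWeightBider (specialWitt n s t) (sumZero n) pf 0 f) :
    ∃ κ : ℂ, (pf = 0 ∨ κ = 0) ∧ ∀ e ∈ specialFrame n, InnerAt (specialWitt n s t) f κ e := by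
  have hL := isToral_specialWitt (s := s) ht
  obtain ⟨p, q, -, -, hpq, -⟩ := exists_four_distinct hn
  have hpq_hom := matUnit_mem_homComp (s := s) (t := t) hpq
  have hmem := hf.diagOp_apply_mem hL (coroot p q) hpq_hom
  rw [add_zero] at hmem
  obtain ⟨κ, hκ, hinner⟩ := hf.exists_innerAt hL (a := coroot p q) hpq_hom
    (by simp [coroot_apply, hpq, hpq.symm]) (exists_eq_smul_matUnit hmem.1.1.1 hpq hmem.2)
  have hmat : ∀ i j, i ≠ j → InnerAt (specialWitt n s t) f κ (matUnit i j) := fun i j hij =>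
    innerAt_matUnit_of_innerAt_matUnit (by omega) ht hf hκ hpq hinner hij
  refine ⟨κ, hκ, ?_⟩
  rintro e (⟨i, j, hij, rfl⟩ | ⟨i, j, l, hij, hli, hlj, rfl⟩)
  · exact hmat i j hij
  · obtain ⟨k, hk⟩ := exists_notMem_of_card_lt {i, j, l} (Finset.card_le_three.trans_lt (by omega))
    simp only [Finset.mem_insert, Finset.mem_singleton, not_or] at hk
    obtain ⟨hki, hkj, hkl⟩ := hk
    exact innerAt_quadVec ht hf hκ hij (Ne.symm hki) hli.symm (Ne.symm hkj) hlj.symm hkl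
      (hmat k l hkl)

lemma isRigidFrame_specialFrame (hn : 4 ≤ n) (ht : t = 0 ∨ Even n) :
    IsRigidFrame (specialWitt n s t) (sumZero n) (specialFrame n) where
  exists_mem_homComp := by
    rintro e (⟨i, j, hij, rfl⟩ | ⟨i, j, k, hij, hki, hkj, rfl⟩)
    · exact ⟨_, _, matUnit_mem_homComp hij⟩
    · exact ⟨_, _, quadVec_mem_homComp hij hki hkj⟩
  exists_innerAt _ _ hf := exists_innerAt_specialFrame hn ht hf
  exists_sbL_ne_zero := by
    obtain ⟨i, j, k, -, hij, hik, -, hjk, -⟩ := exists_four_distinct hn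
    refine ⟨_, Or.inl ⟨i, k, hik, rfl⟩, _, Or.inl ⟨k, j, hjk.symm, rfl⟩, ?_⟩
    rw [sbL_matUnit_matUnit hij]
    exact matUnit_ne_zero i j
  eq_zero_of_centralizes z hz h := by
    have := Fin.nontrivial_iff_two_le.2 (show 2 ≤ n by omega)
    obtain ⟨i, j, k, l, hij, hik, hil, hjk, hjl, hkl⟩ := exists_four_distinct hn
    refine eq_zero_of_centralizes_quadVec (k := k) hz.1 (fun p q hpq => ?_) hij ?_
    · obtain ⟨m, hmp, hmq⟩ := Fin.exists_ne_and_ne_of_two_lt p q (by omega)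
      rw [← sbL_matUnit_matUnit hpq m]
      exact h _ (Or.inl ⟨_, _, hmp.symm, rfl⟩) _ (Or.inl ⟨_, _, hmq, rfl⟩)
    · rw [← sbL_quadVec_matUnit hik.symm hjk.symm l]
      exact h _ (Or.inr ⟨_, _, _, hij, hil.symm, hjl.symm, rfl⟩) _
        (Or.inl ⟨_, _, hkl.symm, rfl⟩)

theorem exists_eq_smul_sbL_specialWitt (hn : 4 ≤ n) (ht : t = 0 ∨ Even n) {pf : ZMod 2}
    {f : E n →ₗ[ℂ] E n →ₗ[ℂ] E n} (hf : IsSuperBider n (specialWitt n s t) pf f) :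
    ∃ κ : ℂ, ∀ x ∈ specialWitt n s t, ∀ y ∈ specialWitt n s t, f x y = κ • sbL n x y :=
  (isRigidFrame_specialFrame hn ht).exists_eq_smul_sbL (isToral_specialWitt ht)
    (offSeparated_specialWitt hn) hf

end SpecialFrame

section HamiltonianFields
variable {n : ℕ} {p q : ZMod 2} {f g : Lambda n}

lemma cidx_cidx (i : Fin n) : cidx n (cidx n i) = i := by
  apply Fin.ext
  simp only [cidx]
  split_ifs <;> omega

lemma cidx_injective : Function.Injective (cidx n) :=
  (show Function.Involutive _ from cidx_cidx).injective

lemma cidx_eq_iff {i j : Fin n} : cidx n i = j ↔ i = cidx n j :=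
  (show Function.Involutive _ from cidx_cidx).eq_iff

lemma sum_cidx {M : Type*} [AddCommMonoid M] (F : Fin n → M) :
    ∑ i, F (cidx n i) = ∑ i, F i :=
  Equiv.sum_comp (Function.Involutive.toPerm _ cidx_cidx) F

lemma DHmap_eq_Wmap (f : Lambda n) :
    DHmap n f = Wmap n fun k => pd n (cidx n k) (par n f) := by
  change ∑ i, mulOp n (pd n i (par n f)) * pd n (cidx n i) = _
  rw [Wmap_apply, ← sum_cidx fun k => mulOp n (pd n (cidx n k) (par n f)) * pd n k]
  simp only [cidx_cidx]

lemma DHmap_mono_singleton (f : Lambda n) (k : Fin n) :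
    DHmap n f (mono n {k}) = pd n (cidx n k) (par n f) := by
  rw [DHmap_eq_Wmap, Wmap_mono_singleton]

lemma DHmap_mem_Sn (f : Lambda n) : DHmap n f ∈ Sn n := by
  rw [DHmap_eq_Wmap]
  refine ⟨_, LinearMap.mem_ker.2 ?_, rfl⟩
  change ∑ k, pd n k (pd n (cidx n k) (par n f)) = 0
  refine self_eq_neg.1 ?_
  conv_lhs => rw [← sum_cidx]
  rw [← Finset.sum_neg_distrib]
  refine Finset.sum_congr rfl fun k _ => ?_
  rw [cidx_cidx, pd_pd]

lemma DHmap_mem_Wn (f : Lambda n) : DHmap n f ∈ Wn n := (mem_Sn_iff.1 (DHmap_mem_Sn f)).1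

lemma DHmap_apply_univ (f g : Lambda n) : DHmap n f g Finset.univ = 0 :=
  (mem_Sn_iff.1 (DHmap_mem_Sn f)).2 g

lemma DHmap_eq_of_pd {D : E n} (hD : D ∈ Wn n)
    (h : ∀ k, D (mono n {cidx n k}) = pd n k (par n f)) : D = DHmap n f :=
  eq_of_mem_Wn hD (DHmap_mem_Wn f) fun k => by
    rw [DHmap_mono_singleton, ← h, cidx_cidx]

lemma pd_mem_lpar (k : Fin n) (h : f ∈ lpar n p) : pd n k f ∈ lpar n (p + 1) :=
  pd_mem_epar k p f h

lemma DHmap_mem_epar (h : f ∈ lpar n p) : DHmap n f ∈ epar n p := by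
  rw [DHmap_eq_Wmap, mem_lpar_iff.1 h, Wmap_apply]
  refine Submodule.sum_mem _ fun k _ => ?_
  have hk := mul_mem_epar
    (mulOp_mem_epar (pd_mem_lpar (cidx n k) (Submodule.smul_mem _ (sgn p) h))) (pd_mem_epar k)
  rwa [add_assoc, show (1 + 1 : ZMod 2) = 0 by decide, add_zero] at hk

lemma apply_mono_empty_of_mem_Wn {D : E n} (h : D ∈ Wn n) : D (mono n ∅) = 0 := by
  obtain ⟨F, rfl⟩ := h
  simp [Wmap_apply, pd_mono_empty]

lemma pd_mem_Wn (k : Fin n) : pd n k ∈ Wn n := by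
  simpa [mulOp_mono_empty] using mulOp_mul_pd_mem_Wn (mono n ∅) k

lemma sbL_pd_apply_mono_singleton {D : E n} (hD : D ∈ Wn n) (c k : Fin n) :
    sbL n (pd n c) D (mono n {k}) = pd n c (D (mono n {k})) := by
  have h : parConj D (pd n c (mono n {k})) = 0 := by
    rw [pd_mono_singleton]
    split_ifs
    · exact apply_mono_empty_of_mem_Wn (parConj_mem_Wn hD)
    · exact map_zero _
  rw [sbL_of_odd_left (pd_mem_epar c), LinearMap.sub_apply, Module.End.mul_apply,
    Module.End.mul_apply, h, sub_zero]

lemma sbL_pd_DHmap (c : Fin n) (f : Lambda n) :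
    sbL n (pd n c) (DHmap n f) = DHmap n (pd n c f) :=
  DHmap_eq_of_pd (sbL_mem_Wn (pd_mem_Wn c) (DHmap_mem_Wn f)) fun k => by
    rw [sbL_pd_apply_mono_singleton (DHmap_mem_Wn f), DHmap_mono_singleton, cidx_cidx, par_pd,
      pd_pd, map_neg]

lemma mulOp_comm (hf : f ∈ lpar n p) (hg : g ∈ lpar n q) :
    mulOp n f g = sgn (p * q) • mulOp n g f := by
  have h := LinearMap.congr_fun (sbL_mulOp_mulOp f g) (mono n ∅)
  rw [sbL_of_mem_epar (mulOp_mem_epar hf) (mulOp_mem_epar hg)] at h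
  simpa [mulOp_apply_mono_empty, sub_eq_zero] using h

lemma DHmap_apply (f g : Lambda n) :
    DHmap n f g = ∑ i, mulOp n (pd n i (par n f)) (pd n (cidx n i) g) := by
  change (∑ i, mulOp n (pd n i (par n f)) * pd n (cidx n i) : E n) g = _
  simp only [LinearMap.sum_apply, Module.End.mul_apply]

lemma DHmap_apply_skew (hf : f ∈ lpar n p) (hg : g ∈ lpar n q) :
    DHmap n f g = -(sgn (p * q) • DHmap n g f) := by
  rw [DHmap_apply, DHmap_apply,
    ← sum_cidx fun i => mulOp n (pd n i (par n g)) (pd n (cidx n i) f), Finset.smul_sum,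
    ← Finset.sum_neg_distrib]
  refine Finset.sum_congr rfl fun i _ => ?_
  rw [cidx_cidx, mem_lpar_iff.1 hf, mem_lpar_iff.1 hg]
  simp only [map_smul, LinearMap.smul_apply]
  rw [mulOp_comm (pd_mem_lpar i hf) (pd_mem_lpar (cidx n i) hg), smul_smul, smul_smul, ← neg_smul]
  congr 1
  rcases parity_eq_zero_or_one p with rfl | rfl <;> rcases parity_eq_zero_or_one q with rfl | rfl
    <;> simp [show (1 + 1 : ZMod 2) = 0 by decide]

/- On generators this is the Leibniz rule `∂ₖ{f, g} = {∂ₖf, g} ± {f, ∂ₖg}` of the Poisson bracket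
`{f, g} = D_H(f)(g)`, that is `[∂ₖ, D_H(f)] = D_H(∂ₖf)`. -/
lemma sbL_DHmap_DHmap (hf : f ∈ lpar n p) (hg : g ∈ lpar n q) :
    sbL n (DHmap n f) (DHmap n g) = DHmap n (DHmap n f g) := by
  refine DHmap_eq_of_pd (sbL_mem_Wn (DHmap_mem_Wn f) (DHmap_mem_Wn g)) fun k => ?_
  have hpd := LinearMap.congr_fun (sbL_pd_DHmap k f) g
  rw [sbL_of_mem_epar (pd_mem_epar k) (DHmap_mem_epar hf), LinearMap.sub_apply,
    LinearMap.smul_apply, Module.End.mul_apply, Module.End.mul_apply,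
    DHmap_apply_skew (pd_mem_lpar k hf) hg, sub_eq_iff_eq_add] at hpd
  rw [sbL_of_mem_epar (DHmap_mem_epar hf) (DHmap_mem_epar hg), LinearMap.sub_apply,
    LinearMap.smul_apply, Module.End.mul_apply, Module.End.mul_apply, DHmap_mono_singleton,
    DHmap_mono_singleton, cidx_cidx, mem_lpar_iff.1 (DHmap_mem_epar hf q g hg),
    mem_lpar_iff.1 hf, mem_lpar_iff.1 hg]
  simp only [map_smul, hpd]
  rcases parity_eq_zero_or_one p with rfl | rfl <;> rcases parity_eq_zero_or_one q with rfl | rfl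
    <;> simp [show (1 + 1 : ZMod 2) = 0 by decide] <;> abel

end HamiltonianFields

section HamiltonianTorus
variable {n : ℕ} {p : ZMod 2} {f : Lambda n}

lemma mulX_mem_lpar (k : Fin n) (h : f ∈ lpar n p) : mulX k f ∈ lpar n (p + 1) :=
  mulX_mem_epar k p f h

lemma mono_singleton_mem_lpar (k : Fin n) : mono n {k} ∈ lpar n 1 := by
  simpa using mono_mem_lpar ({k} : Finset (Fin n))

lemma mulX_mono_singleton_mem_lpar (i j : Fin n) : mulX i (mono n {j}) ∈ lpar n 0 :=
  mulX_mem_lpar i (mono_singleton_mem_lpar j)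

lemma mulX_mulX_mono_singleton_mem_lpar (k i j : Fin n) :
    mulX k (mulX i (mono n {j})) ∈ lpar n 1 :=
  mulX_mem_lpar k (mulX_mono_singleton_mem_lpar i j)

lemma pd_mulX_mono_singleton_eq_ite (k i j : Fin n) : pd n k (mulX i (mono n {j})) =
    (if k = i then mono n {j} else 0) - if k = j then mono n {i} else 0 := by
  rcases eq_or_ne k i with rfl | hki
  · rw [pd_mulX_self, pd_mono_singleton, if_pos rfl]
    split_ifs
    · rw [mulX_mono_empty]
    · rw [map_zero]
  · rw [pd_mulX_of_ne hki, pd_mono_singleton, if_neg hki, zero_sub]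
    split_ifs
    · rw [mulX_mono_empty]
    · rw [map_zero]

lemma mono_singleton_apply_of_one_lt_card (k : Fin n) {S : Finset (Fin n)} (hS : 1 < S.card) :
    mono n {k} S = 0 := by
  refine mono_of_ne ?_
  rintro rfl
  simp at hS

lemma mulX_apply_of_lt_card (k : Fin n) {m : ℕ} (h : ∀ S, m < S.card → f S = 0)
    {S : Finset (Fin n)} (hS : m + 1 < S.card) : mulX k f S = 0 := by
  rw [apply_eq_sum_mul]
  refine Finset.sum_eq_zero fun T _ => ?_
  by_cases hT : m < T.card
  · rw [h T hT, zero_mul]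
  rw [mulX_mono]
  split_ifs with hk
  · simp
  · have hST : S ≠ insert k T := by
      rintro rfl
      rw [Finset.card_insert_of_notMem hk] at hS
      omega
    simp [mono_of_ne hST]

lemma mulX_mono_singleton_apply_univ (hn : 2 < n) (i j : Fin n) :
    mulX i (mono n {j}) Finset.univ = 0 :=
  mulX_apply_of_lt_card i (fun _ => mono_singleton_apply_of_one_lt_card j) (by simpa using hn)

lemma mulX_mulX_mono_singleton_apply_univ (hn : 3 < n) (k i j : Fin n) :
    mulX k (mulX i (mono n {j})) Finset.univ = 0 :=
  mulX_apply_of_lt_card k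
    (fun _ => mulX_apply_of_lt_card i fun _ => mono_singleton_apply_of_one_lt_card j)
    (by simpa using hn)

variable (n) in
/-- The coefficient vectors of the standard torus of `H(n)`. -/
def hamTorus : Submodule ℂ (Fin n → ℂ) where
  carrier := {a | ∀ i, a (cidx n i) = -a i}
  add_mem' ha hb i := by rw [Pi.add_apply, Pi.add_apply, ha, hb, neg_add]
  zero_mem' i := by rw [Pi.zero_apply, Pi.zero_apply, neg_zero]
  smul_mem' c a ha i := by rw [Pi.smul_apply, Pi.smul_apply, ha, smul_neg]

/-- The quadratic Hamiltonian of the torus element with coefficient vector `a`. -/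
def torusHamiltonian (a : Fin n → ℂ) : Lambda n :=
  ∑ i, (-(1 / 2) * a i) • mulX i (mono n {cidx n i})

lemma torusHamiltonian_mem_lpar (a : Fin n → ℂ) : torusHamiltonian a ∈ lpar n 0 :=
  Submodule.sum_mem _ fun _ _ => Submodule.smul_mem _ _ (mulX_mono_singleton_mem_lpar _ _)

lemma torusHamiltonian_apply_univ (hn : 2 < n) (a : Fin n → ℂ) :
    torusHamiltonian a Finset.univ = 0 := by
  rw [torusHamiltonian, Finset.sum_apply]
  refine Finset.sum_eq_zero fun i _ => ?_
  rw [Pi.smul_apply, mulX_mono_singleton_apply_univ hn, smul_zero]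

lemma diagOp_eq_DHmap {a : Fin n → ℂ} (ha : a ∈ hamTorus n) :
    diagOp a = DHmap n (torusHamiltonian a) := by
  refine DHmap_eq_of_pd (diagOp_mem_Wn a) fun k => ?_
  rw [mem_lpar_iff.1 (torusHamiltonian_mem_lpar a), sgn_zero, one_smul, torusHamiltonian,
    diagOp_mono, Finset.sum_singleton]
  simp only [map_sum, map_smul, pd_mulX_mono_singleton_eq_ite, smul_sub, smul_ite, smul_zero,
    Finset.sum_sub_distrib, ← cidx_eq_iff, Finset.sum_ite_eq, Finset.mem_univ, if_true, ha k]
  module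

lemma sbL_diagOp_DHmap {a : Fin n → ℂ} (ha : a ∈ hamTorus n) (hf : f ∈ lpar n p) :
    sbL n (diagOp a) (DHmap n f) = DHmap n (diagOp a f) := by
  rw [diagOp_eq_DHmap ha, sbL_DHmap_DHmap (torusHamiltonian_mem_lpar a) hf]

lemma DHmap_mem_weightSpace (hf : f ∈ lpar n p) {μ : Module.Dual ℂ (hamTorus n)}
    (h : ∀ a : hamTorus n, diagOp (a : Fin n → ℂ) f = μ a • f) :
    DHmap n f ∈ weightSpace (hamTorus n) μ := fun a => by
  rw [sbL_diagOp_DHmap a.2 hf, h, map_smul]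

lemma DHmap_mono_mem_weightSpace (S : Finset (Fin n)) :
    DHmap n (mono n S) ∈ weightSpace (hamTorus n) (monoWeight _ S) :=
  DHmap_mem_weightSpace (mono_mem_lpar S) fun a => by rw [diagOp_mono, monoWeight_apply]

lemma apply_mulX_of_even {D : E n} (hD : D ∈ Wn n) (hD0 : D ∈ epar n 0) (i : Fin n)
    (f : Lambda n) : D (mulX i f) = mulX i (D f) + mulOp n (D (mono n {i})) f := by
  have h := LinearMap.congr_fun (sbL_mulOp_of_mem_Wn hD (mono n {i})) f
  rw [sbL_of_even_left hD0, LinearMap.sub_apply, sub_eq_iff_eq_add'] at h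
  exact h

lemma diagOp_mulX (a : Fin n → ℂ) (i : Fin n) (f : Lambda n) :
    diagOp a (mulX i f) = mulX i (diagOp a f) + a i • mulX i f := by
  rw [apply_mulX_of_even (diagOp_mem_Wn a) (diagOp_mem_epar a), diagOp_mono, Finset.sum_singleton,
    map_smul, LinearMap.smul_apply]
  rfl

lemma DHmap_mem_Hn (h : f Finset.univ = 0) : DHmap n f ∈ Hn n := ⟨f, h, rfl⟩

lemma mono_apply_univ {S : Finset (Fin n)} (hS : S ≠ Finset.univ) : mono n S Finset.univ = 0 :=
  mono_of_ne hS.symm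

lemma Hn_le (V : Submodule ℂ (E n)) (h : ∀ S ≠ Finset.univ, DHmap n (mono n S) ∈ V) :
    Hn n ≤ V := by
  rintro _ ⟨f, hf, rfl⟩
  rw [eq_sum_smul_mono f, map_sum]
  refine Submodule.sum_mem _ fun S _ => ?_
  rw [map_smul]
  rcases eq_or_ne S Finset.univ with rfl | hS
  · rw [show f Finset.univ = 0 from hf, zero_smul]
    exact V.zero_mem
  · exact V.smul_mem _ (h S hS)

lemma Hn_le_Wn : Hn n ≤ Wn n := Hn_le _ fun _ _ => DHmap_mem_Wn _

lemma sbL_mem_Hn {D D' : E n} (hD : D ∈ Hn n) (hD' : D' ∈ Hn n) : sbL n D D' ∈ Hn n := by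
  refine Hn_le ((Hn n).comap ((sbL n).flip D')) (fun S _ => ?_) hD
  refine Hn_le ((Hn n).comap (sbL n (DHmap n (mono n S)))) (fun T _ => ?_) hD'
  rw [Submodule.mem_comap, sbL_DHmap_DHmap (mono_mem_lpar S) (mono_mem_lpar T)]
  exact DHmap_mem_Hn (DHmap_apply_univ _ _)

lemma isToral_Hn (hn : 2 < n) : IsToral (Hn n) (hamTorus n) where
  sbL_mem _ hx _ hy := sbL_mem_Hn hx hy
  weightProj_mem μ := by
    refine Hn_le ((Hn n).comap (weightProj μ)) fun S hS => ?_
    by_cases h : μ = monoWeight _ S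
    · rw [Submodule.mem_comap, h, weightProj_of_mem (DHmap_mono_mem_weightSpace S)]
      exact DHmap_mem_Hn (mono_apply_univ hS)
    · rw [Submodule.mem_comap, weightProj_of_mem_of_ne (DHmap_mono_mem_weightSpace S) h]
      exact zero_mem _
  parConj_mem := by
    refine Hn_le ((Hn n).comap parConj) fun S hS => ?_
    rw [Submodule.mem_comap, mem_epar_iff.1 (DHmap_mem_epar (mono_mem_lpar S))]
    exact Submodule.smul_mem _ _ (DHmap_mem_Hn (mono_apply_univ hS))
  diagOp_mem a ha := by
    rw [diagOp_eq_DHmap ha]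
    exact DHmap_mem_Hn (torusHamiltonian_apply_univ hn a)

end HamiltonianTorus

section PairedIndices
variable {n : ℕ} {a b i j : Fin n}

/-- `i` is not the fixed point of the involution `i ↦ i'`. -/
def IsPaired (i : Fin n) : Prop := cidx n i ≠ i

/-- `i` and `j` lie in different orbits of the involution `i ↦ i'`. -/
def Apart (i j : Fin n) : Prop := i ≠ j ∧ i ≠ cidx n j

lemma IsPaired.cidx (h : IsPaired i) : IsPaired (cidx n i) :=
  fun h' => h (cidx_injective h')

lemma Apart.symm (h : Apart i j) : Apart j i :=
  ⟨h.1.symm, fun h' => h.2 (cidx_eq_iff.1 h'.symm)⟩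

lemma Apart.cidx_left (h : Apart i j) : Apart (cidx n i) j :=
  ⟨fun h' => h.2 (cidx_eq_iff.1 h'), cidx_injective.ne h.1⟩

lemma Apart.cidx_right (h : Apart i j) : Apart i (cidx n j) := h.symm.cidx_left.symm

lemma Apart.isPaired_or_isPaired (h : Apart i j) : IsPaired i ∨ IsPaired j := by
  obtain ⟨hij, -⟩ := h
  simp only [IsPaired, ne_eq, Fin.ext_iff, cidx] at hij ⊢
  have := i.2
  have := j.2
  split_ifs <;> omega

lemma exists_isPaired_apart (hn : 4 < n) (c : Fin n) : ∃ b, IsPaired b ∧ Apart b c := by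
  by_cases hc : c.1 = 0 ∨ c.1 = n / 2
  · refine ⟨⟨1, by omega⟩, ?_⟩
    simp only [IsPaired, Apart, ne_eq, Fin.ext_iff, cidx]
    split_ifs <;> omega
  · refine ⟨⟨0, by omega⟩, ?_⟩
    simp only [IsPaired, Apart, ne_eq, Fin.ext_iff, cidx]
    split_ifs <;> omega

lemma exists_apart_apart (hn : 4 < n) (a c : Fin n) : ∃ b, Apart a b ∧ Apart b c := by
  obtain ⟨b, hb⟩ := exists_notMem_of_card_lt {a, cidx n a, c, cidx n c}
    (Finset.card_le_four.trans_lt hn)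
  simp only [Finset.mem_insert, Finset.mem_singleton, not_or] at hb
  obtain ⟨hba, hba', hbc, hbc'⟩ := hb
  exact ⟨b, Apart.symm ⟨hba, hba'⟩, hbc, hbc'⟩

lemma apply_cidx_of_mem_hamTorus (u : hamTorus n) (i : Fin n) :
    (u : Fin n → ℂ) (cidx n i) = -(u : Fin n → ℂ) i := u.2 i

lemma apply_eq_zero_of_not_isPaired (hi : ¬IsPaired i) (u : hamTorus n) :
    (u : Fin n → ℂ) i = 0 := by
  have h := apply_cidx_of_mem_hamTorus u i
  rw [not_not.1 hi] at h
  exact self_eq_neg.1 h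

/-- The coefficient vector of the torus element `xᵢ∂ᵢ - xᵢ'∂ᵢ'`. -/
def hamCoroot (i : Fin n) : hamTorus n :=
  ⟨Pi.single i 1 - Pi.single (cidx n i) 1, fun k => by
    simp only [Pi.sub_apply, Pi.single_apply, cidx_eq_iff, cidx_cidx]
    ring⟩

lemma hamCoroot_apply (i k : Fin n) : (hamCoroot i : Fin n → ℂ) k =
    (if k = i then 1 else 0) - (if k = cidx n i then 1 else 0) := by
  simp [hamCoroot, Pi.single_apply]

lemma hamCoroot_self (hi : IsPaired i) : (hamCoroot i : Fin n → ℂ) i = 1 := by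
  rw [hamCoroot_apply, if_pos rfl, if_neg (Ne.symm hi), sub_zero]

lemma hamCoroot_of_apart (h : Apart i j) : (hamCoroot i : Fin n → ℂ) j = 0 := by
  rw [hamCoroot_apply, if_neg h.symm.1, if_neg h.symm.2, sub_zero]

lemma monoWeight_hamCoroot (S : Finset (Fin n)) (i : Fin n) : monoWeight _ S (hamCoroot i) =
    (if i ∈ S then 1 else 0) - if cidx n i ∈ S then 1 else 0 := by
  simp only [monoWeight_apply, hamCoroot_apply, Finset.sum_sub_distrib, Finset.sum_ite_eq']

/- The index `k` raises `xₐx_b` to a cubic whose bracket with `∂ₖ` gives `xₐx_b` back; the torus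
elements `u` and `v` separate the weights involved. -/
lemma exists_raising_index (hn : 4 < n) (hab : Apart a b) : ∃ k, IsPaired k ∧ k ≠ a ∧ k ≠ b ∧
    ∃ u ∈ hamTorus n, ∃ v ∈ hamTorus n,
      u k ≠ 0 ∧ u k + (u a + u b) = 0 ∧ v k + (v a + v b) ≠ 0 := by
  wlog ha : IsPaired a generalizing a b
  · obtain ⟨k, hk, hkb, hka, h⟩ := this hab.symm (hab.isPaired_or_isPaired.resolve_left ha)
    exact ⟨k, hk, hka, hkb, by simpa only [add_comm] using h⟩
  by_cases hb : IsPaired b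
  · refine ⟨cidx n a, ha.cidx, ha, hab.cidx_left.1, _, (hamCoroot a).2, _, (hamCoroot b).2, ?_⟩
    simp [apply_cidx_of_mem_hamTorus, hamCoroot_self, hamCoroot_of_apart, ha, hb, hab, hab.symm]
  · obtain ⟨k, hk, hka⟩ := exists_isPaired_apart hn a
    refine ⟨k, hk, hka.1, fun h => hb (h ▸ hk), _, (hamCoroot k - hamCoroot a).2, _,
      (hamCoroot k).2, ?_⟩
    simp [apply_eq_zero_of_not_isPaired hb, hamCoroot_self, hamCoroot_of_apart, ha, hk, hka,
        hka.symm]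

end PairedIndices

section HamiltonianFrame
variable {n : ℕ} {a b c k : Fin n}

/-- The field `D_H(xₐx_b)`. -/
def hamQuad (a b : Fin n) : E n := DHmap n (mulX a (mono n {b}))

/-- The field `D_H(xₖxₐx_b)`. -/
def hamCubic (k a b : Fin n) : E n := DHmap n (mulX k (mulX a (mono n {b})))

lemma DHmap_generator (c : Fin n) : DHmap n (mono n {c}) = -pd n (cidx n c) := by
  refine (DHmap_eq_of_pd (neg_mem (pd_mem_Wn _)) fun k => ?_).symm
  rw [mem_lpar_iff.1 (mono_singleton_mem_lpar c), sgn_one, neg_one_smul, map_neg,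
    LinearMap.neg_apply, pd_mono_singleton, pd_mono_singleton]
  simp only [cidx_injective.eq_iff, eq_comm]

lemma hamQuad_apply (a b k : Fin n) : hamQuad a b (mono n {k}) =
    (if cidx n k = a then mono n {b} else 0) - if cidx n k = b then mono n {a} else 0 := by
  rw [hamQuad, DHmap_mono_singleton, mem_lpar_iff.1 (mulX_mono_singleton_mem_lpar a b), sgn_zero,
    one_smul, pd_mulX_mono_singleton_eq_ite]

lemma hamQuad_mem_Wn (a b : Fin n) : hamQuad a b ∈ Wn n := DHmap_mem_Wn _

lemma hamQuad_mem_epar (a b : Fin n) : hamQuad a b ∈ epar n 0 :=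
  DHmap_mem_epar (mulX_mono_singleton_mem_lpar a b)

lemma pd_mem_Hn (hn : 1 < n) (c : Fin n) : pd n c ∈ Hn n := by
  have h := DHmap_generator (cidx n c)
  rw [cidx_cidx] at h
  rw [← neg_mem_iff, ← h]
  exact DHmap_mem_Hn (mono_singleton_apply_of_one_lt_card _ (by simpa using hn))

lemma pd_mem_homComp (hn : 1 < n) (c : Fin n) :
    pd n c ∈ homComp (Hn n) (hamTorus n) (-coordWeight _ c) 1 :=
  ⟨⟨pd_mem_Hn hn c, pd_mem_epar c⟩, by
    simpa [mulOp_mono_empty, monoWeight] using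
      mulOp_mono_mul_pd_mem_weightSpace (A := hamTorus n) ∅ c⟩

lemma pd_ne_zero (c : Fin n) : pd n c ≠ 0 := fun h => by
  have hc := congrFun (LinearMap.congr_fun h (mono n {c})) ∅
  simp [pd_mono_singleton] at hc

lemma diagOp_mulX_mono_singleton (u : Fin n → ℂ) (a b : Fin n) :
    diagOp u (mulX a (mono n {b})) = (u a + u b) • mulX a (mono n {b}) := by
  rw [diagOp_mulX, diagOp_mono, Finset.sum_singleton, map_smul]
  module

lemma hamQuad_mem_homComp (hn : 2 < n) (a b : Fin n) :
    hamQuad a b ∈ homComp (Hn n) (hamTorus n) (coordWeight _ a + coordWeight _ b) 0 :=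
  ⟨⟨DHmap_mem_Hn (mulX_mono_singleton_apply_univ hn a b), hamQuad_mem_epar a b⟩,
    DHmap_mem_weightSpace (mulX_mono_singleton_mem_lpar a b)
      fun u => diagOp_mulX_mono_singleton u a b⟩

lemma hamCubic_mem_homComp (hn : 3 < n) (k a b : Fin n) : hamCubic k a b ∈
    homComp (Hn n) (hamTorus n) (coordWeight _ k + (coordWeight _ a + coordWeight _ b)) 1 := by
  have hpar := mulX_mulX_mono_singleton_mem_lpar k a b
  refine ⟨⟨DHmap_mem_Hn (mulX_mulX_mono_singleton_apply_univ hn k a b), DHmap_mem_epar hpar⟩,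
    DHmap_mem_weightSpace hpar fun u => ?_⟩
  rw [diagOp_mulX, diagOp_mulX_mono_singleton, map_smul]
  change _ = ((u : Fin n → ℂ) k + (u.1 a + u.1 b)) • _
  module

lemma sbL_pd_pd (c d : Fin n) : sbL n (pd n c) (pd n d) = 0 := by
  refine eq_of_mem_Wn (sbL_mem_Wn (pd_mem_Wn c) (pd_mem_Wn d)) (zero_mem _) fun k => ?_
  rw [sbL_pd_apply_mono_singleton (pd_mem_Wn d), pd_mono_singleton]
  split_ifs <;> simp [pd_mono_empty]

lemma sbL_pd_hamQuad (hca : c ≠ a) :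
    sbL n (pd n c) (hamQuad c a) = -pd n (cidx n a) := by
  rw [hamQuad, sbL_pd_DHmap, pd_mulX_mono_singleton_eq_ite, if_pos rfl, if_neg hca, sub_zero,
    DHmap_generator]

lemma sbL_pd_hamQuad_of_ne (hca : c ≠ a) (hcb : c ≠ b) : sbL n (pd n c) (hamQuad a b) = 0 := by
  rw [hamQuad, sbL_pd_DHmap, pd_mulX_mono_singleton_eq_ite, if_neg hca, if_neg hcb, sub_zero,
    map_zero]

lemma sbL_pd_hamCubic (hka : k ≠ a) (hkb : k ≠ b) :
    sbL n (pd n k) (hamCubic k a b) = hamQuad a b := by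
  rw [hamCubic, sbL_pd_DHmap, pd_mulX_self, pd_mulX_mono_singleton_eq_ite, if_neg hka, if_neg hkb,
    sub_zero, map_zero, sub_zero, hamQuad]

lemma sbL_hamQuad_hamQuad (hab : Apart a b) (hbc : Apart b c) (hac : Apart a c) :
    sbL n (hamQuad a b) (hamQuad (cidx n b) c) = -hamQuad a c := by
  have hbr : sbL n (hamQuad a b) (hamQuad (cidx n b) c) =
      DHmap n (hamQuad a b (mulX (cidx n b) (mono n {c}))) :=
    sbL_DHmap_DHmap (mulX_mono_singleton_mem_lpar a b) (mulX_mono_singleton_mem_lpar _ c)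
  have hb : hamQuad a b (mono n {cidx n b}) = -mono n {a} := by
    rw [hamQuad_apply, cidx_cidx, if_neg hab.symm.1, if_pos rfl, zero_sub]
  have hc : hamQuad a b (mono n {c}) = 0 := by
    rw [hamQuad_apply, if_neg hac.symm.cidx_left.1, if_neg hbc.symm.cidx_left.1, sub_zero]
  rw [hbr, apply_mulX_of_even (hamQuad_mem_Wn a b) (hamQuad_mem_epar a b), hb, hc, map_zero,
    zero_add, map_neg, LinearMap.neg_apply, map_neg]
  rfl

end HamiltonianFrame

section HamiltonianRigidity
variable {n : ℕ} {a b c d k : Fin n} {z : E n}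

lemma pd_apply_mono_cidx_skew (hz : z ∈ Hn n) (j k : Fin n) :
    pd n j (z (mono n {cidx n k})) = -pd n k (z (mono n {cidx n j})) := by
  obtain ⟨f, -, rfl⟩ := hz
  rw [DHmap_mono_singleton, DHmap_mono_singleton, cidx_cidx, cidx_cidx, pd_pd]

lemma eq_smul_mono_empty {f : Lambda n} (h : ∀ j, pd n j f = 0) : f = f ∅ • mono n ∅ := by
  funext S
  rcases S.eq_empty_or_nonempty with rfl | ⟨j, hj⟩
  · simp
  · rw [pd_eq_zero_apply (h j) hj, Pi.smul_apply,
      mono_of_ne (Finset.nonempty_iff_ne_empty.1 ⟨j, hj⟩), smul_zero]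

lemma sbL_pd_eq_zero_of_isPaired (hn : 4 < n) (hpd : ∀ c, IsPaired c → sbL n (pd n c) z = 0)
    (hquad : ∀ a b, Apart a b → sbL n (hamQuad a b) z = 0) (c : Fin n) :
    sbL n (pd n c) z = 0 := by
  obtain ⟨b, hb, hbc⟩ := exists_isPaired_apart hn c
  have h := sbL_sbL_eq_zero (pd_mem_epar b) (hamQuad_mem_epar b (cidx n c)) (hpd b hb)
    (hquad b _ hbc.cidx_right)
  rw [sbL_pd_hamQuad hbc.cidx_right.1, cidx_cidx, map_neg] at h
  exact neg_eq_zero.1 h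

lemma eq_zero_of_centralizes_hamQuad (hn : 4 < n) (hz : z ∈ Hn n)
    (hpd : ∀ c, IsPaired c → sbL n (pd n c) z = 0)
    (hquad : ∀ a b, Apart a b → sbL n (hamQuad a b) z = 0) : z = 0 := by
  have hzW := Hn_le_Wn hz
  have hconst : ∀ k, z (mono n {k}) = z (mono n {k}) ∅ • mono n ∅ := fun k =>
    eq_smul_mono_empty fun j => by
      rw [← sbL_pd_apply_mono_singleton hzW, sbL_pd_eq_zero_of_isPaired hn hpd hquad,
        LinearMap.zero_apply]
  refine eq_of_mem_Wn hzW (zero_mem _) fun b => ?_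
  obtain ⟨a, -, hab⟩ := exists_isPaired_apart hn b
  have h := LinearMap.congr_fun (hquad a b hab) (mono n {cidx n a})
  rw [sbL_of_even_left (hamQuad_mem_epar a b), LinearMap.sub_apply, Module.End.mul_apply,
    Module.End.mul_apply, hconst (cidx n a), map_smul,
    apply_mono_empty_of_mem_Wn (hamQuad_mem_Wn a b), hamQuad_apply, cidx_cidx, if_pos rfl,
    if_neg hab.1, sub_zero, smul_zero, zero_sub] at h
  exact neg_eq_zero.1 h

lemma offSeparated_Hn (hn : 4 < n) : OffSeparated (Hn n) (hamTorus n) := by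
  intro ν z hz h
  have hpd : ∀ c, IsPaired c → sbL n (pd n c) z = 0 := fun c hc => by
    obtain ⟨b, hb, hbc⟩ := exists_isPaired_apart hn c
    by_cases hoff : IsOff ν (-coordWeight _ c)
    · exact h _ _ hoff _ (pd_mem_homComp (by omega) c)
    have hoff_b : IsOff ν (-coordWeight _ b) := by
      refine (isOff_or_isOff (a := hamCoroot c) (b := hamCoroot b) ν ?_ ?_ ?_).resolve_left hoff
        <;> simp [hamCoroot_self, hamCoroot_of_apart, hb, hc, hbc.symm]
    have hoff_bc : IsOff ν (coordWeight _ b + coordWeight _ (cidx n c)) := by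
      refine (isOff_or_isOff (a := hamCoroot b + hamCoroot c) (b := hamCoroot b) ν
        ?_ ?_ ?_).resolve_left hoff
        <;> simp [hamCoroot_self, hamCoroot_of_apart, apply_cidx_of_mem_hamTorus, hb, hc, hbc,
          hbc.symm]
    have hbr := sbL_sbL_eq_zero (pd_mem_epar b) (hamQuad_mem_epar b (cidx n c))
      (h _ _ hoff_b _ (pd_mem_homComp (by omega) b))
      (h _ _ hoff_bc _ (hamQuad_mem_homComp (by omega) b _))
    rw [sbL_pd_hamQuad hbc.cidx_right.1, cidx_cidx, map_neg] at hbr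
    exact neg_eq_zero.1 hbr
  refine eq_zero_of_centralizes_hamQuad hn hz hpd fun a b hab => ?_
  obtain ⟨k, hk, hka, hkb, u, hu, v, hv, huk, hsum, hne⟩ := exists_raising_index hn hab
  have hua : u a + u b ≠ 0 := fun h0 => huk (by simpa [h0] using hsum)
  rcases isOff_or_isOff (α := coordWeight (hamTorus n) a + coordWeight _ b)
    (β := coordWeight _ k + (coordWeight _ a + coordWeight _ b)) (a := ⟨u, hu⟩) (b := ⟨v, hv⟩)
    ν hua hsum hne with hoff | hoff
  · exact h _ _ hoff _ (hamQuad_mem_homComp (by omega) a b)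
  · rw [← sbL_pd_hamCubic hka hkb]
    have hcubic := hamCubic_mem_homComp (show 3 < n by omega) k a b
    exact sbL_sbL_eq_zero (pd_mem_epar k) hcubic.1.2 (hpd k hk) (h _ _ hoff _ hcubic)

lemma eq_and_eq_empty_of_apply_ne_zero (hz : z ∈ Hn n) (hc : IsPaired c)
    (hwt : z ∈ weightSpace (hamTorus n) (-coordWeight _ c))
    (hpd : ∀ d, Apart d c → sbL n (pd n d) z = 0) {S : Finset (Fin n)}
    (hS : z (mono n {k}) S ≠ 0) : k = c ∧ S = ∅ := by
  have hpd_apply : ∀ d, Apart d c → ∀ k, pd n d (z (mono n {k})) = 0 := fun d hd k => by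
    rw [← sbL_pd_apply_mono_singleton (Hn_le_Wn hz), hpd d hd, LinearMap.zero_apply]
  have hweight : ((if c ∈ S then 1 else 0) - if cidx n c ∈ S then 1 else 0 : ℂ) =
      (if c = k then 1 else 0) - (if cidx n c = k then 1 else 0) - 1 := by
    have h := LinearMap.congr_fun (mem_weightSpace_iff.1 hwt _ _ hS) (hamCoroot c)
    rw [LinearMap.add_apply, monoWeight_hamCoroot, monoWeight_hamCoroot] at h
    simpa [hamCoroot_self hc, Finset.mem_singleton, sub_eq_add_neg] using h
  have hkc' : cidx n c ≠ k := by
    rintro rfl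
    rw [if_neg (Ne.symm hc), if_pos rfl] at hweight
    split_ifs at hweight <;> norm_num at hweight
  have hc'S : cidx n c ∉ S := fun hmem => hS <| pd_eq_zero_apply ?_ hmem
  · rw [if_neg hc'S, if_neg hkc', sub_zero, sub_zero] at hweight
    obtain rfl : c = k := by
      by_contra hck
      rw [if_neg hck] at hweight
      split_ifs at hweight <;> norm_num at hweight
    have hcS : c ∉ S := by
      by_contra hcS
      norm_num [hcS] at hweight
    refine ⟨rfl, Finset.eq_empty_of_forall_notMem fun d hd => hS (pd_eq_zero_apply ?_ hd)⟩
    exact hpd_apply d ⟨ne_of_mem_of_not_mem hd hcS, ne_of_mem_of_not_mem hd hc'S⟩ c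
  · have hskew := pd_apply_mono_cidx_skew hz (cidx n c) (cidx n k)
    rw [cidx_cidx, cidx_cidx] at hskew
    rcases eq_or_ne k c with rfl | hkc
    · exact self_eq_neg.1 hskew
    · rw [hskew, hpd_apply _ (Apart.cidx_left ⟨hkc, hkc'.symm⟩), neg_zero]

lemma exists_eq_smul_pd (hz : z ∈ Hn n) (hc : IsPaired c)
    (hwt : z ∈ weightSpace (hamTorus n) (-coordWeight _ c))
    (hpd : ∀ d, Apart d c → sbL n (pd n d) z = 0) : ∃ r : ℂ, z = r • pd n c := by
  refine ⟨z (mono n {c}) ∅, eq_of_mem_Wn (Hn_le_Wn hz)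
    (Submodule.smul_mem _ _ (pd_mem_Wn c)) fun k => funext fun S => ?_⟩
  rw [LinearMap.smul_apply, pd_mono_singleton]
  by_cases h : k = c ∧ S = ∅
  · obtain ⟨rfl, rfl⟩ := h
    simp
  · rw [not_imp_comm.1 (eq_and_eq_empty_of_apply_ne_zero hz hc hwt hpd) h]
    split_ifs with hck
    · rw [Pi.smul_apply, mono_of_ne fun hS => h ⟨hck.symm, hS⟩, smul_zero]
    · simp

section Propagation
variable {pf : ZMod 2} {κ : ℂ} {f : E n →ₗ[ℂ] E n →ₗ[ℂ] E n}

lemma sbL_pd_diagOp_apply_pd_eq_zero (hn : 4 < n) (hf : IsWeightBider (Hn n) (hamTorus n) pf 0 f)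
    (hdc : Apart d c) : sbL n (pd n d) (f (diagOp (hamCoroot c : Fin n → ℂ)) (pd n c)) = 0 := by
  have hL := isToral_Hn (show 2 < n by omega)
  have hpd := pd_mem_homComp (show 1 < n by omega) c
  have hpaired : ∀ b, IsPaired b → Apart b c →
      sbL n (pd n b) (f (diagOp (hamCoroot c : Fin n → ℂ)) (pd n c)) = 0 := fun b hb hbc => by
    refine hf.sbL_diagOp_apply_eq_zero hL (pd_mem_homComp (by omega) b) hpd ?_ (fun h0 => ?_)
      (sbL_pd_pd b c)
    · simp [hamCoroot_of_apart hbc.symm]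
    · simpa [hamCoroot_self hb] using LinearMap.congr_fun h0 (hamCoroot b)
  by_cases hd : IsPaired d
  · exact hpaired d hd hdc
  obtain ⟨b, hb, hbc⟩ := exists_isPaired_apart hn c
  have hbd : b ≠ cidx n d := fun h => hd (cidx_injective.ne_iff.1 (h ▸ hb))
  have hquad := hf.sbL_diagOp_apply_eq_zero hL (a := hamCoroot c)
    (hamQuad_mem_homComp (show 2 < n by omega) b (cidx n d)) hpd ?_ (fun h0 => ?_) ?_
  · have h := sbL_sbL_eq_zero (pd_mem_epar b) (hamQuad_mem_epar b _) (hpaired b hb hbc) hquad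
    rw [sbL_pd_hamQuad hbd, cidx_cidx, map_neg] at h
    exact neg_eq_zero.1 h
  · simp [hamCoroot_of_apart hbc.symm, hamCoroot_of_apart hdc.symm, apply_cidx_of_mem_hamTorus]
  · simpa [hamCoroot_self hb, apply_eq_zero_of_not_isPaired hd, apply_cidx_of_mem_hamTorus] using
      LinearMap.congr_fun h0 (hamCoroot b)
  · rw [sbL_skew (hamQuad_mem_epar _ _) (pd_mem_epar c),
      sbL_pd_hamQuad_of_ne hbc.symm.1 hdc.symm.cidx_right.1, smul_zero, neg_zero]

lemma exists_innerAt_pd (hn : 4 < n) (hf : IsWeightBider (Hn n) (hamTorus n) pf 0 f)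
    (hc : IsPaired c) : ∃ κ : ℂ, (pf = 0 ∨ κ = 0) ∧ InnerAt (Hn n) f κ (pd n c) := by
  have hL := isToral_Hn (show 2 < n by omega)
  have hpd := pd_mem_homComp (show 1 < n by omega) c
  have hmem := hf.diagOp_apply_mem hL (hamCoroot c) hpd
  rw [add_zero] at hmem
  exact hf.exists_innerAt hL (a := hamCoroot c) hpd (by simp [hamCoroot_self hc])
    (exists_eq_smul_pd hmem.1.1 hc hmem.2 fun d hdc => sbL_pd_diagOp_apply_pd_eq_zero hn hf hdc)

lemma innerAt_pd_of_apart (hn : 2 < n) (hf : IsWeightBider (Hn n) (hamTorus n) pf 0 f)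
    (hκ : pf = 0 ∨ κ = 0) (hc : IsPaired c) (hd : IsPaired d) (hcd : Apart c d)
    (h : InnerAt (Hn n) f κ (pd n c)) : InnerAt (Hn n) f κ (pd n d) := by
  have hbr : pd n d = sbL n (hamQuad c (cidx n d)) (pd n c) := by
    rw [sbL_skew (hamQuad_mem_epar _ _) (pd_mem_epar c), sbL_pd_hamQuad hcd.cidx_right.1, cidx_cidx,
      zero_mul, sgn_zero, one_smul, neg_neg]
  rw [hbr]
  refine hf.innerAt_sbL (isToral_Hn hn) hκ (hamQuad_mem_homComp hn c _)
    (pd_mem_homComp (by omega) c) (a := hamCoroot c + hamCoroot d) ?_ (fun h0 => ?_) ?_ h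
  · simp [hamCoroot_self, hamCoroot_of_apart, apply_cidx_of_mem_hamTorus, hc, hd, hcd, hcd.symm]
  · simpa [hamCoroot_self hc, hamCoroot_of_apart hcd, apply_cidx_of_mem_hamTorus] using
      LinearMap.congr_fun h0 (hamCoroot c)
  · simp [hamCoroot_self hc, hamCoroot_of_apart hcd.symm]

lemma innerAt_pd_of_innerAt_pd (hn : 4 < n) (hf : IsWeightBider (Hn n) (hamTorus n) pf 0 f)
    (hκ : pf = 0 ∨ κ = 0) (hc : IsPaired c) (hd : IsPaired d)
    (h : InnerAt (Hn n) f κ (pd n c)) : InnerAt (Hn n) f κ (pd n d) := by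
  by_cases hcd : Apart c d
  · exact innerAt_pd_of_apart (by omega) hf hκ hc hd hcd h
  obtain ⟨b, hb, hbc⟩ := exists_isPaired_apart hn c
  have hbd : Apart b d := by
    rcases not_and_or.1 hcd with hcd | hcd <;> rw [not_not] at hcd <;> subst hcd
    · exact hbc
    · simpa only [cidx_cidx] using hbc.cidx_right
  exact innerAt_pd_of_apart (by omega) hf hκ hb hd hbd
    (innerAt_pd_of_apart (by omega) hf hκ hc hb hbc.symm h)

lemma innerAt_hamQuad (hn : 4 < n) (hf : IsWeightBider (Hn n) (hamTorus n) pf 0 f)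
    (hκ : pf = 0 ∨ κ = 0) (h : ∀ c, IsPaired c → InnerAt (Hn n) f κ (pd n c)) (hab : Apart a b) :
    InnerAt (Hn n) f κ (hamQuad a b) := by
  obtain ⟨k, hk, hka, hkb, u, hu, v, hv, huk, hsum, hne⟩ := exists_raising_index hn hab
  have hcubic := hamCubic_mem_homComp (show 3 < n by omega) k a b
  have hpd := pd_mem_homComp (show 1 < n by omega) k
  have hbr : hamQuad a b = sbL n (hamCubic k a b) (pd n k) := by
    rw [sbL_skew hcubic.1.2 hpd.1.2, sbL_pd_hamCubic hka hkb, mul_one, sgn_one]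
    module
  rw [hbr]
  exact hf.innerAt_sbL (isToral_Hn (by omega)) hκ hcubic hpd (a := ⟨u, hu⟩) hsum
    (fun h0 => hne (LinearMap.congr_fun h0 ⟨v, hv⟩)) (neg_ne_zero.2 huk) (h k hk)

end Propagation

variable (n) in
/-- The elements `∂ᵢ` with `i ≠ i'` and `D_H(xᵢxⱼ)` with `j ≠ i, i'`. -/
def hamFrame : Set (E n) :=
  {e | ∃ c, IsPaired c ∧ e = pd n c} ∪ {e | ∃ a b, Apart a b ∧ e = hamQuad a b}

lemma exists_innerAt_hamFrame (hn : 4 < n) {pf : ZMod 2} {f : E n →ₗ[ℂ] E n →ₗ[ℂ] E n}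
    (hf : IsWeightBider (Hn n) (hamTorus n) pf 0 f) :
    ∃ κ : ℂ, (pf = 0 ∨ κ = 0) ∧ ∀ e ∈ hamFrame n, InnerAt (Hn n) f κ e := by
  obtain ⟨c, hc, -⟩ := exists_isPaired_apart hn ⟨0, by omega⟩
  obtain ⟨κ, hκ, hinner⟩ := exists_innerAt_pd hn hf hc
  have hpd : ∀ d, IsPaired d → InnerAt (Hn n) f κ (pd n d) := fun d hd =>
    innerAt_pd_of_innerAt_pd hn hf hκ hc hd hinner
  refine ⟨κ, hκ, ?_⟩
  rintro e (⟨d, hd, rfl⟩ | ⟨a, b, hab, rfl⟩)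
  · exact hpd d hd
  · exact innerAt_hamQuad hn hf hκ hpd hab

lemma isRigidFrame_hamFrame (hn : 4 < n) : IsRigidFrame (Hn n) (hamTorus n) (hamFrame n) where
  exists_mem_homComp := by
    rintro e (⟨c, -, rfl⟩ | ⟨a, b, -, rfl⟩)
    · exact ⟨_, _, pd_mem_homComp (by omega) c⟩
    · exact ⟨_, _, hamQuad_mem_homComp (by omega) a b⟩
  exists_innerAt _ _ hf := exists_innerAt_hamFrame hn hf
  exists_sbL_ne_zero := by
    obtain ⟨c, hc, hc0⟩ := exists_isPaired_apart hn ⟨0, by omega⟩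
    refine ⟨_, Or.inl ⟨c, hc, rfl⟩, _, Or.inr ⟨c, _, hc0, rfl⟩, ?_⟩
    rw [sbL_pd_hamQuad hc0.1]
    exact neg_ne_zero.2 (pd_ne_zero _)
  eq_zero_of_centralizes z hz h := by
    refine eq_zero_of_centralizes_hamQuad hn hz (fun c _ => ?_) fun a c hac => ?_
    · obtain ⟨b, hb, hbc⟩ := exists_isPaired_apart hn c
      have hbr := h _ (Or.inl ⟨b, hb, rfl⟩) _ (Or.inr ⟨b, _, hbc.cidx_right, rfl⟩)
      rw [sbL_pd_hamQuad hbc.cidx_right.1, cidx_cidx, map_neg] at hbr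
      exact neg_eq_zero.1 hbr
    · obtain ⟨b, hab, hbc⟩ := exists_apart_apart hn a c
      have hbr := h _ (Or.inr ⟨a, b, hab, rfl⟩) _ (Or.inr ⟨_, c, hbc.cidx_left, rfl⟩)
      rw [sbL_hamQuad_hamQuad hab hbc hac, map_neg] at hbr
      exact neg_eq_zero.1 hbr

theorem exists_eq_smul_sbL_Hn (hn : 4 < n) {pf : ZMod 2} {f : E n →ₗ[ℂ] E n →ₗ[ℂ] E n}
    (hf : IsSuperBider n (Hn n) pf f) :
    ∃ κ : ℂ, ∀ x ∈ Hn n, ∀ y ∈ Hn n, f x y = κ • sbL n x y :=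
  (isRigidFrame_hamFrame hn).exists_eq_smul_sbL (isToral_Hn (by omega)) (offSeparated_Hn hn) hf

end HamiltonianRigidity

section Degrees
variable {n : ℕ} {D : E n} {d : ℤ} {S : Finset (Fin n)} {j : Fin n}

lemma mem_edeg_of_mem_weightSpace {μ : Module.Dual ℂ (⊤ : Submodule ℂ (Fin n → ℂ))}
    (h : D ∈ weightSpace ⊤ μ) (hd : μ ⟨1, Submodule.mem_top⟩ = d) : D ∈ edeg n d := by
  intro m g hg U hU
  rw [apply_eq_sum_mul]
  refine Finset.sum_eq_zero fun T _ => ?_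
  by_contra hne
  obtain ⟨hgT, hDT⟩ := mul_ne_zero_iff.mp hne
  have hT : (T.card : ℤ) = m := not_not.mp (mt (hg T) hgT)
  have hweight := LinearMap.congr_fun (mem_weightSpace_iff.mp h T U hDT) ⟨1, Submodule.mem_top⟩
  simp only [LinearMap.add_apply, monoWeight_apply, Pi.one_apply, Finset.sum_const, hd,
    nsmul_eq_mul, mul_one] at hweight
  exact hU (hT ▸ mod_cast hweight)

lemma diagOp_mem_edeg (a : Fin n → ℂ) : diagOp a ∈ edeg n 0 :=
  mem_edeg_of_mem_weightSpace (diagOp_mem_weightSpace a) (by simp)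

lemma mulOp_mono_mul_pd_mem_edeg (S : Finset (Fin n)) (j : Fin n) :
    mulOp n (mono n S) * pd n j ∈ edeg n (S.card - 1) :=
  mem_edeg_of_mem_weightSpace (mulOp_mono_mul_pd_mem_weightSpace S j) (by simp)

lemma mulOp_mono_mul_pd_mono_singleton (S : Finset (Fin n)) (j : Fin n) :
    (mulOp n (mono n S) * pd n j) (mono n {j}) = mono n S := by
  rw [Module.End.mul_apply, pd_mono_singleton, if_pos rfl, mulOp_apply_mono_empty]

lemma mulOp_mono_mul_pd_ne_zero (S : Finset (Fin n)) (j : Fin n) :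
    mulOp n (mono n S) * pd n j ≠ 0 := by
  intro h
  have hval := mulOp_mono_mul_pd_mono_singleton S j
  rw [h] at hval
  simpa using congrFun hval S

lemma eq_of_mulOp_mono_mul_pd_mem_edeg (h : mulOp n (mono n S) * pd n j ∈ edeg n d) :
    d = S.card - 1 := by
  have hj : mono n {j} ∈ ldeg n 1 := fun T hT => mono_of_ne (by rintro rfl; simp at hT)
  have hS := h 1 _ hj S
  rw [mulOp_mono_mul_pd_mono_singleton, mono_self] at hS
  have hcard := not_not.mp (mt hS one_ne_zero)
  omega

end Degrees

section CartanSubalgebra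
variable {n : ℕ} {t : CT} {M : Submodule ℂ (E n)} {h : E n}

/-- The coefficient of `xᵢ` in `D(xᵢ)`; on a diagonal operator it is the `i`-th eigenvalue. -/
def diagEntry (i : Fin n) : E n →ₗ[ℂ] ℂ :=
  LinearMap.proj {i} ∘ₗ LinearMap.applyₗ (mono n {i})

lemma diagEntry_diagOp (i : Fin n) (a : Fin n → ℂ) : diagEntry i (diagOp a) = a i := by
  change diagOp a (mono n {i}) {i} = a i
  simp

lemma mem_diagSpan_iff : h ∈ diagSpan n ↔ ∃ a, diagOp a = h := by
  rw [diagSpan, Submodule.mem_span_range_iff_exists_fun]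
  simp only [diagOp_eq_sum]
  rfl

/-- The weight of `x_S∂ⱼ` under the standard Cartan subalgebra. -/
def vectorWeight (t : CT) (S : Finset (Fin n)) (j : Fin n) : Module.Dual ℂ (t.cartan n) :=
  (∑ i ∈ S, diagEntry i - diagEntry j) ∘ₗ (t.cartan n).subtype

lemma vectorWeight_diagOp (S : Finset (Fin n)) (j : Fin n) {a : Fin n → ℂ}
    (ha : diagOp a ∈ t.cartan n) : vectorWeight t S j ⟨diagOp a, ha⟩ = ∑ i ∈ S, a i - a j := by
  simp [vectorWeight, diagEntry_diagOp]

lemma diagOp_mem_cartan {a : Fin n → ℂ} (ha : diagOp a ∈ t.algebra n) :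
    diagOp a ∈ t.cartan n :=
  ⟨ha, mem_diagSpan_iff.mpr ⟨a, rfl⟩⟩

lemma cartan_le_wtsp_zero : t.cartan n ≤ wtsp t n (t.algebra n) 0 := by
  rintro _ ⟨hL, hdiag⟩
  obtain ⟨a, rfl⟩ := mem_diagSpan_iff.mp hdiag
  refine ⟨hL, ?_⟩
  rintro ⟨_, -, hdiag'⟩
  obtain ⟨b, rfl⟩ := mem_diagSpan_iff.mp hdiag'
  exact diagOp_mem_weightSpace (A := ⊤) a ⟨b, Submodule.mem_top⟩

lemma cartan_le_grade_zero : t.cartan n ≤ t.grade n 0 := by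
  rintro _ ⟨hL, hdiag⟩
  obtain ⟨a, rfl⟩ := mem_diagSpan_iff.mp hdiag
  cases t <;> exact ⟨hL, diagOp_mem_edeg a⟩

lemma mulOp_mono_mul_pd_mem_wtsp {S : Finset (Fin n)} {j : Fin n}
    (hM : mulOp n (mono n S) * pd n j ∈ M) :
    mulOp n (mono n S) * pd n j ∈ wtsp t n M (vectorWeight t S j) := by
  refine ⟨hM, ?_⟩
  rintro ⟨_, hh⟩
  obtain ⟨b, rfl⟩ := mem_diagSpan_iff.mp hh.2
  rw [vectorWeight_diagOp]
  simpa using mulOp_mono_mul_pd_mem_weightSpace (A := ⊤) S j ⟨b, Submodule.mem_top⟩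

lemma wtsp_weight_unique {μ ν : Module.Dual ℂ (t.cartan n)} {x : E n} (hx : x ≠ 0)
    (hμ : x ∈ wtsp t n M μ) (hν : x ∈ wtsp t n M ν) : μ = ν :=
  LinearMap.ext fun h => smul_left_injective ℂ hx ((hμ.2 h).symm.trans (hν.2 h))

end CartanSubalgebra

section HomogeneousInner
variable {n : ℕ} {t : CT} {f : E n →ₗ[ℂ] E n →ₗ[ℂ] E n} {κ : ℂ} {h : t.cartan n}
  {ζ : Module.Dual ℂ (t.cartan n)} {e : E n} {d : ℤ}

/-- `e` is a nonzero root vector, of root `ζ` with `ζ(h) ≠ 0`, which is ℤ-homogeneous of degree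
`d` and of no other degree. -/
structure IsRootVector (t : CT) (h : t.cartan n) (ζ : Module.Dual ℂ (t.cartan n)) (e : E n)
    (d : ℤ) : Prop where
  ne_zero : e ≠ 0
  mem_wtsp : e ∈ wtsp t n (t.algebra n) ζ
  apply_ne_zero : ζ h ≠ 0
  mem_grade : e ∈ t.grade n d
  eq_of_mem_grade : ∀ d', e ∈ t.grade n d' → d' = d

namespace IsRootVector

lemma apply_eq (he : IsRootVector t h ζ e d)
    (hf : ∀ x ∈ t.algebra n, ∀ y ∈ t.algebra n, f x y = κ • sbL n x y) :
    f h e = (κ * ζ h) • e := by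
  rw [hf _ h.2.1 _ he.mem_wtsp.1, he.mem_wtsp.2, smul_smul]

lemma eq_zero_of_hasWeight (he : IsRootVector t h ζ e d) (hκ : κ ≠ 0)
    (hf : ∀ x ∈ t.algebra n, ∀ y ∈ t.algebra n, f x y = κ • sbL n x y)
    {ε : Module.Dual ℂ (t.cartan n)} (hε : t.HasWeight n f ε) : ε = 0 := by
  have hmem := hε 0 ζ h (cartan_le_wtsp_zero h.2) e he.mem_wtsp
  rw [he.apply_eq hf, Submodule.smul_mem_iff _ (mul_ne_zero hκ he.apply_ne_zero)] at hmem
  simpa using wtsp_weight_unique he.ne_zero hmem he.mem_wtsp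

lemma eq_zero_of_hasDeg (he : IsRootVector t h ζ e d) (hκ : κ ≠ 0)
    (hf : ∀ x ∈ t.algebra n, ∀ y ∈ t.algebra n, f x y = κ • sbL n x y)
    {i : ℤ} (hi : t.HasDeg n f i) : i = 0 := by
  have hmem := hi 0 d h (cartan_le_grade_zero h.2) e he.mem_grade
  rw [he.apply_eq hf, Submodule.smul_mem_iff _ (mul_ne_zero hκ he.apply_ne_zero)] at hmem
  simpa using he.eq_of_mem_grade _ hmem

end IsRootVector

lemma isRootVector_mulOp_mono_mul_pd {S : Finset (Fin n)} {j : Fin n} {a : Fin n → ℂ}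
    (ha : diagOp a ∈ t.algebra n) (he : mulOp n (mono n S) * pd n j ∈ t.algebra n)
    (hne : ∑ i ∈ S, a i - a j ≠ 0)
    (hgrade : mulOp n (mono n S) * pd n j ∈ t.grade n (S.card - 1))
    (hdeg : ∀ d, mulOp n (mono n S) * pd n j ∈ t.grade n d → d = S.card - 1) :
    IsRootVector t ⟨diagOp a, diagOp_mem_cartan ha⟩ (vectorWeight t S j)
      (mulOp n (mono n S) * pd n j) (S.card - 1) where
  ne_zero := mulOp_mono_mul_pd_ne_zero S j
  mem_wtsp := mulOp_mono_mul_pd_mem_wtsp he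
  apply_ne_zero := by rwa [vectorWeight_diagOp]
  mem_grade := hgrade
  eq_of_mem_grade := hdeg

lemma apply_eq_zero_of_mem_grade_neg_one {D : E n} (hD : D ∈ CT.St.grade n (-1)) {i : Fin n}
    {S : Finset (Fin n)} (hempty : S ≠ ∅) (huniv : S ≠ Finset.univ) : D (mono n {i}) S = 0 := by
  have hle : CT.St.grade n (-1) ≤
      LinearMap.ker (LinearMap.proj S ∘ₗ LinearMap.applyₗ (mono n {i}) : E n →ₗ[ℂ] ℂ) := by
    refine Submodule.span_le.mpr ?_
    rintro _ ⟨k, rfl⟩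
    change (mulOp n (oneM n) * pd n k) (mono n {i}) S = 0
    rw [Module.End.mul_apply, mulOp_oneM, pd_mono_singleton]
    split_ifs <;> simp [mono_of_ne, omegaTop, hempty, huniv]
  exact hle hD

lemma eq_zero_of_matUnit_mem_grade (hn : 1 < n) {i j : Fin n}
    (hd : matUnit i j ∈ CT.St.grade n d) : d = 0 := by
  by_cases hneg : d = -1
  · subst hneg
    have huniv : ({i} : Finset (Fin n)) ≠ Finset.univ := by
      intro h
      have := congrArg Finset.card h
      simp at this
      omega
    have hzero := apply_eq_zero_of_mem_grade_neg_one hd (i := j) (Finset.singleton_ne_empty i) huniv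
    rw [matUnit_mono_singleton, if_pos rfl, mono_self] at hzero
    exact absurd hzero one_ne_zero
  · simp only [CT.grade, if_neg hneg] at hd
    simpa using eq_of_mulOp_mono_mul_pd_mem_edeg hd.2

lemma exists_matUnit_mem_specialWitt (hn : 4 ≤ n) {s r : ℂ} (hr : r = 0 ∨ Even n) :
    ∃ (i j : Fin n) (a : Fin n → ℂ), diagOp a ∈ specialWitt n s r ∧
      matUnit i j ∈ specialWitt n s r ∧ ∑ k ∈ {i}, a k - a j ≠ 0 := by
  obtain ⟨i, j, -, -, hij, -⟩ := exists_four_distinct hn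
  refine ⟨i, j, coroot i j, (isToral_specialWitt hr).diagOp_mem _ (coroot i j).2,
    (matUnit_mem_homComp hij).1.1, ?_⟩
  rw [Finset.sum_singleton, coroot_apply, coroot_apply, if_pos rfl, if_neg hij, if_neg hij.symm,
    if_pos rfl]
  norm_num

end HomogeneousInner

section CartanTypes
variable {n : ℕ} {t : CT}

lemma CT.valid.exists_isRootVector (ht : t.valid n) :
    ∃ (h : t.cartan n) (ζ : Module.Dual ℂ (t.cartan n)) (e : E n) (d : ℤ),
      IsRootVector t h ζ e d := by
  cases t with
  | W =>
    obtain ⟨i, j, a, ha, he, hne⟩ := exists_matUnit_mem_specialWitt ht (s := 0) (.inl rfl)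
    rw [← Wn_eq_specialWitt] at ha he
    exact ⟨_, _, _, _, isRootVector_mulOp_mono_mul_pd ha he hne
      ⟨he, mulOp_mono_mul_pd_mem_edeg _ _⟩ fun _ hd => eq_of_mulOp_mono_mul_pd_mem_edeg hd.2⟩
  | S =>
    obtain ⟨i, j, a, ha, he, hne⟩ := exists_matUnit_mem_specialWitt ht (s := 1) (.inl rfl)
    rw [← Sn_eq_specialWitt] at ha he
    exact ⟨_, _, _, _, isRootVector_mulOp_mono_mul_pd ha he hne
      ⟨he, mulOp_mono_mul_pd_mem_edeg _ _⟩ fun _ hd => eq_of_mulOp_mono_mul_pd_mem_edeg hd.2⟩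
  | St =>
    obtain ⟨hn, heven⟩ := ht
    obtain ⟨i, j, a, ha, he, hne⟩ :=
      exists_matUnit_mem_specialWitt hn (s := 1) (r := 1) (.inr heven)
    rw [← Stn_eq_specialWitt (by omega)] at ha he
    exact ⟨_, _, _, _, isRootVector_mulOp_mono_mul_pd ha he hne
      ⟨he, mulOp_mono_mul_pd_mem_edeg _ _⟩
      fun _ hd => by simpa using eq_zero_of_matUnit_mem_grade (by omega) hd⟩
  | H =>
    have hn : 4 < n := ht
    obtain ⟨c, hc, -⟩ := exists_isPaired_apart hn ⟨0, by omega⟩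
    have ha := (isToral_Hn (by omega)).diagOp_mem _ (hamCoroot c).2
    have he : mulOp n (mono n ∅) * pd n c ∈ Hn n := by
      rw [mulOp_mono_empty, one_mul]
      exact pd_mem_Hn (by omega) c
    exact ⟨_, _, _, _, isRootVector_mulOp_mono_mul_pd ha he (by simp [hamCoroot_self hc])
      ⟨he, mulOp_mono_mul_pd_mem_edeg _ _⟩ fun _ hd => eq_of_mulOp_mono_mul_pd_mem_edeg hd.2⟩

lemma CT.valid.exists_eq_smul_sbL (ht : t.valid n) {pf : ZMod 2} {f : E n →ₗ[ℂ] E n →ₗ[ℂ] E n}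
    (hf : IsSuperBider n (t.algebra n) pf f) :
    ∃ κ : ℂ, ∀ x ∈ t.algebra n, ∀ y ∈ t.algebra n, f x y = κ • sbL n x y := by
  cases t with
  | W =>
    simp only [CT.algebra, Wn_eq_specialWitt] at hf ⊢
    exact exists_eq_smul_sbL_specialWitt ht (.inl rfl) hf
  | S =>
    simp only [CT.algebra, Sn_eq_specialWitt] at hf ⊢
    exact exists_eq_smul_sbL_specialWitt ht (.inl rfl) hf
  | St =>
    have hpos : 0 < n := by have := ht.1; omega
    simp only [CT.algebra, Stn_eq_specialWitt hpos] at hf ⊢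
    exact exists_eq_smul_sbL_specialWitt ht.1 (.inr ht.2) hf
  | H => exact exists_eq_smul_sbL_Hn ht hf

lemma algebra_le_prime (t : CT) : t.algebra n ≤ t.prime n := by
  cases t with
  | W => exact le_rfl
  | S => exact le_sup_left
  | St => exact le_rfl
  | H => exact (LinearMap.map_le_range (f := DHmap n)).trans le_sup_left

lemma grade_le_grade' (t : CT) (d : ℤ) : t.grade n d ≤ t.grade' n d := by
  cases t with
  | St => exact le_rfl
  | W | S | H => exact inf_le_inf_right _ (algebra_le_prime _)

lemma wtsp_mono {M M' : Submodule ℂ (E n)} (h : M ≤ M') (μ : Module.Dual ℂ (t.cartan n)) :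
    wtsp t n M μ ≤ wtsp t n M' μ :=
  fun _ hx => ⟨h hx.1, hx.2⟩

end CartanTypes

/-- For every homogeneous super-biderivation `f` of a Cartan type Lie
superalgebra `L` there are linear maps `φ_f, ψ_f : L → L'` with
`f(x,y) = [φ_f(x), y] = [x, ψ_f(y)]` for all `x, y ∈ L`; moreover
(1) if `f ∈ BDer(L)_ε` then `φ_f` and `ψ_f` have weight `ε`, and
(2) if `f ∈ BDer(L)_i` then `φ_f` and `ψ_f` have ℤ-degree `i`. -/
theorem superBider_repr (n : ℕ) (t : CT) (ht : t.valid n)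
    (pf : ZMod 2) (f : E n →ₗ[ℂ] E n →ₗ[ℂ] E n)
    (hf : IsSuperBider n (t.algebra n) pf f) :
    ∃ phi psi : E n →ₗ[ℂ] E n,
      (∀ x ∈ t.algebra n, phi x ∈ t.prime n ∧ psi x ∈ t.prime n) ∧
      (∀ x ∈ t.algebra n, ∀ y ∈ t.algebra n,
        f x y = sbL n (phi x) y ∧ f x y = sbL n x (psi y)) ∧
      (∀ eps : Module.Dual ℂ (t.cartan n), t.HasWeight n f eps →
        ∀ eta : Module.Dual ℂ (t.cartan n), ∀ x ∈ wtsp t n (t.algebra n) eta,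
          phi x ∈ wtsp t n (t.prime n) (eps + eta) ∧
          psi x ∈ wtsp t n (t.prime n) (eps + eta)) ∧
      (∀ i : ℤ, t.HasDeg n f i → ∀ j : ℤ, ∀ x ∈ t.grade n j,
        phi x ∈ t.grade' n (i + j) ∧ psi x ∈ t.grade' n (i + j)) := by
  obtain ⟨κ, hκ⟩ := ht.exists_eq_smul_sbL hf
  obtain ⟨h, ζ, e, d, he⟩ := ht.exists_isRootVector
  refine ⟨κ • LinearMap.id, κ • LinearMap.id, fun x hx => ?_, fun x hx y hy => ?_,
    fun eps hw eta x hx => ?_, fun i hi j x hx => ?_⟩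
  · exact and_self_iff.mpr ((t.prime n).smul_mem κ (algebra_le_prime t hx))
  · simp [hκ x hx y hy]
  · refine and_self_iff.mpr ?_
    obtain rfl | hκ0 := eq_or_ne κ 0
    · simp
    · rw [he.eq_zero_of_hasWeight hκ0 hκ hw, zero_add]
      exact Submodule.smul_mem _ κ (wtsp_mono (algebra_le_prime t) eta hx)
  · refine and_self_iff.mpr ?_
    obtain rfl | hκ0 := eq_or_ne κ 0
    · simp
    · rw [he.eq_zero_of_hasDeg hκ0 hκ hi, zero_add]
      exact Submodule.smul_mem _ κ (grade_le_grade' t j hx)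

end CartanSuper
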